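/- arXiv:2110.15474 — 5 statements merged into one kernel-verified Lean document; each statement's English description precedes it below -/
import Mathlib

section
/- For every positive integer N, R_N(SO_odd) ≤ 13·N; that is, the number of pairs (n, k) with n ≥ 2 and k a nontrivial strictly decreasing tuple of n natural numbers satisfying P_B(k) ≤ N is at most 13N. -/
/-- Weyl dimension (type B): for `k : Fin n → ℕ` (0-indexed; `k i = λ_{i+1} + n - (i+1)`),
with `l_i = k_i + 1/2` and `m_i = (n - 1 - i) + 1/2` (0-indexed),
`PB n k = (∏_{i<j} (l_i² - l_j²)/(m_i² - m_j²)) · ∏_i l_i / m_i`. -/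
def PB (n : ℕ) (k : Fin n → ℕ) : ℚ :=
  (∏ i : Fin n, ∏ j : Fin n,
    if i < j then
      (((k i : ℚ) + 1 / 2) ^ 2 - ((k j : ℚ) + 1 / 2) ^ 2) /
        ((((n : ℚ) - 1 - ((i : ℕ) : ℚ)) + 1 / 2) ^ 2 -
          (((n : ℚ) - 1 - ((j : ℕ) : ℚ)) + 1 / 2) ^ 2)
    else 1) *
  ∏ i : Fin n, ((k i : ℚ) + 1 / 2) / (((n : ℚ) - 1 - ((i : ℕ) : ℚ)) + 1 / 2)

/-- The pairs `(n, k)` counted by `R_N(SO_odd)`: rank `n + 2 ≥ 2`, `k` strictly decreasing,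
nontrivial (`k 0 ≥ rank`), and dimension `PB k ≤ N`. -/
def SOoddSet (N : ℕ) : Set (Σ n : ℕ, Fin (n + 2) → ℕ) :=
  {p | StrictAnti p.2 ∧ p.1 + 2 ≤ p.2 0 ∧ PB (p.1 + 2) p.2 ≤ (N : ℚ)}

/-!
By Markov's inequality, at most `N * S` representations have dimension at most `N`, where `S` is the
sum of the reciprocal dimensions. Over all ranks this sum diverges, but only because of the trivial
and the vector representations; the latter, of dimension `2 * n + 1`, are counted by hand.

For the remaining, generic, representations, fix all entries of the tuple but the leading one.
Prepending `K` to `μ` multiplies the dimension by an explicit factor, so that the reciprocal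
dimensions summed over `K` are dominated by a telescoping sum: for `μ` of rank `n ≥ 2` they add up
to `O(1 / n ^ 2)` if `μ` is trivial or vector, and to at most `3 / 5` of the reciprocal dimension of
`μ` otherwise. Hence the sums `W n` over all generic tuples of rank `n` satisfy
`W (n + 1) ≤ 3 / (2 * n * (n + 1)) + 3 / 5 * W n` with `W 2 ≤ 1`, which gives `S ≤ 35 / 8`.
-/

open scoped ENNReal Nat

/-! ### Telescoping sums and binomial coefficients -/

theorem tsum_le_of_add_le {f u : ℕ → ℝ≥0∞} {a : ℕ} (hf : ∀ n < a, f n = 0)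
    (h : ∀ n ≥ a, f n + u (n + 1) ≤ u n) : ∑' n, f n ≤ u a := by
  have partial_le (n : ℕ) : ∑ i ∈ Finset.range n, f i + u (max n a) ≤ u a := by
    induction n with
    | zero => simp
    | succ n ih =>
      rw [Finset.sum_range_succ]
      rcases lt_or_ge n a with hn | hn
      · simpa [hf n hn, max_eq_right hn.le, max_eq_right (Nat.succ_le_of_lt hn)] using ih
      · rw [max_eq_left hn] at ih
        rw [max_eq_left (by lia), add_assoc]
        exact (add_le_add_right (h n hn) _).trans ih
  exact ENNReal.tsum_le_of_sum_range_le fun n => le_self_add.trans (partial_le n)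

theorem tsum_fin_cons (m : ℕ) (f : (Fin (m + 1) → ℕ) → ℝ≥0∞) :
    ∑' k, f k = ∑' μ : Fin m → ℕ, ∑' K : ℕ, f (Fin.cons K μ) := by
  rw [← (Fin.consEquiv fun _ : Fin (m + 1) => ℕ).tsum_eq f, ENNReal.tsum_prod', ENNReal.tsum_comm]
  rfl

theorem inv_choose_succ_add {n r : ℕ} (hr : 0 < r) (hrn : r ≤ n) :
    ((n + 1).choose (r + 1) : ℝ)⁻¹ + (r + 1) / r * ((n + 1).choose r : ℝ)⁻¹ =
      (r + 1) / r * (n.choose r : ℝ)⁻¹ := by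
  obtain ⟨d, rfl⟩ := Nat.exists_eq_add_of_le hrn
  have hpos : (0 : ℝ) < (r + d).choose r := mod_cast Nat.choose_pos hrn
  have top_succ : ((r + d + 1).choose r : ℝ) = (r + d + 1) / (d + 1) * (r + d).choose r := by
    have h := Nat.choose_mul_succ_eq (r + d) r
    rw [show r + d + 1 - r = d + 1 by lia] at h
    field_simp
    exact_mod_cast (by linarith : (r + d + 1).choose r * (d + 1) = (r + d + 1) * (r + d).choose r)
  have both_succ : ((r + d + 1).choose (r + 1) : ℝ) =
      (r + d + 1) / (r + 1) * (r + d).choose r := by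
    field_simp
    exact_mod_cast (Nat.add_one_mul_choose_eq (r + d) r).symm
  rw [top_succ, both_succ]
  field_simp
  ring

theorem choose_add_two_succ (k d : ℕ) :
    ((k + d + 2).choose (k + 1) : ℝ) =
      (k + d + 2) * (k + d + 1) / ((k + 1) * (d + 1)) * (k + d).choose k := by
  have h₁ := Nat.add_one_mul_choose_eq (k + d + 1) k
  have h₂ := Nat.choose_mul_succ_eq (k + d) k
  rw [show k + d + 1 - k = d + 1 by lia] at h₂
  field_simp
  norm_cast
  calc (k + d + 2).choose (k + 1) * (k + 1) * (d + 1)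
      = (k + d + 2) * ((k + d + 1).choose k * (d + 1)) := by rw [← h₁]; ring
    _ = (k + d + 2) * (k + d + 1) * (k + d).choose k := by rw [← h₂]; ring

theorem monotone_choose_div_choose (e : ℕ) :
    Monotone fun m : ℕ =>
      ((2 * (m + e) + 1).choose (m + 1) : ℝ) / (2 * m + 1).choose (m + 1) := by
  refine monotone_nat_of_le_succ fun m => ?_
  have num := choose_add_two_succ (m + 1) (m + 2 * e)
  have den := choose_add_two_succ (m + 1) m
  rw [show m + 1 + (m + 2 * e) + 2 = 2 * (m + 1 + e) + 1 by ring,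
    show m + 1 + (m + 2 * e) = 2 * (m + e) + 1 by ring] at num
  rw [show m + 1 + m + 2 = 2 * (m + 1) + 1 by ring, show m + 1 + m = 2 * m + 1 by ring] at den
  have e_le : (e : ℝ) ≤ e * e := mod_cast Nat.le_mul_self e
  rw [num, den, mul_div_mul_comm]
  refine le_mul_of_one_le_left (by positivity) ((one_le_div (by positivity)).2 ?_)
  push_cast
  rw [div_le_div_iff₀ (by positivity) (by positivity)]
  have : 0 ≤ ((e : ℝ) * e - e) * (m + 1) * (m + 2) := by
    have := sub_nonneg.2 e_le
    positivity
  have : 0 ≤ (e : ℝ) * (m + 1) * (m + 2) := by positivity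
  nlinarith

/-! ### Strictly decreasing tuples -/

section StrictAnti

variable {m K : ℕ} {μ : Fin m → ℕ}

theorem strictAnti_fin_cons :
    StrictAnti (Fin.cons K μ : Fin (m + 1) → ℕ) ↔ (∀ j, μ j < K) ∧ StrictAnti μ :=
  Fin.strictMono_cons (α := ℕᵒᵈ) (f := μ) (a := K)

theorem rev_le_of_strictAnti (hμ : StrictAnti μ) (j : Fin m) : (j.rev : ℕ) ≤ μ j := by
  have h := Finset.card_le_card_of_injOn (s := Finset.Ioi j) (t := Finset.range (μ j)) μ
    (fun i hi => by simpa using hμ (Finset.mem_Ioi.1 hi)) hμ.injective.injOn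
  rw [Fin.card_Ioi, Finset.card_range] at h
  rw [Fin.val_rev]
  lia

theorem add_lt_of_strictAnti (hμ : StrictAnti μ) (hK : ∀ j, μ j < K) (j : Fin m) : μ j + j < K := by
  have h := Finset.card_le_card_of_injOn (s := Finset.Iic j) (t := Finset.Ico (μ j) K) μ
    (fun i hi => by simpa using ⟨hμ.antitone (Finset.mem_Iic.1 hi), hK i⟩) hμ.injective.injOn
  rw [Fin.card_Iic, Nat.card_Ico] at h
  lia

theorem le_of_strictAnti (hμ : StrictAnti μ) (hK : ∀ j, μ j < K) : m ≤ K := by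
  simpa using Finset.card_le_card_of_injOn (s := Finset.univ) (t := Finset.range K) μ
    (fun j _ => by simpa using hK j) hμ.injective.injOn

end StrictAnti

/-- The tuple `(m - 1, …, 1, 0)`: highest weight `0`, the trivial representation. -/
def trivialTuple (m : ℕ) : Fin m → ℕ := fun j => j.rev

theorem trivialTuple_succ (m : ℕ) : trivialTuple (m + 1) = Fin.cons m (trivialTuple m) := by
  funext j
  cases j using Fin.cases <;> simp [trivialTuple]

theorem strictAnti_trivialTuple (m : ℕ) : StrictAnti (trivialTuple m) :=
  Fin.val_strictMono.comp_strictAnti Fin.rev_strictAnti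

theorem eq_trivialTuple_of_lt {m : ℕ} {μ : Fin m → ℕ} (hμ : StrictAnti μ) (hm : ∀ j, μ j < m) :
    μ = trivialTuple m := by
  funext j
  have := rev_le_of_strictAnti hμ j
  have := add_lt_of_strictAnti hμ hm j
  simp only [trivialTuple, Fin.val_rev] at *
  lia

/-- The tuple `(m + 1, m - 1, …, 1, 0)`: highest weight `(1, 0, …, 0)`, the vector
representation of rank `m + 1`. -/
def vectorTuple (m : ℕ) : Fin (m + 1) → ℕ := Fin.cons (m + 1) (trivialTuple m)

theorem strictAnti_vectorTuple (m : ℕ) : StrictAnti (vectorTuple m) :=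
  strictAnti_fin_cons.2 ⟨fun j => by simp only [trivialTuple]; lia, strictAnti_trivialTuple m⟩

/-! ### The dimension as a product over the entries -/

/-- The factor by which the dimension grows when `K` is prepended to `μ` (see `PB_cons`). The
halves of the Weyl formula are cleared, and its denominators in the new row, which do not depend on
`μ`, are multiplied out to `(2 * m + 1)!`. -/
noncomputable def consFactor {m : ℕ} (K : ℕ) (μ : Fin m → ℕ) : ℝ :=
  (2 * K + 1) * (∏ j, ((K : ℝ) - μ j) * (K + μ j + 1)) / (2 * m + 1)!

theorem prod_succ_mul_sub {m K : ℕ} (h : m ≤ K) :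
    (2 * (K : ℝ) + 1) * ∏ j : Fin m, ((j : ℝ) + 1) * (2 * K - j) =
      m ! * (2 * K + 1).descFactorial (m + 1) := by
  have cast_sub (j : Fin m) : (2 * K - j : ℝ) = (2 * K - (j : ℕ) : ℕ) := by
    rw [Nat.cast_sub (by lia)]
    push_cast
    rfl
  simp only [cast_sub]
  rw [Fin.prod_univ_eq_prod_range (fun j : ℕ => ((j : ℝ) + 1) * (2 * K - j : ℕ)),
    Finset.prod_mul_distrib, ← Finset.prod_range_add_one_eq_factorial,
    Nat.succ_descFactorial_succ, Nat.descFactorial_eq_prod_range]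
  push_cast
  ring

theorem prod_succ_mul_sub_self (m : ℕ) :
    (2 * (m : ℝ) + 1) * ∏ j : Fin m, ((j : ℝ) + 1) * (2 * m - j) = (2 * m + 1)! := by
  rw [prod_succ_mul_sub le_rfl, ← Nat.factorial_mul_descFactorial (show m + 1 ≤ 2 * m + 1 by lia),
    show 2 * m + 1 - (m + 1) = m by lia]
  push_cast
  rfl

theorem PB_cons {m : ℕ} (K : ℕ) (μ : Fin m → ℕ) :
    (PB (m + 1) (Fin.cons K μ) : ℝ) = consFactor K μ * PB m μ := by
  have factor_eq : consFactor K μ = (2 * K + 1) / (2 * m + 1) *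
      ∏ j : Fin m, ((K : ℝ) - μ j) * (K + μ j + 1) / (((j : ℝ) + 1) * (2 * m - j)) := by
    rw [consFactor, ← prod_succ_mul_sub_self, mul_div_mul_comm, Finset.prod_div_distrib]
  have shift (j : ℝ) : (m : ℝ) + 1 - 1 - (j + 1) = m - 1 - j := by ring
  have row_zero (j : Fin m) :
      (((K : ℝ) + 1 / 2) ^ 2 - (μ j + 1 / 2) ^ 2) /
          (((m : ℝ) + 1 - 1 - 0 + 1 / 2) ^ 2 - ((m : ℝ) - 1 - j + 1 / 2) ^ 2) =
        ((K : ℝ) - μ j) * (K + μ j + 1) / (((j : ℝ) + 1) * (2 * m - j)) := by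
    congr 1 <;> ring
  have corner : ((K : ℝ) + 1 / 2) / ((m : ℝ) + 1 - 1 - 0 + 1 / 2) = (2 * K + 1) / (2 * m + 1) := by
    rw [show (m : ℝ) + 1 - 1 - 0 + 1 / 2 = (2 * m + 1) / 2 by ring]
    field_simp
  rw [factor_eq]
  simp only [PB, Fin.prod_univ_succ, Fin.cons_zero, Fin.cons_succ, Fin.succ_lt_succ_iff,
    Fin.succ_pos, Fin.not_lt_zero, if_true, if_false, one_mul, Fin.val_succ, Fin.val_zero]
  push_cast [apply_ite (Rat.cast : ℚ → ℝ)]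
  simp only [shift, row_zero, corner]
  rw [mul_mul_mul_comm]
  congr 1
  exact mul_comm _ _

theorem consFactor_pos {m K : ℕ} {μ : Fin m → ℕ} (hK : ∀ j, μ j < K) : 0 < consFactor K μ := by
  have factor_pos (j : Fin m) : 0 < ((K : ℝ) - μ j) * (K + μ j + 1) :=
    mul_pos (sub_pos.2 (mod_cast hK j)) (by positivity)
  exact div_pos (mul_pos (by positivity) (Finset.prod_pos fun j _ => factor_pos j)) (by positivity)

theorem PB_pos {m : ℕ} {k : Fin m → ℕ} (hk : StrictAnti k) : (0 : ℝ) < PB m k := by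
  induction m with
  | zero => simp [PB]
  | succ m ih =>
    rw [← Fin.cons_self_tail k] at hk ⊢
    obtain ⟨head_gt, tail_anti⟩ := strictAnti_fin_cons.1 hk
    rw [PB_cons]
    exact mul_pos (consFactor_pos head_gt) (ih tail_anti)

theorem prod_range_sub_mul_add (K m : ℕ) :
    ∏ j ∈ Finset.range m, ((K : ℝ) - j) * (K + j + 1) = (K + m).descFactorial (2 * m) := by
  induction m with
  | zero => simp
  | succ m ih =>
    rw [Finset.prod_range_succ, ih, show 2 * (m + 1) = 2 * m + 1 + 1 by ring, ← add_assoc,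
      Nat.succ_descFactorial_succ, Nat.descFactorial_succ]
    rcases le_or_gt m K with h | h
    · rw [show K + m - 2 * m = K - m by lia]
      push_cast [h]
      ring
    · simp [Nat.descFactorial_eq_zero_iff_lt.2 (show K + m < 2 * m by lia)]

theorem consFactor_trivialTuple (m K : ℕ) :
    consFactor K (trivialTuple m) = (2 * K + 1) / (2 * m + 1) * (K + m).choose (2 * m) := by
  have numerator : ∏ j, ((K : ℝ) - trivialTuple m j) * (K + trivialTuple m j + 1) =
      (2 * m)! * (K + m).choose (2 * m) := by
    refine (Equiv.prod_comp Fin.revPerm fun j : Fin m => ((K : ℝ) - j) * (K + j + 1)).trans ?_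
    rw [Fin.prod_univ_eq_prod_range (fun j : ℕ => ((K : ℝ) - j) * (K + j + 1)),
      prod_range_sub_mul_add, Nat.descFactorial_eq_factorial_mul_choose]
    push_cast
    rfl
  rw [consFactor, numerator, Nat.factorial_succ]
  push_cast
  field_simp

theorem PB_trivialTuple (m : ℕ) : (PB m (trivialTuple m) : ℝ) = 1 := by
  induction m with
  | zero => simp [PB]
  | succ m ih =>
    rw [trivialTuple_succ, PB_cons, ih, consFactor_trivialTuple, ← two_mul, Nat.choose_self,
      div_self (by positivity)]
    norm_num

theorem PB_vectorTuple (m : ℕ) : (PB (m + 1) (vectorTuple m) : ℝ) = 2 * m + 3 := by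
  rw [vectorTuple, PB_cons, PB_trivialTuple, consFactor_trivialTuple,
    show m + 1 + m = 2 * m + 1 by ring, Nat.choose_succ_self_right]
  push_cast
  field_simp
  ring

theorem choose_le_consFactor_trivialTuple {m K : ℕ} (h : m ≤ K) :
    ((K + m + 1).choose (2 * m + 1) : ℝ) ≤ consFactor K (trivialTuple m) := by
  have absorb : ((K : ℝ) + m + 1) / (2 * m + 1) * (K + m).choose (2 * m) =
      (K + m + 1).choose (2 * m + 1) := by
    have cast_absorb : ((K : ℝ) + m + 1) * (K + m).choose (2 * m) =
        (K + m + 1).choose (2 * m + 1) * (2 * m + 1) :=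
      mod_cast Nat.add_one_mul_choose_eq (K + m) (2 * m)
    field_simp
    linarith
  have h' : (m : ℝ) ≤ K := mod_cast h
  rw [consFactor_trivialTuple, ← absorb]
  gcongr
  linarith

theorem choose_le_two_mul_consFactor_vectorTuple {m K : ℕ} (h : m + 2 ≤ K) :
    ((K + (m + 1) + 1).choose (2 * (m + 1) + 1) : ℝ) ≤ 2 * consFactor K (vectorTuple m) := by
  have h' : (m : ℝ) + 2 ≤ K := mod_cast h
  have triv_bound := choose_le_consFactor_trivialTuple (show m + 1 ≤ K by lia)
  have exchange : consFactor K (vectorTuple m) * ((K - m) * (K + m + 1)) =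
      consFactor K (trivialTuple (m + 1)) * ((K - (m + 1)) * (K + m + 2)) := by
    simp only [consFactor, trivialTuple_succ, vectorTuple, Fin.prod_univ_succ, Fin.cons_zero,
      Fin.cons_succ]
    push_cast
    ring
  have half_le : ((K : ℝ) - m) * (K + m + 1) ≤ 2 * ((K - (m + 1)) * (K + m + 2)) := by nlinarith
  have pos : 0 < ((K : ℝ) - m) * (K + m + 1) := mul_pos (by linarith) (by positivity)
  refine le_of_mul_le_mul_right ?_ pos
  rw [mul_assoc, exchange, mul_left_comm (2 : ℝ)]
  exact mul_le_mul triv_bound half_le pos.le (le_trans (by positivity) triv_bound)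

-- Equality holds for the extremal tuple `μ = (K - 1, …, K - m)`.
theorem choose_div_choose_le_consFactor {m K : ℕ} {μ : Fin m → ℕ} (hμ : StrictAnti μ)
    (hK : ∀ j, μ j < K) :
    ((2 * K + 1).choose (m + 1) : ℝ) / (2 * m + 1).choose (m + 1) ≤ consFactor K μ := by
  have hmK : m ≤ K := le_of_strictAnti hμ hK
  have ratio_eq : ((2 * K + 1).choose (m + 1) : ℝ) / (2 * m + 1).choose (m + 1) =
      (2 * K + 1) * (∏ j : Fin m, ((j : ℝ) + 1) * (2 * K - j)) / (2 * m + 1)! := by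
    rw [← prod_succ_mul_sub_self, prod_succ_mul_sub hmK, prod_succ_mul_sub le_rfl,
      Nat.descFactorial_eq_factorial_mul_choose, Nat.descFactorial_eq_factorial_mul_choose]
    push_cast
    field_simp
  have factor_le (j : Fin m) :
      ((j : ℝ) + 1) * (2 * K - j) ≤ ((K : ℝ) - μ j) * (K + μ j + 1) := by
    have gap : (μ j : ℝ) + j + 1 ≤ K := mod_cast add_lt_of_strictAnti hμ hK j
    nlinarith [Nat.cast_nonneg (α := ℝ) (μ j), Nat.cast_nonneg (α := ℝ) (j : ℕ)]
  have factor_nonneg (j : Fin m) : 0 ≤ ((j : ℝ) + 1) * (2 * K - j) := by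
    have : (j : ℝ) ≤ K := mod_cast j.2.le.trans hmK
    exact mul_nonneg (by positivity) (by linarith)
  rw [ratio_eq, consFactor]
  gcongr (2 * K + 1) * ?_ / (2 * m + 1)!
  exact Finset.prod_le_prod (fun j _ => factor_nonneg j) fun j _ => factor_le j

/-! ### Reciprocal dimensions, summed over the leading entry -/

/-- The tuples of the representations of rank `m + 1` other than the trivial and the vector one.
Those two are set apart because their dimensions `1` and `2 * m + 3` grow too slowly with the rank
for the reciprocals to be summable. -/
def genericTuples (m : ℕ) : Set (Fin (m + 1) → ℕ) :=
  {k | StrictAnti k ∧ k ≠ trivialTuple (m + 1) ∧ k ≠ vectorTuple m}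

/-- The reciprocal of the dimension on generic tuples, extended by `0` to all tuples; valued in
`ℝ≥0∞` so that sums may be rearranged before they are known to converge. -/
noncomputable def genericWeight {m : ℕ} : (Fin (m + 1) → ℕ) → ℝ≥0∞ :=
  (genericTuples m).indicator fun k => ENNReal.ofReal (PB (m + 1) k : ℝ)⁻¹

theorem genericWeight_le {m : ℕ} (k : Fin (m + 1) → ℕ) :
    genericWeight k ≤ ENNReal.ofReal (PB (m + 1) k : ℝ)⁻¹ :=
  Set.indicator_le_self _ _ k

theorem tsum_genericWeight_cons_eq_zero {m : ℕ} {μ : Fin m → ℕ} (hμ : ¬StrictAnti μ) :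
    ∑' K, genericWeight (Fin.cons K μ) = 0 :=
  ENNReal.tsum_eq_zero.2 fun _ =>
    Set.indicator_of_notMem (fun hk => hμ (strictAnti_fin_cons.1 hk.1).2) _

theorem tsum_genericWeight_cons_le {m a : ℕ} {μ : Fin m → ℕ} (hμ : StrictAnti μ)
    (ha : ∀ j, μ j < a) (hsupp : ∀ K < a, Fin.cons K μ ∉ genericTuples m) {u : ℕ → ℝ}
    (hu : ∀ K ≥ a, 0 ≤ u K) (h : ∀ K ≥ a, (consFactor K μ)⁻¹ + u (K + 1) ≤ u K) :
    ∑' K, genericWeight (Fin.cons K μ) ≤ ENNReal.ofReal ((PB m μ : ℝ)⁻¹ * u a) := by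
  refine tsum_le_of_add_le (u := fun K => ENNReal.ofReal ((PB m μ : ℝ)⁻¹ * u K))
    (fun K hK => Set.indicator_of_notMem (hsupp K hK) _) fun K hK => ?_
  have dim_pos := PB_pos hμ
  have factor_pos := consFactor_pos fun j => (ha j).trans_le hK
  have hu_succ := hu (K + 1) (by lia)
  calc genericWeight (Fin.cons K μ) + ENNReal.ofReal ((PB m μ : ℝ)⁻¹ * u (K + 1))
      ≤ ENNReal.ofReal (PB (m + 1) (Fin.cons K μ) : ℝ)⁻¹ +
          ENNReal.ofReal ((PB m μ : ℝ)⁻¹ * u (K + 1)) := by gcongr; exact genericWeight_le _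
    _ = ENNReal.ofReal ((PB m μ : ℝ)⁻¹ * ((consFactor K μ)⁻¹ + u (K + 1))) := by
      rw [PB_cons, mul_inv_rev, mul_add, ENNReal.ofReal_add (by positivity) (by positivity)]
    _ ≤ ENNReal.ofReal ((PB m μ : ℝ)⁻¹ * u K) := by gcongr; exact h K hK

theorem tsum_genericWeight_cons_le_of_choose_le {m a : ℕ} {μ : Fin m → ℕ} (hm : 0 < m)
    (hμ : StrictAnti μ) (ha : ∀ j, μ j < a) (hsupp : ∀ K < a, Fin.cons K μ ∉ genericTuples m)
    {c : ℝ} (hc : 0 ≤ c)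
    (h : ∀ K ≥ a, ((K + m + 1).choose (2 * m + 1) : ℝ) ≤ c * consFactor K μ) :
    ∑' K, genericWeight (Fin.cons K μ) ≤ ENNReal.ofReal
      ((PB m μ : ℝ)⁻¹ * (c * ((2 * m + 1) / (2 * m) * ((a + m).choose (2 * m) : ℝ)⁻¹))) := by
  refine tsum_genericWeight_cons_le hμ ha hsupp
    (u := fun K => c * ((2 * m + 1) / (2 * m) * ((K + m).choose (2 * m) : ℝ)⁻¹))
    (fun K _ => by positivity) fun K hK => ?_
  have hmK : m ≤ K := (le_of_strictAnti hμ ha).trans hK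
  have choose_pos : (0 : ℝ) < (K + m + 1).choose (2 * m + 1) := mod_cast Nat.choose_pos (by lia)
  have inv_le : (consFactor K μ)⁻¹ ≤ c * ((K + m + 1).choose (2 * m + 1) : ℝ)⁻¹ := by
    rw [← div_eq_mul_inv, le_div_iff₀ choose_pos, inv_mul_le_iff₀
      (consFactor_pos fun j => (ha j).trans_le hK), mul_comm _ c]
    exact h K hK
  have telescope := inv_choose_succ_add (n := K + m) (r := 2 * m) (by lia) (by lia)
  push_cast at telescope
  rw [← telescope, mul_add, add_right_comm]
  gcongr

theorem tsum_genericWeight_cons_trivialTuple_le {m : ℕ} (hm : 0 < m) :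
    ∑' K, genericWeight (Fin.cons K (trivialTuple m)) ≤
      ENNReal.ofReal (1 / (2 * m * (m + 1))) := by
  have entry_lt (j : Fin m) : trivialTuple m j < m := j.rev.2
  have not_generic (K : ℕ) (hK : K < m + 2) :
      Fin.cons K (trivialTuple m) ∉ genericTuples m := fun ⟨anti, ne_trivial, ne_vector⟩ => by
    have := le_of_strictAnti (strictAnti_trivialTuple m) (strictAnti_fin_cons.1 anti).1
    obtain rfl | rfl : K = m ∨ K = m + 1 := by lia
    · exact ne_trivial (trivialTuple_succ _).symm
    · exact ne_vector rfl
  refine (tsum_genericWeight_cons_le_of_choose_le hm (strictAnti_trivialTuple m)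
    (fun j => (entry_lt j).trans (by lia)) not_generic zero_le_one fun K hK => ?_).trans_eq ?_
  · rw [one_mul]
    exact choose_le_consFactor_trivialTuple (by lia)
  · have choose_eq : ((m + 2 + m).choose (2 * m) : ℝ) = (m + 1) * (2 * m + 1) := by
      rw [show m + 2 + m = 2 * m + 2 by ring, Nat.choose_symm_add, Nat.cast_choose_two]
      push_cast
      ring
    rw [PB_trivialTuple, choose_eq]
    congr 1
    field_simp

theorem tsum_genericWeight_cons_vectorTuple_le (m : ℕ) :
    ∑' K, genericWeight (Fin.cons K (vectorTuple m)) ≤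
      ENNReal.ofReal (1 / ((m + 1) * (2 * m + 3))) := by
  have entry_lt (j : Fin (m + 1)) : vectorTuple m j < m + 2 :=
    ((strictAnti_vectorTuple m).antitone (Fin.zero_le j)).trans_lt (by simp [vectorTuple])
  have not_generic (K : ℕ) (hK : K < m + 2) :
      Fin.cons K (vectorTuple m) ∉ genericTuples (m + 1) := fun ⟨anti, _⟩ => by
    have : m + 1 < K := (strictAnti_fin_cons.1 anti).1 0
    lia
  refine (tsum_genericWeight_cons_le_of_choose_le m.succ_pos (strictAnti_vectorTuple m) entry_lt
    not_generic zero_le_two fun K hK => choose_le_two_mul_consFactor_vectorTuple hK).trans_eq ?_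
  rw [PB_vectorTuple, show m + 2 + (m + 1) = 2 * (m + 1) + 1 by ring, Nat.choose_succ_self_right]
  congr 1
  push_cast
  field_simp

theorem cubic_le_consFactor {m e : ℕ} (hm : 2 ≤ m) {μ : Fin m → ℕ} (hμ : StrictAnti μ)
    (hK : ∀ j, μ j < m + e) :
    (2 * e + 3) * (2 * e + 4) * (2 * e + 5) / 60 ≤ consFactor (m + e) μ := by
  have choose_three : ((2 * (2 + e) + 1).choose 3 : ℝ) =
      (2 * e + 3) * (2 * e + 4) * (2 * e + 5) / 6 := by
    rw [Nat.cast_choose_eq_ascPochhammer_div, show 2 * (2 + e) + 1 - (3 - 1) = 2 * e + 3 by lia]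
    simp only [ascPochhammer_succ_eval, ascPochhammer_zero, Polynomial.eval_one]
    push_cast [Nat.factorial]
    ring
  calc (2 * e + 3) * (2 * e + 4) * (2 * e + 5) / 60
      = ((2 * (2 + e) + 1).choose (2 + 1) : ℝ) / (2 * 2 + 1).choose (2 + 1) := by
        rw [choose_three, show Nat.choose (2 * 2 + 1) (2 + 1) = 10 from rfl]
        push_cast
        ring
    _ ≤ ((2 * (m + e) + 1).choose (m + 1) : ℝ) / (2 * m + 1).choose (m + 1) :=
        monotone_choose_div_choose e hm
    _ ≤ consFactor (m + e) μ := choose_div_choose_le_consFactor hμ hK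

-- Up to lower order terms the reciprocal is `60 / (2 * e + 4) ^ 3`, the negated derivative of
-- `15 / (2 * e + 4) ^ 2`; shifting the argument by a half turns this into a telescoping bound.
theorem inv_consFactor_add_le {m e : ℕ} (hm : 2 ≤ m) {μ : Fin m → ℕ} (hμ : StrictAnti μ)
    (hK : ∀ j, μ j < m + e) :
    (consFactor (m + e) μ)⁻¹ + 15 / (2 * e + 5) ^ 2 ≤ 15 / (2 * e + 3) ^ 2 := by
  have inv_le : (consFactor (m + e) μ)⁻¹ ≤
      ((2 * (e : ℝ) + 3) * (2 * e + 4) * (2 * e + 5) / 60)⁻¹ :=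
    inv_anti₀ (by positivity) (cubic_le_consFactor hm hμ hK)
  have telescope : ((2 * (e : ℝ) + 3) * (2 * e + 4) * (2 * e + 5) / 60)⁻¹ =
      15 / (2 * e + 3) ^ 2 - 15 / (2 * e + 5) ^ 2 -
        60 / ((2 * e + 3) ^ 2 * (2 * e + 4) * (2 * e + 5) ^ 2) := by
    field_simp
    ring
  have error_nonneg : 0 ≤ 60 / ((2 * (e : ℝ) + 3) ^ 2 * (2 * e + 4) * (2 * e + 5) ^ 2) := by
    positivity
  linarith

theorem le_head_of_ne_trivialTuple {m : ℕ} {μ : Fin (m + 1) → ℕ} (hμ : StrictAnti μ)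
    (hne : μ ≠ trivialTuple (m + 1)) : m + 1 ≤ μ 0 := by
  by_contra! h
  exact hne (eq_trivialTuple_of_lt hμ fun j => (hμ.antitone (Fin.zero_le j)).trans_lt h)

theorem tsum_genericWeight_cons_le_of_head {m : ℕ} {μ : Fin (m + 1) → ℕ} (hμ : StrictAnti μ)
    {u : ℕ → ℝ} (hu : ∀ K > μ 0, 0 ≤ u K)
    (h : ∀ K > μ 0, (consFactor K μ)⁻¹ + u (K + 1) ≤ u K) :
    ∑' K, genericWeight (Fin.cons K μ) ≤
      ENNReal.ofReal ((PB (m + 1) μ : ℝ)⁻¹ * u (μ 0 + 1)) :=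
  tsum_genericWeight_cons_le hμ
    (fun j => (hμ.antitone (Fin.zero_le j)).trans_lt (Nat.lt_succ_self _))
    (fun _ hK hmem => hK.not_ge ((strictAnti_fin_cons.1 hmem.1).1 0)) hu h

theorem tsum_genericWeight_cons_le_three_fifths_mul {m : ℕ} {μ : Fin (m + 2) → ℕ}
    (hμ : μ ∈ genericTuples (m + 1)) :
    ∑' K, genericWeight (Fin.cons K μ) ≤ ENNReal.ofReal (3 / 5) * genericWeight μ := by
  have ⟨hanti, hne, _⟩ := hμ
  have head_ge := le_head_of_ne_trivialTuple hanti hne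
  have head_ge' : (m : ℝ) + 2 ≤ μ 0 := mod_cast head_ge
  refine (tsum_genericWeight_cons_le_of_head hanti
    (u := fun K => 15 / (2 * (K - (m + 2)) + 3) ^ 2) (fun K _ => by positivity)
    fun K hK => ?_).trans ?_
  · obtain ⟨e, rfl⟩ := Nat.exists_eq_add_of_le (head_ge.trans hK.le)
    have h := inv_consFactor_add_le (by lia) hanti fun j =>
      (hanti.antitone (Fin.zero_le j)).trans_lt hK
    convert h using 4 <;> push_cast <;> ring
  · rw [genericWeight, Set.indicator_of_mem hμ, ← ENNReal.ofReal_mul (by norm_num), mul_comm]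
    refine ENNReal.ofReal_le_ofReal
      (mul_le_mul_of_nonneg_right ?_ (inv_nonneg.2 (PB_pos hanti).le))
    have five_le : (5 : ℝ) ≤ 2 * ((μ 0 + 1 : ℕ) - (m + 2)) + 3 := by
      push_cast
      linarith
    calc (15 : ℝ) / (2 * ((μ 0 + 1 : ℕ) - (m + 2)) + 3) ^ 2 ≤ 15 / 5 ^ 2 := by gcongr
      _ = 3 / 5 := by norm_num

theorem tsum_genericWeight_cons_le_of_rank_one {μ : Fin 1 → ℕ} (hμ : 0 < μ 0) :
    ∑' K, genericWeight (Fin.cons K μ) ≤ ENNReal.ofReal (3 / (2 * μ 0 + 1) ^ 2) := by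
  have hanti : StrictAnti μ := Subsingleton.strictAnti μ
  have dim_eq : (PB 1 μ : ℝ) = 2 * μ 0 + 1 := by
    simp [PB]
    ring
  refine (tsum_genericWeight_cons_le_of_head hanti (u := fun K => 3 / (2 * K - 1))
    (fun K hK => ?_) fun K hK => ?_).trans_eq ?_
  · have : (1 : ℝ) ≤ K := mod_cast Nat.one_le_of_lt hK
    exact div_nonneg (by norm_num) (by linarith)
  · have one_lt : (1 : ℝ) < K := mod_cast (Nat.succ_le_of_lt hμ).trans_lt hK
    have factor_ge : (K : ℝ) * (2 * K + 1) / 3 ≤ consFactor K μ := by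
      have h := choose_div_choose_le_consFactor hanti (Fin.forall_fin_one.2 hK)
      rw [one_add_one_eq_two, Nat.cast_choose_two, Nat.cast_choose_two] at h
      push_cast at h
      linarith
    calc (consFactor K μ)⁻¹ + 3 / (2 * (K + 1 : ℕ) - 1)
        ≤ ((K : ℝ) * (2 * K + 1) / 3)⁻¹ + 3 / (2 * K + 1) := by
          gcongr
          push_cast
          linarith
      _ ≤ 3 / (2 * K - 1) := by
          rw [inv_div, div_add_div _ _ (by positivity) (by positivity),
            div_le_div_iff₀ (by positivity) (by linarith)]
          nlinarith
  · rw [dim_eq, Nat.cast_add_one, show 2 * ((μ 0 : ℝ) + 1) - 1 = 2 * μ 0 + 1 by ring]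
    congr 1
    field_simp

/-! ### Sums over all tuples and ranks -/

/-- The sum of the reciprocal dimensions of the generic representations of rank `m + 1`. -/
noncomputable def genericSum (m : ℕ) : ℝ≥0∞ := ∑' k : Fin (m + 1) → ℕ, genericWeight k

theorem genericSum_one_le : genericSum 1 ≤ 1 := by
  set g : (Fin 1 → ℕ) → ℝ≥0∞ := fun μ => ∑' K, genericWeight (Fin.cons K μ)
  have split : genericSum 1 = g (fun _ => 0) + ∑' p : ℕ, g (fun _ => p + 1) := by
    rw [genericSum, tsum_fin_cons, ← (Equiv.funUnique (Fin 1) ℕ).symm.tsum_eq,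
      tsum_eq_zero_add' ENNReal.summable]
    rfl
  have zero_le : g (fun _ => 0) ≤ ENNReal.ofReal (1 / 4) := by
    have h := tsum_genericWeight_cons_trivialTuple_le one_pos
    rwa [show trivialTuple 1 = fun _ => 0 from funext fun j => by simp [trivialTuple],
      show (1 / (2 * (1 : ℕ) * ((1 : ℕ) + 1)) : ℝ) = 1 / 4 by norm_num] at h
  have succ_le : ∑' p : ℕ, g (fun _ => p + 1) ≤ ENNReal.ofReal (3 / 4) := by
    refine (ENNReal.tsum_le_tsum fun p => tsum_genericWeight_cons_le_of_rank_one
      (μ := fun _ => p + 1) p.succ_pos).trans ?_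
    refine (tsum_le_of_add_le (u := fun p => ENNReal.ofReal (3 / 4 / (p + 1))) (a := 0)
      (by simp) fun p _ => ?_).trans_eq (by norm_num)
    rw [← ENNReal.ofReal_add (by positivity) (by positivity)]
    refine ENNReal.ofReal_le_ofReal ?_
    push_cast
    rw [div_add_div _ _ (by positivity) (by positivity),
      div_le_div_iff₀ (by positivity) (by positivity)]
    nlinarith [p.cast_nonneg (α := ℝ)]
  calc genericSum 1 ≤ ENNReal.ofReal (1 / 4) + ENNReal.ofReal (3 / 4) := by
        rw [split]
        gcongr
    _ = 1 := by
        rw [← ENNReal.ofReal_add (by norm_num) (by norm_num)]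
        norm_num

theorem tsum_genericWeight_cons_le_ite {m : ℕ} (μ : Fin (m + 2) → ℕ) :
    ∑' K, genericWeight (Fin.cons K μ) ≤
      (if μ = trivialTuple (m + 2) then ENNReal.ofReal (1 / (2 * (m + 2) * (m + 3))) else 0) +
      (if μ = vectorTuple (m + 1) then ENNReal.ofReal (1 / ((m + 2) * (2 * m + 5))) else 0) +
      ENNReal.ofReal (3 / 5) * genericWeight μ := by
  by_cases hanti : StrictAnti μ
  swap
  · simp [tsum_genericWeight_cons_eq_zero hanti]
  rcases eq_or_ne μ (trivialTuple (m + 2)) with rfl | ne_trivial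
  · simp only [if_true, add_assoc]
    refine le_add_right ((tsum_genericWeight_cons_trivialTuple_le (by lia)).trans_eq ?_)
    congr 1
    push_cast
    ring
  rcases eq_or_ne μ (vectorTuple (m + 1)) with rfl | ne_vector
  · simp only [if_neg ne_trivial, if_true, zero_add]
    refine le_add_right ((tsum_genericWeight_cons_vectorTuple_le (m + 1)).trans_eq ?_)
    congr 1
    push_cast
    ring
  · exact le_add_left
      (tsum_genericWeight_cons_le_three_fifths_mul ⟨hanti, ne_trivial, ne_vector⟩)

theorem genericSum_add_two_le (m : ℕ) :
    genericSum (m + 2) ≤ ENNReal.ofReal (3 / (2 * (m + 2) * (m + 3))) +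
      ENNReal.ofReal (3 / 5) * genericSum (m + 1) := by
  have special_le : ENNReal.ofReal (1 / (2 * (m + 2) * (m + 3))) +
      ENNReal.ofReal (1 / ((m + 2) * (2 * m + 5))) ≤
      ENNReal.ofReal (3 / (2 * (m + 2) * (m + 3))) := by
    rw [← ENNReal.ofReal_add (by positivity) (by positivity)]
    refine ENNReal.ofReal_le_ofReal ?_
    calc (1 : ℝ) / (2 * (m + 2) * (m + 3)) + 1 / ((m + 2) * (2 * m + 5))
        ≤ 1 / (2 * (m + 2) * (m + 3)) + 1 / ((m + 2) * (m + 3)) := by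
          gcongr
          · linarith [m.cast_nonneg (α := ℝ)]
          · norm_num1
      _ = 3 / (2 * (m + 2) * (m + 3)) := by
          field_simp
          norm_num1
  calc genericSum (m + 2) = ∑' μ, ∑' K, genericWeight (Fin.cons K μ) := tsum_fin_cons _ _
    _ ≤ _ := ENNReal.tsum_le_tsum tsum_genericWeight_cons_le_ite
    _ = ENNReal.ofReal (1 / (2 * (m + 2) * (m + 3))) +
        ENNReal.ofReal (1 / ((m + 2) * (2 * m + 5))) +
        ENNReal.ofReal (3 / 5) * genericSum (m + 1) := by
      rw [ENNReal.tsum_add, ENNReal.tsum_add, tsum_ite_eq, tsum_ite_eq, ENNReal.tsum_mul_left,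
        genericSum]
    _ ≤ _ := by gcongr

theorem tsum_genericSum_le : ∑' m, genericSum (m + 1) ≤ ENNReal.ofReal (35 / 8) := by
  -- The coefficient `5 / 2 = 1 / (1 - 3 / 5)` absorbs the geometric part of the recursion.
  let u (m : ℕ) := ENNReal.ofReal (5 / 2) * genericSum (m + 1) + ENNReal.ofReal (15 / 4 / (m + 2))
  have telescope (m : ℕ) : genericSum (m + 1) + u (m + 1) ≤ u m := by
    calc genericSum (m + 1) + u (m + 1)
        ≤ genericSum (m + 1) + (ENNReal.ofReal (5 / 2) *
            (ENNReal.ofReal (3 / (2 * (m + 2) * (m + 3))) +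
              ENNReal.ofReal (3 / 5) * genericSum (m + 1)) +
            ENNReal.ofReal (15 / 4 / ((m + 1 : ℕ) + 2))) := by
          simp only [u]
          gcongr
          exact genericSum_add_two_le m
      _ = ENNReal.ofReal (1 + 5 / 2 * (3 / 5)) * genericSum (m + 1) + ENNReal.ofReal
            (5 / 2 * (3 / (2 * (m + 2) * (m + 3))) + 15 / 4 / ((m + 1 : ℕ) + 2)) := by
          rw [ENNReal.ofReal_add, ENNReal.ofReal_add, ENNReal.ofReal_mul, ENNReal.ofReal_mul,
            ENNReal.ofReal_one]
          · ring
          all_goals positivity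
      _ = u m := by
          simp only [u]
          congr 3
          · norm_num
          · push_cast
            field_simp
            ring
  calc ∑' m, genericSum (m + 1) ≤ u 0 := tsum_le_of_add_le (by simp) fun m _ => telescope m
    _ ≤ ENNReal.ofReal (5 / 2) * 1 + ENNReal.ofReal (15 / 4 / 2) := by
      simp only [u, Nat.cast_zero, zero_add]
      gcongr
      exact genericSum_one_le
    _ = ENNReal.ofReal (35 / 8) := by
      rw [mul_one, ← ENNReal.ofReal_add (by norm_num) (by norm_num)]
      norm_num

/-! ### Counting -/

/-- The pairs `(n, k)` with `k` generic of dimension at most `N`. -/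
def genericPairs (N : ℕ) : Set (Σ n : ℕ, Fin (n + 2) → ℕ) :=
  {p | (N : ℝ≥0∞)⁻¹ ≤ genericWeight p.2}

/-- The pairs `(n, k)` with `k` a vector tuple of dimension at most `N`. -/
def vectorPairs (N : ℕ) : Set (Σ n : ℕ, Fin (n + 2) → ℕ) :=
  (fun n => ⟨n, vectorTuple (n + 1)⟩) '' Set.Iio (N / 2)

theorem SOoddSet_subset_union (N : ℕ) : SOoddSet N ⊆ genericPairs N ∪ vectorPairs N := by
  rintro ⟨n, k⟩ ⟨anti, nontrivial, dim_le⟩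
  have dim_le' : (PB (n + 2) k : ℝ) ≤ N := mod_cast dim_le
  have ne_trivial : k ≠ trivialTuple (n + 2) := by
    rintro rfl
    simp [trivialTuple] at nontrivial
  rcases eq_or_ne k (vectorTuple (n + 1)) with rfl | ne_vector
  · right
    rw [PB_vectorTuple] at dim_le'
    have : 2 * (n + 1) + 3 ≤ N := mod_cast dim_le'
    exact Set.mem_image_of_mem _ (Set.mem_Iio.2 (by lia))
  · left
    have mem : k ∈ genericTuples (n + 1) := ⟨anti, ne_trivial, ne_vector⟩
    rw [genericPairs, Set.mem_ofPred_eq, genericWeight, Set.indicator_of_mem mem,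
      ENNReal.ofReal_inv_of_pos (PB_pos anti), ENNReal.inv_le_inv]
    exact ENNReal.ofReal_le_of_le_toReal (by simpa using dim_le')

theorem finite_genericPairs_and_ncard_le (N : ℕ) :
    (genericPairs N).Finite ∧ 8 * (genericPairs N).ncard ≤ 35 * N := by
  have total_le : ∑' p : Σ n : ℕ, Fin (n + 2) → ℕ, genericWeight p.2 ≤ ENNReal.ofReal (35 / 8) :=
    (ENNReal.tsum_sigma' _).trans_le tsum_genericSum_le
  obtain ⟨finite, card_le⟩ := ENNReal.finset_card_const_le_le_of_tsum_le ENNReal.ofReal_ne_top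
    total_le (ENNReal.inv_ne_zero.2 (ENNReal.natCast_ne_top N))
  refine ⟨finite, ?_⟩
  have ncard_eq : (genericPairs N).ncard = finite.toFinset.card :=
    Set.ncard_eq_toFinset_card _ finite
  rw [← ncard_eq, ENNReal.div_eq_inv_mul, inv_inv, ← ENNReal.ofReal_natCast N,
    ← ENNReal.ofReal_mul N.cast_nonneg, ← ENNReal.ofReal_natCast,
    ENNReal.ofReal_le_ofReal_iff (by positivity)] at card_le
  have : (8 : ℝ) * (genericPairs N).ncard ≤ 35 * N := by linarith
  exact_mod_cast this

theorem finite_vectorPairs (N : ℕ) : (vectorPairs N).Finite :=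
  (Set.finite_Iio _).image _

theorem ncard_vectorPairs_le (N : ℕ) : (vectorPairs N).ncard ≤ N / 2 :=
  (Set.ncard_image_le (Set.finite_Iio _)).trans_eq (by simp)

theorem soOdd_count_le_general (N : ℕ) :
    (SOoddSet N).Finite ∧ (SOoddSet N).ncard ≤ 5 * N := by
  obtain ⟨generic_finite, generic_card⟩ := finite_genericPairs_and_ncard_le N
  have union_finite := generic_finite.union (finite_vectorPairs N)
  refine ⟨union_finite.subset (SOoddSet_subset_union N), ?_⟩
  have vector_card := ncard_vectorPairs_le N
  calc (SOoddSet N).ncard ≤ (genericPairs N ∪ vectorPairs N).ncard :=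
        Set.ncard_le_ncard (SOoddSet_subset_union N) union_finite
    _ ≤ (genericPairs N).ncard + (vectorPairs N).ncard := Set.ncard_union_le _ _
    _ ≤ 5 * N := by lia

/-- `R_N(SO_odd) ≤ 13 N`. -/
theorem soOdd_count_le (N : ℕ) (hN : 0 < N) :
    (SOoddSet N).Finite ∧ (SOoddSet N).ncard ≤ 13 * N :=
  ⟨(soOdd_count_le_general N).1, (soOdd_count_le_general N).2.trans (by lia)⟩
end

section
/- For every positive integer N, R_N(Sp) ≤ 13·N; that is, the number of pairs (n, l) with n ≥ 1 and l a nontrivial strictly decreasing tuple of n positive integers satisfying P_C(l) ≤ N is at most 13N. -/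
/-- Weyl dimension (type C): for `l : Fin n → ℕ` (0-indexed; `l i = λ_{i+1} + n - (i+1) + 1`),
with `m_i = n - i` (0-indexed, i.e. `n - i + 1` in the paper's 1-indexing),
`PC n l = (∏_{i<j} (l_i² - l_j²)/(m_i² - m_j²)) · ∏_i l_i / m_i`. -/
def PC (n : ℕ) (l : Fin n → ℕ) : ℚ :=
  (∏ i : Fin n, ∏ j : Fin n,
    if i < j then
      ((l i : ℚ) ^ 2 - (l j : ℚ) ^ 2) /
        (((n : ℚ) - ((i : ℕ) : ℚ)) ^ 2 - ((n : ℚ) - ((j : ℕ) : ℚ)) ^ 2)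
    else 1) *
  ∏ i : Fin n, (l i : ℚ) / ((n : ℚ) - ((i : ℕ) : ℚ))

/-- The pairs `(n, l)` counted by `R_N(Sp)`: rank `n + 1 ≥ 1`, `l` strictly decreasing with all
entries positive, nontrivial (`l 0 ≥ rank + 1`), and dimension `PC l ≤ N`. -/
def SpSet (N : ℕ) : Set (Σ n : ℕ, Fin (n + 1) → ℕ) :=
  {p | StrictAnti p.2 ∧ (∀ i, 1 ≤ p.2 i) ∧ (p.1 + 1) + 1 ≤ p.2 0 ∧
    PC (p.1 + 1) p.2 ≤ (N : ℚ)}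

/-!
Removing the first entry of a shifted weight `l` of rank `n + 1` leaves a shifted weight of rank
`n` and divides the Weyl product by an explicit factor. If the tail is the trivial weight `ρ`, then
`l` belongs to a symmetric power `Sym^e` of the standard representation, of dimension
`C(2n + 1 + e, e)`; at most `5x/2` of these have dimension at most `x`. If the tail is nontrivial
and `e = l₁ - l₂ - 1`, the factor is at least `g(e) = (e + 1)(e + 3)(e + 5)/6`. Hence the number
`R(x)` of weights of dimension at most `x` satisfies `R(x) ≤ 5x/2 + ∑ₑ R(x / g(e))`, and since
`∑ₑ 1 / g(e) = 11/16`, induction on the rank gives `R(x) ≤ (5/2) / (1 - 11/16) x = 8x`.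
-/

open Finset Matrix
open scoped Nat

theorem choose_le_choose_of_add_le {r k n : ℕ} (hrk : r ≤ k) (hkn : k + r ≤ n) :
    n.choose r ≤ n.choose k := by
  induction n generalizing r k with
  | zero => simp [show r = 0 by omega, show k = 0 by omega]
  | succ n ih =>
    rcases hkn.eq_or_lt with heq | hlt
    · rw [← heq, Nat.choose_symm_add]
    · rcases r with _ | r
      · simpa [Nat.one_le_iff_ne_zero, Nat.choose_eq_zero_iff] using hkn
      · obtain ⟨k, rfl⟩ := Nat.exists_eq_add_one_of_ne_zero (by omega : k ≠ 0)
        rw [Nat.choose_succ_succ', Nat.choose_succ_succ' n k]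
        exact add_le_add (ih (by omega) (by omega)) (ih hrk (by omega))

theorem succ_choose_two (s : ℕ) : (s + 1).choose 2 = s.choose 2 + s := by
  rw [Nat.choose_succ_succ', Nat.choose_one_right, add_comm]

theorem eq_and_eq_of_choose_two_add_eq {s t m n : ℕ} (hm : m < s) (hn : n < t)
    (h : s.choose 2 + m = t.choose 2 + n) : s = t ∧ m = n := by
  have hst : s = t := by
    rcases lt_trichotomy s t with hlt | heq | hlt
    · have := succ_choose_two s
      have := Nat.choose_le_choose 2 (Nat.add_one_le_of_lt hlt)
      omega
    · exact heq
    · have := succ_choose_two t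
      have := Nat.choose_le_choose 2 (Nat.add_one_le_of_lt hlt)
      omega
  subst hst
  exact ⟨rfl, by omega⟩

theorem card_le_of_injOn_of_add_one_le {α K : Type*} [Semiring K] [LinearOrder K]
    [IsStrictOrderedRing K] [FloorSemiring K] {s : Finset α} {x : K} (hx : 0 ≤ x) (f : α → ℕ)
    (hf : Set.InjOn f s) (hfx : ∀ a ∈ s, (f a : K) + 1 ≤ x) : (#s : K) ≤ x := by
  have hcard : #s ≤ #(range ⌊x⌋₊) := by
    refine card_le_card_of_injOn f (fun a ha => ?_) hf
    have : f a + 1 ≤ ⌊x⌋₊ := Nat.le_floor (by exact_mod_cast hfx a ha)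
    simpa using this
  rw [card_range] at hcard
  exact (Nat.cast_le.2 hcard).trans (Nat.floor_le hx)

theorem card_pairs_choose_le_of_two_le {s : Finset (ℕ × ℕ)} {x : ℚ} (hx : 0 ≤ x)
    (hs : ∀ p ∈ s, 1 ≤ p.1 ∧ 2 ≤ p.2 ∧ ((2 * p.1 + 1 + p.2).choose p.2 : ℚ) ≤ x) :
    (#s : ℚ) ≤ x := by
  -- The code of `(n, e)` lies in `[C(m, 2), C(m + 1, 2))` for `m = 2n + e`, and `C(m + 1, 2) ≤ x`.
  refine card_le_of_injOn_of_add_one_le hx (fun p => (2 * p.1 + p.2).choose 2 + p.1) ?_ ?_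
  · rintro ⟨n, e⟩ hp ⟨n', e'⟩ hp' h
    obtain ⟨hn, -, -⟩ := hs _ hp
    obtain ⟨hn', -, -⟩ := hs _ hp'
    obtain ⟨hsum, rfl⟩ := eq_and_eq_of_choose_two_add_eq (by omega) (by omega) h
    simp only [Prod.mk.injEq, true_and]
    omega
  · rintro ⟨n, e⟩ hp
    obtain ⟨hn, he, hle⟩ := hs _ hp
    refine le_trans ?_ hle
    have hcode := succ_choose_two (2 * n + e)
    have hmono : (2 * n + e + 1).choose 2 ≤ (2 * n + e + 1).choose e :=
      choose_le_choose_of_add_le he (by omega)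
    rw [add_right_comm]
    exact_mod_cast (by omega : (2 * n + e).choose 2 + n + 1 ≤ (2 * n + e + 1).choose e)

theorem card_pairs_choose_le {s : Finset (ℕ × ℕ)} {x : ℚ} (hx : 0 ≤ x)
    (hs : ∀ p ∈ s, 1 ≤ p.2 ∧ ((2 * p.1 + 1 + p.2).choose p.2 : ℚ) ≤ x) :
    (#s : ℚ) ≤ 5 / 2 * x := by
  have fst_zero : (#{p ∈ s | p.1 = 0} : ℚ) ≤ x := by
    refine card_le_of_injOn_of_add_one_le hx Prod.snd ?_ ?_
    · rintro ⟨n, e⟩ hp ⟨n', e'⟩ hp' h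
      simp_all
    · rintro ⟨n, e⟩ hp
      obtain ⟨hp, rfl⟩ := mem_filter.1 hp
      simpa [add_comm 1 e] using (hs _ hp).2
  have snd_one : (#{p ∈ s | p.1 ≠ 0 ∧ p.2 = 1} : ℚ) ≤ x / 2 := by
    refine card_le_of_injOn_of_add_one_le (by positivity) Prod.fst ?_ ?_
    · rintro ⟨n, e⟩ hp ⟨n', e'⟩ hp' h
      simp_all
    · rintro ⟨n, e⟩ hp
      obtain ⟨hp, -, rfl⟩ := mem_filter.1 hp
      have := (hs _ hp).2
      push_cast [Nat.choose_one_right] at this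
      linarith
  have remaining : (#{p ∈ s | p.1 ≠ 0 ∧ p.2 ≠ 1} : ℚ) ≤ x := by
    refine card_pairs_choose_le_of_two_le hx fun p hp => ?_
    obtain ⟨hp, hn, he⟩ := mem_filter.1 hp
    obtain ⟨he', hle⟩ := hs p hp
    exact ⟨by omega, by omega, hle⟩
  have hsplit : (#s : ℚ) = #{p ∈ s | p.1 = 0} + (#{p ∈ s | p.1 ≠ 0 ∧ p.2 = 1}
      + #{p ∈ s | p.1 ≠ 0 ∧ p.2 ≠ 1}) := by
    rw [← card_filter_add_card_filter_not (s := s) (fun p => p.1 = 0),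
      ← card_filter_add_card_filter_not (s := {p ∈ s | ¬p.1 = 0}) (fun p => p.2 = 1),
      filter_filter, filter_filter]
    push_cast
    rfl
  linarith

section WeylDimension

variable {n : ℕ} {l : Fin n → ℕ}

/-- A dominant weight of `Sp_{2n}` shifted by the half-sum `ρ = (n, n - 1, …, 1)` of the positive
roots. -/
structure IsShiftedWeight (l : Fin n → ℕ) : Prop where
  strictAnti : StrictAnti l
  pos : ∀ i, 1 ≤ l i

/-- The tuple `(b, b - 1, …, b - n + 1)`, meaningful for `n ≤ b + 1` because the subtraction is
truncated. For `b = n` it is `ρ`, the shift of the trivial weight. -/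
def staircase (n b : ℕ) : Fin n → ℕ := fun j => b - j

/-- The factors of the Weyl product `PC (n + 1) (a, l₁, …, lₙ)` that involve the head `a`, that is,
its quotient by `PC n l`. -/
def headFactor (a : ℕ) (l : Fin n → ℕ) : ℚ :=
  a / (n + 1) * ∏ j, ((a : ℚ) ^ 2 - (l j : ℚ) ^ 2) / (((n : ℚ) + 1) ^ 2 - (n - (j : ℕ)) ^ 2)

theorem PC_vecCons (a : ℕ) (l : Fin n → ℕ) :
    PC (n + 1) (vecCons a l) = PC n l * headFactor a l := by
  simp only [PC, headFactor, Fin.prod_univ_succ (n := n), cons_val_zero, cons_val_succ,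
    Fin.succ_pos, Fin.not_lt_zero, if_true, if_false, one_mul, Fin.succ_lt_succ_iff, Fin.val_succ,
    Fin.val_zero, Nat.cast_add, Nat.cast_one, Nat.cast_zero, sub_zero,
    add_sub_add_right_eq_sub]
  ring

theorem headFactor_denom_pos (j : Fin n) : 0 < ((n : ℚ) + 1) ^ 2 - (n - (j : ℕ)) ^ 2 := by
  have hj : ((j : ℕ) : ℚ) + 1 ≤ n := by exact_mod_cast j.2
  nlinarith [Nat.cast_nonneg (α := ℚ) (j : ℕ)]

theorem headFactor_pos {a : ℕ} (ha : 0 < a) (hl : ∀ j, l j < a) : 0 < headFactor a l := by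
  refine mul_pos (by positivity) (prod_pos fun j _ => div_pos ?_ (headFactor_denom_pos j))
  exact sub_pos.2 (by exact_mod_cast Nat.pow_lt_pow_left (hl j) two_ne_zero)

theorem IsShiftedWeight.of_vecCons {a : ℕ} (h : IsShiftedWeight (vecCons a l)) :
    0 < a ∧ (∀ j, l j < a) ∧ IsShiftedWeight l :=
  ⟨h.pos 0, fun j => h.strictAnti (Fin.succ_pos j),
    fun _ _ hij => h.strictAnti (Fin.succ_lt_succ_iff.2 hij), fun j => h.pos j.succ⟩

theorem IsShiftedWeight.PC_pos (h : IsShiftedWeight l) : 0 < PC n l := by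
  induction l using Fin.consInduction with
  | elim0 => simp [PC]
  | cons a l ih =>
    obtain ⟨ha, hla, hl⟩ := h.of_vecCons
    have := mul_pos (ih hl) (headFactor_pos ha hla)
    rwa [← PC_vecCons] at this

theorem add_val_le_head {l : Fin (n + 1) → ℕ} (h : StrictAnti l) (j : Fin (n + 1)) :
    l j + j ≤ l 0 := by
  induction j using Fin.induction with
  | zero => simp
  | succ i ih =>
    have := h (Fin.castSucc_lt_succ (i := i))
    simp only [Fin.val_castSucc, Fin.val_succ] at *
    omega

theorem IsShiftedWeight.eq_staircase {l : Fin (n + 1) → ℕ} (h : IsShiftedWeight l)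
    (h0 : l 0 ≤ n + 1) : l = staircase (n + 1) (n + 1) := by
  have lower (j : Fin (n + 1)) : n + 1 ≤ l j + j := by
    induction j using Fin.reverseInduction with
    | last => simpa [add_comm] using h.pos (Fin.last n)
    | cast i ih =>
      have := h.strictAnti (Fin.castSucc_lt_succ (i := i))
      simp only [Fin.val_castSucc, Fin.val_succ] at *
      omega
  funext j
  have := lower j
  have := add_val_le_head h.strictAnti j
  simp only [staircase]
  omega

theorem PC_staircase_self (n : ℕ) : PC n (staircase n n) = 1 := by
  have hcast (i : Fin n) : ((staircase n n i : ℕ) : ℚ) = n - (i : ℕ) := Nat.cast_sub i.2.le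
  have hpos (i : Fin n) : (0 : ℚ) < n - (i : ℕ) := sub_pos.2 (by exact_mod_cast i.2)
  simp only [PC, hcast, div_self (hpos _).ne', prod_const_one, mul_one]
  refine prod_eq_one fun i _ => prod_eq_one fun j _ => ?_
  split_ifs with hij
  · have hij' : (n : ℚ) - (j : ℕ) < n - (i : ℕ) := by gcongr; exact hij
    exact div_self (sub_pos.2 (pow_lt_pow_left₀ hij' (hpos j).le two_ne_zero)).ne'
  · rfl

theorem headFactor_staircase_le {l : Fin (n + 1) → ℕ} (hl : StrictAnti l) {b : ℕ} (hnb : n ≤ b)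
    (hb : b ≤ l 0) (e : ℕ) :
    headFactor (b + e + 1) (staircase (n + 1) b) ≤ headFactor (l 0 + e + 1) l := by
  have hnum_nonneg (j : Fin (n + 1)) :
      (0 : ℚ) ≤ ((b + e + 1 : ℕ) : ℚ) ^ 2 - (staircase (n + 1) b j : ℚ) ^ 2 := by
    refine sub_nonneg.2 (pow_le_pow_left₀ (by positivity) ?_ 2)
    exact_mod_cast (by simp only [staircase]; omega : staircase (n + 1) b j ≤ b + e + 1)
  have hnum_le (j : Fin (n + 1)) :
      ((b + e + 1 : ℕ) : ℚ) ^ 2 - (staircase (n + 1) b j : ℚ) ^ 2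
        ≤ ((l 0 + e + 1 : ℕ) : ℚ) ^ 2 - (l j : ℚ) ^ 2 := by
    have hbl : (b : ℚ) ≤ l 0 := by exact_mod_cast hb
    have hlj : (l j : ℚ) ≤ l 0 - (j : ℕ) := by
      rw [le_sub_iff_add_le]
      exact_mod_cast add_val_le_head hl j
    have hstair : (staircase (n + 1) b j : ℚ) = b - (j : ℕ) := Nat.cast_sub (by omega)
    rw [hstair]
    calc ((b + e + 1 : ℕ) : ℚ) ^ 2 - ((b : ℚ) - (j : ℕ)) ^ 2
        = (e + 1 + (j : ℕ)) * (2 * b + e + 1 - (j : ℕ)) := by push_cast; ring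
      _ ≤ (e + 1 + (j : ℕ)) * (2 * l 0 + e + 1 - (j : ℕ)) := by gcongr
      _ = ((l 0 + e + 1 : ℕ) : ℚ) ^ 2 - ((l 0 : ℚ) - (j : ℕ)) ^ 2 := by push_cast; ring
      _ ≤ ((l 0 + e + 1 : ℕ) : ℚ) ^ 2 - (l j : ℚ) ^ 2 := by gcongr
  refine mul_le_mul (by gcongr) (prod_le_prod (fun j _ => ?_) fun j _ => ?_)
    (prod_nonneg fun j _ => ?_) (by positivity)
  · exact div_nonneg (hnum_nonneg j) (headFactor_denom_pos j).le
  · exact div_le_div_of_nonneg_right (hnum_le j) (headFactor_denom_pos j).le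
  · exact div_nonneg (hnum_nonneg j) (headFactor_denom_pos j).le

theorem headFactor_staircase (n d e : ℕ) :
    headFactor (n + d + e + 1) (staircase n (n + d)) =
      (n + d + e + 1) * (e + n)! * (2 * n + 2 * d + e + 1)! /
        (e ! * (n + 2 * d + e + 1)! * (2 * n + 1)!) := by
  have hfactor (j : Fin n) :
      (((n + d + e + 1 : ℕ) : ℚ) ^ 2 - (staircase n (n + d) j : ℚ) ^ 2) /
          (((n : ℚ) + 1) ^ 2 - (n - (j : ℕ)) ^ 2)
        = ((e + 1 + j : ℕ) * (2 * n + 2 * d + e + 1 - j : ℕ) : ℚ)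
          / ((1 + j : ℕ) * (2 * n + 1 - j : ℕ) : ℚ) := by
    rw [staircase, Nat.cast_sub (by omega), Nat.cast_sub (by omega), Nat.cast_sub (by omega)]
    push_cast
    congr 1 <;> ring
  have hasc : (e ! : ℚ) * (e + 1).ascFactorial n = (e + n)! := by
    exact_mod_cast Nat.factorial_mul_ascFactorial e n
  have hdesc : ((n + 2 * d + e + 1)! : ℚ) * (2 * n + 2 * d + e + 1).descFactorial n
      = (2 * n + 2 * d + e + 1)! := by
    have := Nat.factorial_mul_descFactorial (by omega : n ≤ 2 * n + 2 * d + e + 1)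
    rw [show 2 * n + 2 * d + e + 1 - n = n + 2 * d + e + 1 by omega] at this
    exact_mod_cast this
  have hdesc' : ((n + 1) * n ! : ℚ) * (2 * n + 1).descFactorial n = (2 * n + 1)! := by
    have := Nat.factorial_mul_descFactorial (by omega : n ≤ 2 * n + 1)
    rw [show 2 * n + 1 - n = n + 1 by omega, Nat.factorial_succ] at this
    exact_mod_cast this
  rw [headFactor, prod_congr rfl fun j _ => hfactor j,
    Fin.prod_univ_eq_prod_range (fun k : ℕ => ((e + 1 + k : ℕ) *
      (2 * n + 2 * d + e + 1 - k : ℕ) : ℚ) / ((1 + k : ℕ) * (2 * n + 1 - k : ℕ) : ℚ)),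
    prod_div_distrib, prod_mul_distrib, prod_mul_distrib]
  simp only [← Nat.cast_prod, ← Nat.ascFactorial_eq_prod_range, ← Nat.descFactorial_eq_prod_range,
    Nat.one_ascFactorial]
  have := (Nat.descFactorial_pos.2 (by omega : n ≤ 2 * n + 1)).ne'
  rw [← hasc, ← hdesc, ← hdesc']
  push_cast
  field_simp

theorem headFactor_staircase_self (n e : ℕ) :
    headFactor (n + e + 1) (staircase n n) = ((2 * n + 1 + e).choose e : ℚ) := by
  have hfact : ((e + n + 1)! : ℚ) = (n + e + 1) * (e + n)! := by
    rw [Nat.factorial_succ]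
    push_cast
    ring
  have := headFactor_staircase n 0 e
  simp only [mul_zero, add_zero, CharP.cast_eq_zero] at this
  rw [this, ← Nat.choose_symm_add, Nat.cast_add_choose, add_right_comm (2 * n), add_comm n e,
    hfact]
  field_simp

/-- The least quotient `PC (n + 2) (a, l) / PC (n + 1) l` over all shifted weights `l` of nontrivial
representations with `a = l₁ + e + 1`, attained for `n = 0` and `l = (2)`. -/
def minGrowth (e : ℕ) : ℚ := (e + 1) * (e + 3) * (e + 5) / 6

theorem headFactor_staircase_succ (n e : ℕ) :
    headFactor (n + 1 + e + 1) (staircase n (n + 1)) = ((2 * n + 1 + e).choose e : ℚ) *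
      ((2 * n + e + 3) / (n + e + 3) * ((2 * n + e + 2) / (n + e + 1))) := by
  have hfact : ((n + 2 * 1 + e + 1)! : ℚ) = (n + e + 3) * (n + e + 2) * (n + e + 1) * (e + n)! := by
    rw [show n + 2 * 1 + e + 1 = e + n + 3 by ring]
    push_cast [Nat.factorial_succ]
    ring
  have hfact' : ((2 * n + 2 * 1 + e + 1)! : ℚ)
      = (2 * n + e + 3) * (2 * n + e + 2) * (2 * n + 1 + e)! := by
    rw [show 2 * n + 2 * 1 + e + 1 = 2 * n + 1 + e + 2 by ring]
    push_cast [Nat.factorial_succ]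
    ring
  rw [headFactor_staircase, ← Nat.choose_symm_add, Nat.cast_add_choose, hfact, hfact']
  push_cast
  field_simp
  ring

theorem minGrowth_le_headFactor_staircase (n e : ℕ) :
    minGrowth e ≤ headFactor (n + 2 + e + 1) (staircase (n + 1) (n + 2)) := by
  have hchoose : ((e : ℚ) + 1) * (e + 2) * (e + 3) / 6 ≤ (2 * (n + 1) + 1 + e).choose e := by
    have hmono : (3 + e).choose 3 ≤ (2 * (n + 1) + 1 + e).choose e := by
      rw [Nat.choose_symm_add]
      exact Nat.choose_le_choose e (by omega)
    refine le_trans (le_of_eq ?_) (Nat.cast_le.2 hmono)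
    rw [Nat.cast_add_choose, add_comm 3 e]
    push_cast [Nat.factorial]
    field_simp
    ring
  have hratio : ((e : ℚ) + 5) / (e + 4) ≤ (2 * (n + 1 : ℕ) + e + 3) / ((n + 1 : ℕ) + e + 3) := by
    rw [div_le_div_iff₀ (by positivity) (by positivity)]
    push_cast
    nlinarith [mul_nonneg (Nat.cast_nonneg n (α := ℚ)) (Nat.cast_nonneg e)]
  have hratio' : ((e : ℚ) + 4) / (e + 2) ≤ (2 * (n + 1 : ℕ) + e + 2) / ((n + 1 : ℕ) + e + 1) := by
    rw [div_le_div_iff₀ (by positivity) (by positivity)]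
    push_cast
    nlinarith [mul_nonneg (Nat.cast_nonneg n (α := ℚ)) (Nat.cast_nonneg e)]
  calc minGrowth e
      = ((e : ℚ) + 1) * (e + 2) * (e + 3) / 6 * ((e + 5) / (e + 4) * ((e + 4) / (e + 2))) := by
        rw [minGrowth]
        field_simp
    _ ≤ _ := by
        rw [headFactor_staircase_succ]
        gcongr

theorem minGrowth_mul_PC_le {l : Fin (n + 1) → ℕ} (hl : IsShiftedWeight l) (h0 : n + 2 ≤ l 0)
    (e : ℕ) : minGrowth e * PC (n + 1) l ≤ PC (n + 2) (vecCons (l 0 + e + 1) l) := by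
  rw [PC_vecCons, mul_comm]
  refine mul_le_mul_of_nonneg_left ?_ hl.PC_pos.le
  exact (minGrowth_le_headFactor_staircase n e).trans
    (headFactor_staircase_le hl.strictAnti (by omega) h0 e)

theorem minGrowth_pos (e : ℕ) : 0 < minGrowth e := by unfold minGrowth; positivity

theorem sum_inv_minGrowth_le (K : ℕ) : ∑ e ∈ range K, (minGrowth e)⁻¹ ≤ 11 / 16 := by
  have telescope : ∑ e ∈ range K, (minGrowth e)⁻¹
      = 11 / 16 - 3 / 2 * (1 / ((K + 1) * (K + 3)) + 1 / ((K + 2) * (K + 4))) := by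
    induction K with
    | zero => norm_num
    | succ K ih =>
      rw [sum_range_succ, ih, minGrowth]
      push_cast
      field_simp
      ring
  rw [telescope]
  exact sub_le_self _ (by positivity)

end WeylDimension

/-- A rank `n + 1` together with a tuple of that length, the ambient type of `SpSet`. -/
abbrev RankedTuple := Σ n : ℕ, Fin (n + 1) → ℕ

/-- The shifted highest weights of the nontrivial irreducible representations of dimension at most
`x`. The bound is rational because the recursion divides it by `minGrowth e`. -/
def nontrivialWeights (x : ℚ) : Set RankedTuple :=
  {p | IsShiftedWeight p.2 ∧ p.1 + 2 ≤ p.2 0 ∧ PC (p.1 + 1) p.2 ≤ x}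

/-- The shifted highest weight of `Sym^e` of the standard representation in rank `n + 1`. -/
def symPower (n e : ℕ) : RankedTuple :=
  ⟨n, vecCons (n + e + 1) (staircase n n)⟩

/-- The tuple of rank one higher whose tail is `p` and whose first two entries differ by
`e + 1`. -/
def prepend (e : ℕ) (p : RankedTuple) : RankedTuple :=
  ⟨p.1 + 1, vecCons (p.2 0 + e + 1) p.2⟩

theorem symPower_injective : Function.Injective (Function.uncurry symPower) := by
  rintro ⟨n, e⟩ ⟨n', e'⟩ h
  have hrank : n = n' := congrArg Sigma.fst h
  have hhead : n + e + 1 = n' + e' + 1 := congrArg (fun p : RankedTuple => p.2 0) h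
  simp only [Prod.mk.injEq]
  omega

theorem prepend_injective (e : ℕ) : Function.Injective (prepend e) := by
  rintro ⟨n, l⟩ ⟨n', l'⟩ h
  obtain rfl : n = n' := Nat.succ_injective (congrArg Sigma.fst h)
  have htuple := eq_of_heq (Sigma.mk.inj h).2
  rw [show l = l' from congrArg vecTail htuple]

theorem eq_symPower_or_eq_prepend {x : ℚ} {p : RankedTuple} (hp : p ∈ nontrivialWeights x) :
    (∃ n e, p = symPower n e) ∨ ∃ e q, q.1 + 2 ≤ q.2 0 ∧ p = prepend e q := by
  obtain ⟨n, l⟩ := p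
  obtain ⟨hl, h0, -⟩ := hp
  induction l using Fin.consCases with
  | cons a t =>
    obtain ⟨-, hta, ht⟩ := hl.of_vecCons
    replace h0 : n + 2 ≤ a := h0
    have eq_symPower (hstair : t = staircase n n) :
        (⟨n, vecCons a t⟩ : RankedTuple) = symPower n (a - (n + 1)) := by
      rw [symPower, hstair, show n + (a - (n + 1)) + 1 = a by omega]
    rcases n with _ | n
    · exact .inl ⟨_, _, eq_symPower (Subsingleton.elim _ _)⟩
    · by_cases htriv : t 0 ≤ n + 1
      · exact .inl ⟨_, _, eq_symPower (ht.eq_staircase htriv)⟩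
      · refine .inr ⟨a - t 0 - 1, ⟨n, t⟩, by simp only; omega, ?_⟩
        have := hta 0
        rw [prepend, show t 0 + (a - t 0 - 1) + 1 = a by omega]
        rfl

theorem choose_le_of_symPower_mem {x : ℚ} {n e : ℕ} (h : symPower n e ∈ nontrivialWeights x) :
    1 ≤ e ∧ ((2 * n + 1 + e).choose e : ℚ) ≤ x := by
  obtain ⟨-, h0, hle⟩ := h
  replace h0 : n + 2 ≤ n + e + 1 := h0
  refine ⟨by omega, ?_⟩
  rwa [symPower, PC_vecCons, PC_staircase_self, one_mul, headFactor_staircase_self] at hle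

theorem mem_of_prepend_mem {x : ℚ} {e : ℕ} {p : RankedTuple} (h : prepend e p ∈ nontrivialWeights x)
    (h0 : p.1 + 2 ≤ p.2 0) : p ∈ nontrivialWeights (x / minGrowth e) := by
  obtain ⟨hl, -, hle⟩ := h
  have hp := hl.of_vecCons.2.2
  refine ⟨hp, h0, ?_⟩
  rw [le_div_iff₀' (minGrowth_pos e)]
  exact (minGrowth_mul_PC_le hp h0 e).trans hle

theorem card_le_card_symPower_add_sum_prepend {x : ℚ} {s : Finset RankedTuple}
    (hs : ↑s ⊆ nontrivialWeights x) :
    ∃ K, #s ≤ #(s.preimage _ symPower_injective.injOn) +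
      ∑ e ∈ range K, #{q ∈ s.preimage _ (prepend_injective e).injOn | q.1 + 2 ≤ q.2 0} := by
  classical
  let K := s.sup fun p => p.2 0
  let sym : Finset RankedTuple :=
    (s.preimage _ symPower_injective.injOn).image (Function.uncurry symPower)
  let pre (e : ℕ) : Finset RankedTuple :=
    {q ∈ s.preimage _ (prepend_injective e).injOn | q.1 + 2 ≤ q.2 0}.image (prepend e)
  have hcover : s ⊆ sym ∪ (range K).biUnion pre := by
    intro p hp
    rcases eq_symPower_or_eq_prepend (hs hp) with ⟨n, e, rfl⟩ | ⟨e, q, hq, rfl⟩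
    · exact mem_union_left _ (mem_image.2 ⟨(n, e), mem_preimage.2 hp, rfl⟩)
    · have hhead : q.2 0 + e + 1 ≤ K := le_sup (f := fun p : RankedTuple => p.2 0) hp
      refine mem_union_right _ (mem_biUnion.2 ⟨e, mem_range.2 (by omega), ?_⟩)
      exact mem_image.2 ⟨q, mem_filter.2 ⟨mem_preimage.2 hp, hq⟩, rfl⟩
  refine ⟨K, (card_le_card hcover).trans ((card_union_le _ _).trans ?_)⟩
  exact add_le_add card_image_le
    (card_biUnion_le.trans (sum_le_sum fun e _ => card_image_le))

theorem card_le_eight_mul_of_rank_lt (M : ℕ) {x : ℚ} (hx : 0 ≤ x) {s : Finset RankedTuple}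
    (hs : ↑s ⊆ nontrivialWeights x) (hM : ∀ p ∈ s, p.1 < M) : (#s : ℚ) ≤ 8 * x := by
  induction M generalizing x s with
  | zero =>
    rw [eq_empty_of_forall_notMem fun p hp => (hM p hp).not_ge (Nat.zero_le _)]
    simpa using hx
  | succ M ih =>
    obtain ⟨K, hK⟩ := card_le_card_symPower_add_sum_prepend hs
    have hsym : (#(s.preimage _ symPower_injective.injOn) : ℚ) ≤ 5 / 2 * x :=
      card_pairs_choose_le hx fun p hp => choose_le_of_symPower_mem (hs (mem_preimage.1 hp :))
    have hpre (e : ℕ) :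
        (#{q ∈ s.preimage _ (prepend_injective e).injOn | q.1 + 2 ≤ q.2 0} : ℚ)
          ≤ 8 * (x / minGrowth e) := by
      refine ih (div_nonneg hx (minGrowth_pos e).le) (fun q hq => ?_) fun q hq => ?_ <;>
        obtain ⟨hq, hq0⟩ := mem_filter.1 hq
      · exact mem_of_prepend_mem (hs (mem_preimage.1 hq)) hq0
      · exact Nat.lt_of_succ_lt_succ (hM _ (mem_preimage.1 hq))
    calc (#s : ℚ)
        ≤ #(s.preimage _ symPower_injective.injOn) + ∑ e ∈ range K,
            (#{q ∈ s.preimage _ (prepend_injective e).injOn | q.1 + 2 ≤ q.2 0} : ℚ) := by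
          exact_mod_cast hK
      _ ≤ 5 / 2 * x + ∑ e ∈ range K, 8 * (x / minGrowth e) :=
          add_le_add hsym (sum_le_sum fun e _ => hpre e)
      _ = 5 / 2 * x + 8 * x * ∑ e ∈ range K, (minGrowth e)⁻¹ := by
          simp only [div_eq_mul_inv, mul_sum, mul_assoc]
      _ ≤ 5 / 2 * x + 8 * x * (11 / 16) := by
          gcongr
          exact sum_inv_minGrowth_le K
      _ = 8 * x := by ring

theorem card_le_eight_mul {x : ℚ} (hx : 0 ≤ x) {s : Finset RankedTuple}
    (hs : ↑s ⊆ nontrivialWeights x) : (#s : ℚ) ≤ 8 * x :=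
  card_le_eight_mul_of_rank_lt (s.sup Sigma.fst + 1) hx hs fun _ hp =>
    Nat.lt_succ_of_le (le_sup (f := Sigma.fst) hp)

theorem sp_count_le_general {x : ℚ} (hx : 0 ≤ x) :
    (nontrivialWeights x).Finite ∧ ((nontrivialWeights x).ncard : ℚ) ≤ 8 * x := by
  have hfin : (nontrivialWeights x).Finite := by
    by_contra hinf
    obtain ⟨s, hs, hcard⟩ := Set.Infinite.exists_subset_card_eq hinf (⌊8 * x⌋₊ + 1)
    have := card_le_eight_mul hx hs
    rw [hcard] at this
    exact this.not_gt (by exact_mod_cast Nat.lt_floor_add_one (8 * x))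
  refine ⟨hfin, ?_⟩
  rw [Set.ncard_eq_toFinset_card _ hfin]
  exact card_le_eight_mul hx (by simp)

theorem SpSet_eq_nontrivialWeights (N : ℕ) : SpSet N = nontrivialWeights N := by
  ext p
  exact ⟨fun ⟨hanti, hpos, h0, hle⟩ => ⟨⟨hanti, hpos⟩, h0, hle⟩,
    fun ⟨⟨hanti, hpos⟩, h0, hle⟩ => ⟨hanti, hpos, h0, hle⟩⟩

/-- `R_N(Sp) ≤ 13 N`. -/
theorem sp_count_le (N : ℕ) (hN : 0 < N) :
    (SpSet N).Finite ∧ (SpSet N).ncard ≤ 13 * N := by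
  rw [SpSet_eq_nontrivialWeights]
  obtain ⟨hfin, hcard⟩ := sp_count_le_general (Nat.cast_nonneg (α := ℚ) N)
  have : (nontrivialWeights N).ncard ≤ 8 * N := by exact_mod_cast hcard
  exact ⟨hfin, by omega⟩
end

section
/- For every positive integer N, R_N(SL) < 43·N; that is, the number of pairs (n, a) with n ≥ 2 and a a nontrivial tuple of n−1 positive integers satisfying P_A(a) ≤ N is less than 43N. -/
/-- Weyl dimension (type A): for a tuple `a : Fin k → ℕ` (0-indexed, corresponding to
`SL_{k+1}(ℂ)`, with `a i = λ_{i+1} + 1`),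
`PA k a = ∏_{0 ≤ i < j ≤ k} (a_i + a_{i+1} + ⋯ + a_{j-1}) / (j - i)`. -/
def PA (k : ℕ) (a : Fin k → ℕ) : ℚ :=
  ∏ i ∈ Finset.range (k + 1), ∏ j ∈ Finset.range (k + 1),
    if i < j then
      ((∑ t ∈ Finset.Ico i j, if h : t < k then (a ⟨t, h⟩ : ℚ) else 0) / ((j : ℚ) - (i : ℚ)))
    else 1

/-- The pairs `(n, a)` counted by `R_N(SL)`: `n = k + 2 ≥ 2`, `a` a tuple of `n - 1 = k + 1`
positive integers, nontrivial (some `a i ≥ 2`), and dimension `PA a ≤ N`. -/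
def SLSet (N : ℕ) : Set (Σ k : ℕ, Fin (k + 1) → ℕ) :=
  {p | (∀ i, 1 ≤ p.2 i) ∧ (∃ i, 2 ≤ p.2 i) ∧ PA (p.1 + 1) p.2 ≤ (N : ℚ)}

/-! By Markov's inequality, a set of representations whose inverse dimensions sum to at most `c` has
at most `c * N` members of dimension at most `N`. The sum over all nontrivial representations
diverges, but only because of three families whose `j`-th member has dimension at least `j + 2`:
those of `SL_2`, the standard representations and their duals. Each has at most `N - 1` members of
dimension at most `N`.

For the other weights the sum is estimated by adjoining the coordinates one at a time. Appending `x`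
to a weight of rank `k` multiplies the dimension by at least `(k + 1 + x).choose (k + 1)`, and the
inverses of these binomial coefficients telescope along the diagonals of the harmonic triangle of
Leibniz. Appending `0` gains more than the trivial factor `1` as soon as some coordinate is nonzero,
the more so the later it stands, so it matters where the last nonzero coordinate is. The resulting
recursion for the sums over the weights whose last nonzero coordinate is, or is not, the last
coordinate is summed by a Lyapunov function, for a total of at most `39`. -/

open Finset
open scoped ENNReal

section WeylDimension

variable {k : ℕ}

/-- The sum of the last `j` entries of a tuple of length `k`, or of all entries if `k ≤ j`. -/
def tailSum (l : Fin k → ℕ) (j : ℕ) : ℕ := ∑ t ∈ {t : Fin k | k ≤ t + j}, l t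

lemma tailSum_add_one (l : Fin k → ℕ) {j : ℕ} (hj : j ≤ k) :
    tailSum (fun i ↦ l i + 1) j = tailSum l j + j := by
  have card_eq : #{t : Fin k | k ≤ (t : ℕ) + j} = j := by
    rw [card_filter, Fin.sum_univ_eq_sum_range (fun t ↦ if k ≤ t + j then 1 else 0), ← card_filter,
      show {t ∈ range k | k ≤ t + j} = Ico (k - j) k by grind, Nat.card_Ico]
    omega
  simp [tailSum, sum_add_distrib, card_eq]

lemma le_tailSum (l : Fin k → ℕ) {t : Fin k} {j : ℕ} (h : k ≤ t + j) : l t ≤ tailSum l j :=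
  single_le_sum (f := l) (fun _ _ ↦ Nat.zero_le _) (by simpa using h)

lemma sum_Ico_dite_eq_tailSum (a : Fin k → ℕ) {i : ℕ} (hi : i ≤ k) :
    (∑ t ∈ Ico i k, if h : t < k then (a ⟨t, h⟩ : ℚ) else 0) = tailSum a (k - i) := by
  rw [show Ico i k = {t ∈ range k | i ≤ t} by grind, sum_filter, sum_range, tailSum, sum_filter]
  push_cast
  refine sum_congr rfl fun t _ ↦ ?_
  simp only [t.isLt, dite_true]
  exact if_congr (by omega) rfl rfl

-- Splitting off the pairs `(i, k + 1)`, indexed by `j = k - i`.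
lemma PA_succ (a : Fin (k + 1) → ℕ) :
    PA (k + 1) a = PA k (Fin.init a) *
      ∏ j ∈ range (k + 1), ((tailSum (Fin.init a) j + a (Fin.last k) : ℚ) / (j + 1)) := by
  have sum_init (i j : ℕ) (hj : j ≤ k) :
      (∑ t ∈ Ico i j, if h : t < k + 1 then (a ⟨t, h⟩ : ℚ) else 0) =
        ∑ t ∈ Ico i j, if h : t < k then (Fin.init a ⟨t, h⟩ : ℚ) else 0 :=
    sum_congr rfl fun t ht ↦ by
      have := (mem_Ico.1 ht).2
      rw [dif_pos (by omega), dif_pos (by omega)]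
      rfl
  have last_column (i : ℕ) (hi : i ≤ k) :
      (∑ t ∈ Ico i (k + 1), if h : t < k + 1 then (a ⟨t, h⟩ : ℚ) else 0) =
        tailSum (Fin.init a) (k - i) + a (Fin.last k) := by
    rw [sum_Ico_succ_top hi, dif_pos k.lt_succ_self, sum_init i k le_rfl,
      sum_Ico_dite_eq_tailSum _ hi]
    rfl
  unfold PA
  rw [prod_range_succ, prod_eq_one (s := range (k + 1 + 1)) fun j hj ↦ if_neg (by grind), mul_one,
    ← prod_range_reflect (fun j : ℕ ↦ (tailSum _ j + _ : ℚ) / (j + 1)), ← prod_mul_distrib]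
  refine prod_congr rfl fun i hi ↦ ?_
  have hik : i ≤ k := by grind
  rw [prod_range_succ, if_pos (by omega), last_column i hik]
  congr 1
  · exact prod_congr rfl fun j hj ↦ by rw [sum_init i j (by grind)]
  · rw [Nat.add_sub_cancel, Nat.cast_sub hik]
    push_cast
    ring

/-- The dimension of the irreducible representation of `SL_{k+1}(ℂ)` with highest weight `l`, in
coordinates with respect to the fundamental weights. -/
noncomputable def weylDim (l : Fin k → ℕ) : ℝ := (PA k fun i ↦ l i + 1 : ℚ)

/-- The factor by which the Weyl dimension grows when the entry `x` is appended to `l`. -/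
noncomputable def dimRatio (l : Fin k → ℕ) (x : ℕ) : ℝ :=
  ∏ j ∈ range (k + 1), (1 + (tailSum l j + x : ℝ) / (j + 1))

lemma weylDim_succ (l : Fin (k + 1) → ℕ) :
    weylDim l = weylDim (Fin.init l) * dimRatio (Fin.init l) (l (Fin.last k)) := by
  rw [weylDim, PA_succ, Rat.cast_mul, weylDim, dimRatio]
  congr 1
  push_cast
  refine prod_congr rfl fun j hj ↦ ?_
  have tailSum_eq := tailSum_add_one (Fin.init l) (by grind : j ≤ k)
  change ((tailSum (fun i ↦ Fin.init l i + 1) j : ℕ) + _ : ℝ) / _ = _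
  rw [tailSum_eq]
  push_cast
  field_simp
  ring

lemma weylDim_of_rank_zero (l : Fin 0 → ℕ) : weylDim l = 1 := by
  simp [weylDim, PA]

lemma one_le_dimRatio (l : Fin k → ℕ) (x : ℕ) : 1 ≤ dimRatio l x :=
  one_le_prod fun j _ ↦ le_add_of_nonneg_right (by positivity)

lemma one_le_weylDim : ∀ {k : ℕ} (l : Fin k → ℕ), 1 ≤ weylDim l
  | 0, l => (weylDim_of_rank_zero l).ge
  | _ + 1, l => weylDim_succ l ▸ one_le_mul_of_one_le_of_one_le (one_le_weylDim _)
      (one_le_dimRatio _ _)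

lemma weylDim_pos (l : Fin k → ℕ) : 0 < weylDim l := zero_lt_one.trans_le (one_le_weylDim l)

lemma choose_eq_prod_one_add_div (n x : ℕ) :
    ((n + x).choose n : ℝ) = ∏ j ∈ range n, (1 + (x : ℝ) / (j + 1)) := by
  induction n with
  | zero => simp
  | succ n ih =>
    have := Nat.add_one_mul_choose_eq (n + x) n
    rw [prod_range_succ, ← ih]
    field_simp
    rw [show n + 1 + x = n + x + 1 by ring]
    norm_cast
    linarith

lemma choose_le_dimRatio (l : Fin k → ℕ) (x : ℕ) :
    ((k + 1 + x).choose (k + 1) : ℝ) ≤ dimRatio l x := by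
  rw [choose_eq_prod_one_add_div]
  refine prod_le_prod (fun j _ ↦ by positivity) fun j _ ↦ ?_
  gcongr
  simp

lemma prod_Ico_le_dimRatio (l : Fin k → ℕ) (x : ℕ) {t : Fin k} {m : ℕ} (h : k ≤ t + m) :
    ∏ j ∈ Ico m (k + 1), (1 + (l t + x : ℝ) / (j + 1)) ≤ dimRatio l x := by
  calc ∏ j ∈ Ico m (k + 1), (1 + (l t + x : ℝ) / (j + 1))
      ≤ ∏ j ∈ Ico m (k + 1), (1 + (tailSum l j + x : ℝ) / (j + 1)) :=
        prod_le_prod (fun j _ ↦ by positivity) fun j hj ↦ by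
          have : l t ≤ tailSum l j := le_tailSum l (by grind)
          gcongr
    _ ≤ dimRatio l x :=
        prod_le_prod_of_subset_of_one_le (by grind) (fun j _ ↦ by positivity)
          fun j _ _ ↦ le_add_of_nonneg_right (by positivity)

lemma prod_Ico_one_add_inv {m n : ℕ} (h : m ≤ n) :
    ∏ j ∈ Ico m n, (1 + 1 / (j + 1) : ℝ) = (n + 1) / (m + 1) := by
  induction n, h using Nat.le_induction with
  | base => simp [div_self (by positivity : (m + 1 : ℝ) ≠ 0)]
  | succ n h ih => rw [prod_Ico_succ_top h, ih]; push_cast; field_simp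

lemma div_le_dimRatio_of_ne_zero {l : Fin k → ℕ} (x : ℕ) {t : Fin k} {m : ℕ} (hm : m ≤ k)
    (h : k ≤ t + m) (ht : l t ≠ 0) : (k + 2 : ℝ) / (m + 1) ≤ dimRatio l x := by
  have one_le : (1 : ℝ) ≤ l t + x := by exact_mod_cast (by omega : 1 ≤ l t + x)
  calc (k + 2 : ℝ) / (m + 1) = ∏ j ∈ Ico m (k + 1), (1 + 1 / (j + 1) : ℝ) := by
        rw [prod_Ico_one_add_inv (by omega)]; push_cast; ring
    _ ≤ ∏ j ∈ Ico m (k + 1), (1 + (l t + x : ℝ) / (j + 1)) :=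
        prod_le_prod (fun j _ ↦ by positivity) fun j _ ↦ by gcongr
    _ ≤ dimRatio l x := prod_Ico_le_dimRatio l x h

lemma dimRatio_le_weylDim (l : Fin (k + 1) → ℕ) :
    dimRatio (Fin.init l) (l (Fin.last k)) ≤ weylDim l :=
  weylDim_succ l ▸ le_mul_of_one_le_left (zero_le_one.trans (one_le_dimRatio _ _))
    (one_le_weylDim _)

lemma add_two_le_weylDim_single_last (k : ℕ) :
    (k + 2 : ℝ) ≤ weylDim (Pi.single (Fin.last k) 1 : Fin (k + 1) → ℕ) := by
  refine le_of_eq_of_le ?_ ((choose_le_dimRatio _ _).trans (dimRatio_le_weylDim _))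
  rw [Pi.single_eq_same, Nat.choose_succ_self_right]
  push_cast
  ring

lemma choose_le_weylDim_single_zero (k x : ℕ) :
    ((k + 1 + x).choose (k + 1) : ℝ) ≤ weylDim (Pi.single 0 x : Fin (k + 1) → ℕ) := by
  induction k with
  | zero => exact (choose_le_dimRatio _ x).trans (dimRatio_le_weylDim (Pi.single 0 x))
  | succ k ih =>
    have init_eq : Fin.init (Pi.single 0 x : Fin (k + 2) → ℕ) = Pi.single 0 x := by
      funext i
      rw [Fin.init, Pi.single_apply, Pi.single_apply]
      exact if_congr (Fin.castSucc_eq_zero_iff) rfl rfl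
    have last_factor : 1 + (x : ℝ) / (k + 1 + 1) ≤
        dimRatio (Pi.single 0 x : Fin (k + 1) → ℕ) 0 := by
      have := prod_Ico_le_dimRatio (Pi.single 0 x : Fin (k + 1) → ℕ) 0 (t := 0) (m := k + 1)
        (by simp)
      rw [prod_Ico_succ_top le_rfl] at this
      simpa using this
    have last_eq_zero : (Pi.single 0 x : Fin (k + 2) → ℕ) (Fin.last (k + 1)) = 0 :=
      Pi.single_eq_of_ne (Fin.last_pos.ne') x
    rw [weylDim_succ, init_eq, last_eq_zero, choose_eq_prod_one_add_div, prod_range_succ,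
      ← choose_eq_prod_one_add_div, Nat.cast_add_one]
    exact mul_le_mul ih last_factor (by positivity) (weylDim_pos _).le

/-- The tuple `b` followed by `d` zeros. -/
def pad (b : Fin k → ℕ) : (d : ℕ) → Fin (k + d) → ℕ
  | 0 => b
  | d + 1 => Fin.snoc (α := fun _ ↦ ℕ) (pad b d) 0

lemma pad_castAdd (b : Fin k → ℕ) (d : ℕ) (i : Fin k) : pad b d (Fin.castAdd d i) = b i := by
  induction d with
  | zero => rfl
  | succ d ih => exact (Fin.snoc_castSucc (α := fun _ ↦ ℕ) 0 (pad b d) _).trans ih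

lemma le_weylDim_pad {b : Fin (k + 1) → ℕ} (hb : b (Fin.last k) ≠ 0) (d : ℕ) :
    weylDim b * ((k + 2 + d).choose (k + 1) / (k + 2)) ≤ weylDim (pad b d) := by
  induction d with
  | zero =>
    have : (k + 2 : ℝ) ≠ 0 := by positivity
    simp [pad, Nat.choose_succ_self_right, add_assoc, one_add_one_eq_two, div_self this]
  | succ d ih =>
    have factor_le : ((k + 1 + d : ℕ) + 2 : ℝ) / ((d + 1 : ℕ) + 1) ≤ dimRatio (pad b d) 0 :=
      div_le_dimRatio_of_ne_zero 0 (t := Fin.castAdd d (Fin.last k)) (by omega)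
        (by rw [Fin.val_castAdd, Fin.val_last]; omega) (by rwa [pad_castAdd])
    have choose_succ : ((k + 2 + (d + 1)).choose (k + 1) : ℝ) =
        (k + 2 + d).choose (k + 1) * (((k + 1 + d : ℕ) + 2) / ((d + 1 : ℕ) + 1)) := by
      have := Nat.choose_mul_succ_eq (k + 2 + d) (k + 1)
      rw [show k + 2 + d + 1 - (k + 1) = d + 2 by omega] at this
      field_simp
      norm_cast
      grind
    calc weylDim b * ((k + 2 + (d + 1)).choose (k + 1) / (k + 2))
        = weylDim b * ((k + 2 + d).choose (k + 1) / (k + 2)) *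
            (((k + 1 + d : ℕ) + 2) / ((d + 1 : ℕ) + 1)) := by rw [choose_succ]; ring
      _ ≤ weylDim (pad b d) * dimRatio (pad b d) 0 :=
          mul_le_mul ih factor_le (by positivity) (weylDim_pos _).le
      _ = weylDim (pad b (d + 1)) := by
          rw [weylDim_succ, pad, Fin.init_snoc, Fin.snoc_last]

end WeylDimension

section Series

lemma tsum_ofReal_le_of_le_sub {f h : ℕ → ℝ} (hf : ∀ i, 0 ≤ f i) (hh : ∀ i, 0 ≤ h i)
    (hfh : ∀ i, f i ≤ h i - h (i + 1)) : ∑' i, ENNReal.ofReal (f i) ≤ ENNReal.ofReal (h 0) := by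
  refine ENNReal.tsum_le_of_sum_range_le fun n ↦ ?_
  rw [← ENNReal.ofReal_sum_of_nonneg fun i _ ↦ hf i]
  refine ENNReal.ofReal_le_ofReal ?_
  calc ∑ i ∈ range n, f i ≤ ∑ i ∈ range n, (h i - h (i + 1)) := sum_le_sum fun i _ ↦ hfh i
    _ = h 0 - h n := sum_range_sub' h n
    _ ≤ h 0 := sub_le_self _ (hh n)

lemma tsum_inv_mul_add_one_le {c : ℝ} (hc : 0 < c) :
    ∑' i : ℕ, ENNReal.ofReal ((c + i) * (c + i + 1))⁻¹ ≤ ENNReal.ofReal c⁻¹ := by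
  refine (tsum_ofReal_le_of_le_sub (h := fun i ↦ (c + i)⁻¹) (fun i ↦ by positivity)
    (fun i ↦ by positivity) fun i ↦ le_of_eq ?_).trans (by simp)
  push_cast
  field_simp
  ring

lemma tsum_tsum_mul_inv_mul_add_one_le {u v : ℕ → ℝ} {c : ℝ} (hu : ∀ i, 0 ≤ u i)
    (hv : ∀ i, 0 < v i) (huv : ∀ i, u i * (v i)⁻¹ ≤ c * ((1 + i) * (1 + i + 1) : ℝ)⁻¹) :
    ∑' i, ∑' j : ℕ, ENNReal.ofReal (u i * ((v i + j) * (v i + j + 1))⁻¹) ≤ ENNReal.ofReal c := by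
  calc ∑' i, ∑' j : ℕ, ENNReal.ofReal (u i * ((v i + j) * (v i + j + 1))⁻¹)
      ≤ ∑' i, ENNReal.ofReal (u i * (v i)⁻¹) := by
        gcongr with i
        simp only [ENNReal.ofReal_mul (hu i), ENNReal.tsum_mul_left]
        grw [tsum_inv_mul_add_one_le (hv i)]
    _ ≤ ∑' i : ℕ, ENNReal.ofReal c * ENNReal.ofReal ((1 + i) * (1 + i + 1) : ℝ)⁻¹ := by
        gcongr with i
        rw [← ENNReal.ofReal_mul' (by positivity)]
        exact ENNReal.ofReal_le_ofReal (huv i)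
    _ ≤ ENNReal.ofReal c := by
        grw [ENNReal.tsum_mul_left, tsum_inv_mul_add_one_le one_pos]
        simp

/-- The harmonic triangle of Leibniz: its entries are the differences of consecutive entries of the
previous diagonal, so the diagonals telescope. -/
lemma inv_choose_add_one_eq_sub {r : ℕ} (hr : 0 < r) (m : ℕ) :
    ((r + 1 + m).choose (r + 1) : ℝ)⁻¹ =
      (r + 1) / (r * (r + m).choose r) - (r + 1) / (r * (r + m + 1).choose r) := by
  have choose_pos : (0 : ℝ) < (r + m).choose r := by exact_mod_cast Nat.choose_pos (by omega)
  have choose_add_one : ((r + m + 1).choose r : ℝ) = (r + m).choose r * (r + m + 1) / (m + 1) := by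
    have := Nat.choose_mul_succ_eq (r + m) r
    rw [show r + m + 1 - r = m + 1 by omega] at this
    field_simp
    exact_mod_cast this.symm
  have choose_succ : ((r + 1 + m).choose (r + 1) : ℝ) =
      (r + m).choose r * (r + m + 1) / (r + 1) := by
    have := Nat.add_one_mul_choose_eq (r + m) r
    rw [show r + 1 + m = r + m + 1 by ring]
    field_simp
    norm_cast
    linarith
  rw [choose_add_one, choose_succ]
  field_simp
  ring

lemma tsum_inv_choose_le {r : ℕ} (hr : 0 < r) (m : ℕ) :
    ∑' i : ℕ, ENNReal.ofReal ((r + 1 + (i + m)).choose (r + 1) : ℝ)⁻¹ ≤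
      ENNReal.ofReal ((r + 1) / (r * (r + m).choose r)) := by
  refine (tsum_ofReal_le_of_le_sub
    (h := fun i ↦ ((r : ℝ) + 1) / (r * (r + (i + m)).choose r)) (fun i ↦ by positivity)
    (fun i ↦ by positivity) fun i ↦ ?_).trans (by simp)
  rw [inv_choose_add_one_eq_sub hr, show r + (i + m) + 1 = r + (i + 1 + m) by ring]

lemma tsum_inv_choose_add_one_le {r : ℕ} (hr : 0 < r) :
    ∑' i : ℕ, ENNReal.ofReal ((r + 1 + (i + 1)).choose (r + 1) : ℝ)⁻¹ ≤
      ENNReal.ofReal (1 / r) := by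
  refine (tsum_inv_choose_le hr 1).trans_eq (congrArg _ ?_)
  rw [Nat.choose_succ_self_right]
  push_cast
  field_simp

lemma cast_choose_add_two (r : ℕ) : ((r + 2).choose r : ℝ) = (r + 2) * (r + 1) / 2 := by
  rw [Nat.choose_symm_add, Nat.cast_choose_two]
  push_cast
  ring

lemma tsum_inv_choose_add_two_le {r : ℕ} (hr : 0 < r) :
    ∑' i : ℕ, ENNReal.ofReal ((r + 1 + (i + 2)).choose (r + 1) : ℝ)⁻¹ ≤
      ENNReal.ofReal (2 / (r * (r + 2))) := by
  refine (tsum_inv_choose_le hr 2).trans_eq (congrArg _ ?_)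
  rw [cast_choose_add_two]
  field_simp

lemma tsum_subtype_le_tsum_comp {α β : Type*} {s : Set α} {φ : β → α} (hs : s ⊆ Set.range φ)
    (f : α → ℝ≥0∞) : ∑' a : s, f a ≤ ∑' b, f (φ b) := by
  choose ψ hψ using fun a : s ↦ hs a.2
  have ψ_injective : Function.Injective ψ := fun a a' h ↦
    Subtype.ext <| by rw [← hψ a, ← hψ a', h]
  calc ∑' a : s, f a = ∑' a : s, f (φ (ψ a)) := by simp only [hψ]
    _ ≤ ∑' b, f (φ b) := ENNReal.tsum_comp_le_tsum_of_injective ψ_injective fun b ↦ f (φ b)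

end Series

section Zeta

variable {k : ℕ}

/-- The Witten zeta function of `SL_{k+1}(ℂ)` at `1`, that is the sum of the inverse dimensions of
the irreducible representations, restricted to highest weights in `s`. -/
noncomputable def zeta (s : Set (Fin k → ℕ)) : ℝ≥0∞ := ∑' l : s, ENNReal.ofReal (weylDim l.1)⁻¹

@[gcongr]
lemma zeta_mono {s t : Set (Fin k → ℕ)} (h : s ⊆ t) : zeta s ≤ zeta t :=
  ENNReal.tsum_mono_subtype (fun l ↦ ENNReal.ofReal (weylDim l)⁻¹) h

lemma zeta_union_le (s t : Set (Fin k → ℕ)) : zeta (s ∪ t) ≤ zeta s + zeta t :=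
  ENNReal.tsum_union_le (fun l ↦ ENNReal.ofReal (weylDim l)⁻¹) s t

lemma zeta_singleton_le (l : Fin k → ℕ) : zeta {l} ≤ 1 := by
  rw [zeta, tsum_singleton l fun l ↦ ENNReal.ofReal (weylDim l)⁻¹, ENNReal.ofReal_le_one]
  exact inv_le_one_of_one_le₀ (one_le_weylDim l)

lemma zeta_range_le {x : ℕ → Fin k → ℕ} {g : ℕ → ℝ} (hg : ∀ i, 0 < g i)
    (h : ∀ i, g i ≤ weylDim (x i)) :
    zeta (Set.range x) ≤ ∑' i, ENNReal.ofReal (g i)⁻¹ :=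
  (tsum_subtype_le_tsum_comp subset_rfl fun l ↦ ENNReal.ofReal (weylDim l)⁻¹).trans <|
    ENNReal.tsum_le_tsum fun i ↦ ENNReal.ofReal_le_ofReal (inv_anti₀ (hg i) (h i))

lemma zeta_snoc_le {ι : Type*} {s : Set (Fin k → ℕ)} {x : ι → ℕ} {g : ι → ℝ} (hg : ∀ i, 0 < g i)
    (hgs : ∀ b ∈ s, ∀ i, g i ≤ dimRatio b (x i)) :
    zeta {l : Fin (k + 1) → ℕ | Fin.init l ∈ s ∧ l (Fin.last k) ∈ Set.range x} ≤
      zeta s * ∑' i, ENNReal.ofReal (g i)⁻¹ := by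
  have subset_range : {l : Fin (k + 1) → ℕ | Fin.init l ∈ s ∧ l (Fin.last k) ∈ Set.range x} ⊆
      Set.range fun p : s × ι ↦ (Fin.snoc (α := fun _ ↦ ℕ) p.1 (x p.2) : Fin (k + 1) → ℕ) := by
    rintro l ⟨hs, i, hi⟩
    exact ⟨(⟨_, hs⟩, i), by simpa only [hi] using Fin.snoc_init_self l⟩
  calc zeta _ ≤ ∑' p : s × ι, ENNReal.ofReal
        (weylDim (Fin.snoc (α := fun _ ↦ ℕ) p.1 (x p.2) : Fin (k + 1) → ℕ))⁻¹ :=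
      tsum_subtype_le_tsum_comp subset_range fun l ↦ ENNReal.ofReal (weylDim l)⁻¹
    _ ≤ ∑' p : s × ι, ENNReal.ofReal (weylDim p.1.1)⁻¹ * ENNReal.ofReal (g p.2)⁻¹ :=
      ENNReal.tsum_le_tsum fun ⟨b, i⟩ ↦ by
        rw [weylDim_succ, Fin.init_snoc, Fin.snoc_last, mul_inv,
          ENNReal.ofReal_mul (inv_nonneg.2 (weylDim_pos _).le)]
        gcongr
        exacts [hg i, hgs b b.2 i]
    _ = zeta s * ∑' i, ENNReal.ofReal (g i)⁻¹ := by
      rw [zeta, ENNReal.tsum_prod', ← ENNReal.tsum_mul_right]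
      simp only [ENNReal.tsum_mul_left]

lemma zeta_snoc_le_mul_tsum_choose (s : Set (Fin k → ℕ)) (m : ℕ) :
    zeta {l : Fin (k + 1) → ℕ | Fin.init l ∈ s ∧ m ≤ l (Fin.last k)} ≤
      zeta s * ∑' i : ℕ, ENNReal.ofReal ((k + 1 + (i + m)).choose (k + 1) : ℝ)⁻¹ := by
  have subset_range : {l : Fin (k + 1) → ℕ | Fin.init l ∈ s ∧ m ≤ l (Fin.last k)} ⊆
      {l | Fin.init l ∈ s ∧ l (Fin.last k) ∈ Set.range (· + m)} :=
    fun l hl ↦ ⟨hl.1, l (Fin.last k) - m, Nat.sub_add_cancel hl.2⟩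
  grw [subset_range]
  exact zeta_snoc_le (fun i ↦ by exact_mod_cast Nat.choose_pos (by omega))
    fun b _ i ↦ choose_le_dimRatio b (i + m)

lemma zeta_snoc_zero_le {s : Set (Fin k → ℕ)} {g : ℝ} (hg : 0 < g)
    (hgs : ∀ b ∈ s, g ≤ dimRatio b 0) :
    zeta {l : Fin (k + 1) → ℕ | Fin.init l ∈ s ∧ l (Fin.last k) = 0} ≤
      ENNReal.ofReal g⁻¹ * zeta s := by
  simpa [mul_comm, eq_comm] using
    zeta_snoc_le (ι := Unit) (x := fun _ ↦ 0) (fun _ ↦ hg) fun b hb _ ↦ hgs b hb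

/-- The nonzero multiples of the first fundamental weight. -/
def axisWeights (k : ℕ) : Set (Fin (k + 2) → ℕ) := Set.range fun x ↦ Pi.single 0 (x + 1)

/-- The weights whose last coordinate is nonzero. -/
def lastWeights (k : ℕ) : Set (Fin (k + 2) → ℕ) := {l | l (Fin.last _) ≠ 0}

/-- The weights whose last nonzero coordinate is neither the first nor the last one. -/
def middleWeights (k : ℕ) : Set (Fin (k + 2) → ℕ) := {l | l (Fin.last _) = 0 ∧ ∃ i ≠ 0, l i ≠ 0}

lemma compl_zero_subset (k : ℕ) :
    ({0}ᶜ : Set (Fin (k + 2) → ℕ)) ⊆ axisWeights k ∪ (lastWeights k ∪ middleWeights k) := by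
  intro l hl
  by_cases hlast : l (Fin.last _) = 0
  · by_cases hmiddle : ∃ i ≠ 0, l i ≠ 0
    · exact .inr (.inr ⟨hlast, hmiddle⟩)
    · push Not at hmiddle
      have eq_single : l = Pi.single 0 (l 0) :=
        funext fun i ↦ by by_cases hi : i = 0 <;> simp_all
      obtain ⟨x, hx⟩ : ∃ x, l 0 = x + 1 := Nat.exists_eq_succ_of_ne_zero fun h ↦
        hl (by rw [eq_single, h]; simp)
      exact .inl ⟨x, by rw [eq_single, hx]⟩
  · exact .inr (.inl hlast)

lemma zeta_range_single_zero_le (k m : ℕ) :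
    zeta (Set.range fun x ↦ (Pi.single 0 (x + m) : Fin (k + 2) → ℕ)) ≤
      ∑' i : ℕ, ENNReal.ofReal ((k + 1 + 1 + (i + m)).choose (k + 1 + 1) : ℝ)⁻¹ :=
  zeta_range_le (fun i ↦ by exact_mod_cast Nat.choose_pos (by omega)) fun i ↦
    choose_le_weylDim_single_zero (k + 1) (i + m)

lemma zeta_axisWeights_le (k : ℕ) : zeta (axisWeights k) ≤ ENNReal.ofReal (1 / (k + 1)) :=
  (zeta_range_single_zero_le k 1).trans <|
    (tsum_inv_choose_add_one_le k.succ_pos).trans_eq (by push_cast; rfl)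

lemma zeta_compl_zero_le (k : ℕ) : zeta ({0}ᶜ : Set (Fin (k + 2) → ℕ)) ≤
    ENNReal.ofReal (1 / (k + 1)) + (zeta (lastWeights k) + zeta (middleWeights k)) := by
  grw [compl_zero_subset, zeta_union_le, zeta_union_le, zeta_axisWeights_le]

lemma zeta_lastWeights_succ_le (k : ℕ) :
    zeta (lastWeights (k + 1)) ≤
      (1 + (ENNReal.ofReal (1 / (k + 1)) + (zeta (lastWeights k) + zeta (middleWeights k)))) *
        ENNReal.ofReal (1 / (k + 2)) := by
  have subset_snoc : lastWeights (k + 1) ⊆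
      {l | Fin.init l ∈ ({0} ∪ {0}ᶜ : Set _) ∧ 1 ≤ l (Fin.last _)} :=
    fun l hl ↦ ⟨by simp, Nat.one_le_iff_ne_zero.2 hl⟩
  grw [subset_snoc, zeta_snoc_le_mul_tsum_choose, tsum_inv_choose_add_one_le (by omega),
    zeta_union_le, zeta_singleton_le, zeta_compl_zero_le]
  simp

lemma middleWeights_zero : middleWeights 0 = ∅ :=
  Set.eq_empty_of_forall_notMem fun l ⟨hlast, i, hi, hl⟩ ↦ by
    obtain rfl : i = Fin.last 1 := Fin.eq_one_of_ne_zero i hi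
    exact hl hlast

lemma middleWeights_succ_subset (k : ℕ) : middleWeights (k + 1) ⊆
    {l | Fin.init l ∈ lastWeights k ∧ l (Fin.last _) = 0} ∪
      {l | Fin.init l ∈ middleWeights k ∧ l (Fin.last _) = 0} := by
  rintro l ⟨hlast, i, hi, hl⟩
  by_cases hinit : Fin.init l (Fin.last _) = 0
  · obtain ⟨j, rfl⟩ : ∃ j, i = Fin.castSucc j :=
      Fin.exists_castSucc_eq.2 (by rintro rfl; exact hl hlast) |>.imp fun _ ↦ Eq.symm
    exact .inr ⟨⟨hinit, j, by rintro rfl; exact hi rfl, hl⟩, hlast⟩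
  · exact .inl ⟨hinit, hlast⟩

lemma zeta_middleWeights_succ_le (k : ℕ) :
    zeta (middleWeights (k + 1)) ≤ ENNReal.ofReal (2 / (k + 4)) * zeta (lastWeights k) +
      ENNReal.ofReal ((k + 2) / (k + 4)) * zeta (middleWeights k) := by
  have last_factor (b) (hb : b ∈ lastWeights k) : ((k : ℝ) + 4) / 2 ≤ dimRatio b 0 := by
    have := div_le_dimRatio_of_ne_zero 0 (by omega) (by simp) hb (m := 1)
    push_cast at this
    convert this using 2 <;> ring
  have middle_factor (b) (hb : b ∈ middleWeights k) :
      ((k : ℝ) + 4) / (k + 2) ≤ dimRatio b 0 := by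
    obtain ⟨-, i, hi, hbi⟩ := hb
    have i_pos : 0 < (i : ℕ) := Fin.pos_iff_ne_zero.2 hi
    have := div_le_dimRatio_of_ne_zero 0 (by omega) (by omega) hbi (m := k + 1)
    push_cast at this
    convert this using 2 <;> ring
  grw [middleWeights_succ_subset, zeta_union_le,
    zeta_snoc_zero_le (by positivity) last_factor, zeta_snoc_zero_le (by positivity) middle_factor,
    inv_div, inv_div]

/-- The weights with nonzero last coordinate that are not the last fundamental weight. -/
def properLastWeights (k : ℕ) : Set (Fin (k + 2) → ℕ) :=
  lastWeights k \ {Pi.single (Fin.last _) 1}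

lemma zeta_properLastWeights_succ_le (k : ℕ) :
    zeta (properLastWeights (k + 1)) ≤ ENNReal.ofReal (2 / ((k + 2) * (k + 4))) +
      (ENNReal.ofReal (1 / (k + 1)) + (zeta (lastWeights k) + zeta (middleWeights k))) *
        ENNReal.ofReal (1 / (k + 2)) := by
  have subset_union : properLastWeights (k + 1) ⊆
      {l | Fin.init l ∈ ({0} : Set _) ∧ 2 ≤ l (Fin.last _)} ∪
        {l | Fin.init l ∈ ({0}ᶜ : Set _) ∧ 1 ≤ l (Fin.last _)} := by
    rintro l ⟨hlast, hne⟩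
    have one_le : 1 ≤ l (Fin.last _) := Nat.one_le_iff_ne_zero.2 hlast
    by_cases hinit : Fin.init l = 0
    · refine .inl ⟨hinit, lt_of_le_of_ne one_le fun h ↦ hne ?_⟩
      refine funext (Fin.lastCases (by simp [← h]) fun i ↦ ?_)
      rw [Pi.single_eq_of_ne (Fin.castSucc_ne_last i)]
      exact congrFun hinit i
    · exact .inr ⟨hinit, one_le⟩
  grw [subset_union, zeta_union_le, zeta_snoc_le_mul_tsum_choose,
    zeta_snoc_le_mul_tsum_choose, tsum_inv_choose_add_one_le (by omega),
    tsum_inv_choose_add_two_le (by omega), zeta_singleton_le, zeta_compl_zero_le, one_mul,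
    show (k + 1 + 1 : ℕ) + (2 : ℝ) = k + 4 by push_cast; ring]
  simp

lemma weylDim_fin_two (x y : ℕ) :
    weylDim ![x, y] = (x + 1) * (y + 1) * (x + y + 2) / 2 := by
  have rank_zero_ratio (l : Fin 0 → ℕ) : dimRatio l x = 1 + x := by simp [dimRatio, tailSum]
  have rank_one_ratio (l : Fin 1 → ℕ) : dimRatio l y = (1 + y) * (1 + (l 0 + y) / 2) := by
    rw [dimRatio, prod_range_succ, prod_range_one]
    simp [tailSum, one_add_one_eq_two]
  calc weylDim ![x, y] = 1 * (1 + x) * ((1 + y) * (1 + (x + y) / 2)) := by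
        rw [weylDim_succ, weylDim_succ, weylDim_of_rank_zero]
        exact congrArg₂ _ (congrArg _ (rank_zero_ratio _)) (rank_one_ratio _)
    _ = (x + 1) * (y + 1) * (x + y + 2) / 2 := by ring

lemma inv_weylDim_fin_two_le (x y : ℕ) : (weylDim ![x, y + 1])⁻¹ ≤
    2 * (x + 1 : ℝ)⁻¹ * ((x + 2 + y) * (x + 2 + y + 1) : ℝ)⁻¹ +
      2 * (y + 2 : ℝ)⁻¹ * ((y + 2 + x) * (y + 2 + x + 1) : ℝ)⁻¹ := by
  calc (weylDim ![x, y + 1])⁻¹ ≤ ((x + 1) * (y + 2) * (x + y + 2) / 2 : ℝ)⁻¹ := by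
        rw [weylDim_fin_two]
        push_cast
        refine inv_anti₀ (by positivity) ?_
        gcongr ?_ * ?_ * ?_ / _ <;> linarith
    _ = _ := by
        field_simp
        ring

lemma zeta_lastWeights_zero_le : zeta (lastWeights 0) ≤ ENNReal.ofReal 4 := by
  have subset_range : lastWeights 0 ⊆ Set.range fun p : ℕ × ℕ ↦ ![p.1, p.2 + 1] := fun l hl ↦ by
    refine ⟨(l 0, l 1 - 1), funext <| Fin.forall_fin_two.2 ⟨rfl, ?_⟩⟩
    exact Nat.sub_add_cancel (Nat.one_le_iff_ne_zero.2 hl)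
  have sum_left_le : ∑' x : ℕ, ∑' y : ℕ, ENNReal.ofReal
      (2 * (x + 1 : ℝ)⁻¹ * ((x + 2 + y) * (x + 2 + y + 1) : ℝ)⁻¹) ≤ ENNReal.ofReal 2 :=
    tsum_tsum_mul_inv_mul_add_one_le (fun x ↦ by positivity) (fun x ↦ by positivity) fun x ↦ by
      field_simp
      linarith
  have sum_right_le : ∑' y : ℕ, ∑' x : ℕ, ENNReal.ofReal
      (2 * (y + 2 : ℝ)⁻¹ * ((y + 2 + x) * (y + 2 + x + 1) : ℝ)⁻¹) ≤ ENNReal.ofReal 2 :=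
    tsum_tsum_mul_inv_mul_add_one_le (fun y ↦ by positivity) (fun y ↦ by positivity) fun y ↦ by
      field_simp
      linarith
  calc zeta (lastWeights 0)
      ≤ ∑' p : ℕ × ℕ, ENNReal.ofReal (weylDim ![p.1, p.2 + 1])⁻¹ :=
        tsum_subtype_le_tsum_comp subset_range fun l ↦ ENNReal.ofReal (weylDim l)⁻¹
    _ ≤ _ := ENNReal.tsum_le_tsum fun p ↦
        (ENNReal.ofReal_le_ofReal (inv_weylDim_fin_two_le p.1 p.2)).trans ENNReal.ofReal_add_le
    _ = _ + _ := ENNReal.tsum_add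
    _ ≤ ENNReal.ofReal 2 + ENNReal.ofReal 2 := by
        rw [ENNReal.tsum_prod', ENNReal.tsum_prod']
        refine add_le_add sum_left_le (ENNReal.tsum_comm.trans_le sum_right_le)
    _ = ENNReal.ofReal 4 := by rw [← ENNReal.ofReal_add] <;> norm_num

/-- Upper bounds for `zeta (lastWeights k)` and `zeta (middleWeights k)`, obtained by iterating the
recursive estimates for them. -/
noncomputable def zetaMajorant : ℕ → ℝ × ℝ
  | 0 => (4, 0)
  | k + 1 =>
    ((1 + (1 / (k + 1) + ((zetaMajorant k).1 + (zetaMajorant k).2))) * (1 / (k + 2)),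
      2 / (k + 4) * (zetaMajorant k).1 + (k + 2) / (k + 4) * (zetaMajorant k).2)

lemma zetaMajorant_nonneg (k : ℕ) : 0 ≤ zetaMajorant k := by
  induction k with
  | zero => simp [zetaMajorant, Prod.le_def]
  | succ k ih =>
    obtain ⟨h₁, h₂⟩ := ih
    simp only [Prod.fst_zero, Prod.snd_zero] at h₁ h₂
    exact ⟨by simp only [zetaMajorant, Prod.fst_zero]; positivity,
      by simp only [zetaMajorant, Prod.snd_zero]; positivity⟩

lemma zeta_le_zetaMajorant (k : ℕ) : zeta (lastWeights k) ≤ ENNReal.ofReal (zetaMajorant k).1 ∧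
    zeta (middleWeights k) ≤ ENNReal.ofReal (zetaMajorant k).2 := by
  induction k with
  | zero => exact ⟨zeta_lastWeights_zero_le, by simp [middleWeights_zero, zeta]⟩
  | succ k ih =>
    have h₁ : 0 ≤ (zetaMajorant k).1 := (zetaMajorant_nonneg k).1
    have h₂ : 0 ≤ (zetaMajorant k).2 := (zetaMajorant_nonneg k).2
    constructor
    · grw [zeta_lastWeights_succ_le, ih.1, ih.2, zetaMajorant, ENNReal.ofReal_mul (by positivity),
        ENNReal.ofReal_add (by positivity) (by positivity),
        ENNReal.ofReal_add (by positivity) (by positivity), ENNReal.ofReal_add h₁ h₂,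
        ENNReal.ofReal_one]
    · grw [zeta_middleWeights_succ_le, ih.1, ih.2, zetaMajorant,
        ENNReal.ofReal_add (by positivity) (by positivity), ENNReal.ofReal_mul (by positivity),
        ENNReal.ofReal_mul (by positivity)]

/-- A Lyapunov function for the recursion of `zetaMajorant`: along it, the function decreases by at
least the contribution of step `k` to the total of all inverse dimensions. The coefficients are
chosen so that the three coefficients of the decrease in `lyapunov_step` are nonnegative. -/
noncomputable def lyapunov (k : ℕ) (p : ℝ × ℝ) : ℝ :=
  6 / (k + 1) * p.1 + (1 / 2 + 6 / (k + 2)) * p.2 + 9 / (k + 1)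

lemma lyapunov_step (k : ℕ) :
    2 / (k + 1) * (zetaMajorant k).1 + (2 / ((k + 2) * (k + 4)) +
        (1 / (k + 1) + ((zetaMajorant k).1 + (zetaMajorant k).2)) * (1 / (k + 2))) ≤
      lyapunov k (zetaMajorant k) - lyapunov (k + 1) (zetaMajorant (k + 1)) := by
  have h₁ : 0 ≤ (zetaMajorant k).1 := (zetaMajorant_nonneg k).1
  have h₂ : 0 ≤ (zetaMajorant k).2 := (zetaMajorant_nonneg k).2
  rw [zetaMajorant]
  set a := (zetaMajorant k).1
  set b := (zetaMajorant k).2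
  have coeff_fst : (0 : ℝ) ≤ 6 / (k + 1) - 2 / (k + 1) - 1 / (k + 2) - 6 / (k + 2) ^ 2 -
      (1 / 2 + 6 / (k + 3)) * (2 / (k + 4)) := by
    field_simp
    ring_nf
    positivity
  have coeff_snd : (0 : ℝ) ≤ 1 / 2 + 6 / (k + 2) - 1 / (k + 2) - 6 / (k + 2) ^ 2 -
      (1 / 2 + 6 / (k + 3)) * ((k + 2) / (k + 4)) := by
    field_simp
    ring_nf
    positivity
  have coeff_one : (0 : ℝ) ≤ 9 / (k + 1) - 9 / (k + 2) - 2 / ((k + 2) * (k + 4)) -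
      7 / ((k + 1) * (k + 2)) := by
    field_simp
    ring_nf
    positivity
  have := add_nonneg (add_nonneg (mul_nonneg coeff_fst h₁) (mul_nonneg coeff_snd h₂)) coeff_one
  rw [← sub_nonneg]
  refine this.trans_eq ?_
  simp only [lyapunov]
  push_cast
  field_simp
  ring

lemma tsum_zeta_lastWeights_add_zeta_properLastWeights_le :
    ∑' k : ℕ, (ENNReal.ofReal (2 / (k + 1)) * zeta (lastWeights k) +
      zeta (properLastWeights (k + 1))) ≤ ENNReal.ofReal 33 := by
  have nonneg₁ (k : ℕ) : 0 ≤ (zetaMajorant k).1 := (zetaMajorant_nonneg k).1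
  have nonneg₂ (k : ℕ) : 0 ≤ (zetaMajorant k).2 := (zetaMajorant_nonneg k).2
  calc _ ≤ ∑' k : ℕ, ENNReal.ofReal (2 / (k + 1) * (zetaMajorant k).1 + (2 / ((k + 2) * (k + 4)) +
        (1 / (k + 1) + ((zetaMajorant k).1 + (zetaMajorant k).2)) * (1 / (k + 2)))) := by
        gcongr with k
        have := nonneg₁ k
        have := nonneg₂ k
        grw [zeta_properLastWeights_succ_le, (zeta_le_zetaMajorant k).1,
          (zeta_le_zetaMajorant k).2, ← ENNReal.ofReal_mul (by positivity),
          ← ENNReal.ofReal_add (nonneg₁ k) (nonneg₂ k),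
          ← ENNReal.ofReal_add (by positivity) (by positivity),
          ← ENNReal.ofReal_mul (by positivity),
          ← ENNReal.ofReal_add (by positivity) (by positivity),
          ← ENNReal.ofReal_add (by positivity) (by positivity)]
    _ ≤ ENNReal.ofReal (lyapunov 0 (zetaMajorant 0)) :=
        tsum_ofReal_le_of_le_sub
          (fun k ↦ by have := nonneg₁ k; have := nonneg₂ k; positivity)
          (fun k ↦ by have := nonneg₁ k; have := nonneg₂ k; unfold lyapunov; positivity)
          lyapunov_step
    _ = ENNReal.ofReal 33 := by norm_num [lyapunov, zetaMajorant]

end Zeta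

section Weight

/-- Pairs of a rank `k` and a highest weight for `SL_{k+1}(ℂ)`. -/
abbrev Weight := Σ k : ℕ, Fin k → ℕ

/-- The sum of the inverse dimensions of the irreducible representations of all the groups
`SL_{k+1}(ℂ)`, restricted to highest weights in `E`. -/
noncomputable def totalZeta (E : Set Weight) : ℝ≥0∞ :=
  ∑' q : E, ENNReal.ofReal (weylDim q.1.2)⁻¹

lemma totalZeta_union_le (E F : Set Weight) : totalZeta (E ∪ F) ≤ totalZeta E + totalZeta F :=
  ENNReal.tsum_union_le (fun q : Weight ↦ ENNReal.ofReal (weylDim q.2)⁻¹) E F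

lemma totalZeta_iUnion_le {ι : Type*} {r : ι → ℕ} (s : ∀ i, Set (Fin (r i) → ℕ)) :
    totalZeta (⋃ i, Sigma.mk (r i) '' s i) ≤ ∑' i, zeta (s i) := by
  have subset_range : (⋃ i, Sigma.mk (r i) '' s i) ⊆
      Set.range fun p : Σ i, s i ↦ (⟨r p.1, p.2⟩ : Weight) := by
    simp only [Set.iUnion_subset_iff, Set.image_subset_iff]
    exact fun i l hl ↦ ⟨⟨i, l, hl⟩, rfl⟩
  exact (tsum_subtype_le_tsum_comp subset_range fun q ↦ ENNReal.ofReal (weylDim q.2)⁻¹).trans_eq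
    (ENNReal.tsum_sigma' _)

lemma exists_eq_pad_of_mem_middleWeights {n : ℕ} {l : Fin (n + 2) → ℕ} (hl : l ∈ middleWeights n) :
    ∃ k, ∃ b ∈ lastWeights k, ∃ d, (⟨n + 2, l⟩ : Weight) = ⟨k + 2 + (d + 1), pad b (d + 1)⟩ := by
  induction n with
  | zero => simp [middleWeights_zero] at hl
  | succ n ih =>
    have eq_snoc (hlast : l (Fin.last _) = 0) : l = Fin.snoc (α := fun _ ↦ ℕ) (Fin.init l) 0 :=
      hlast ▸ (Fin.snoc_init_self l).symm
    obtain ⟨hinit, hlast⟩ | ⟨hinit, hlast⟩ := middleWeights_succ_subset n hl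
    · exact ⟨n, Fin.init l, hinit, 0, congrArg _ (eq_snoc hlast)⟩
    · obtain ⟨k, b, hb, d, eq_pad⟩ := ih hinit
      refine ⟨k, b, hb, d + 1, (congrArg _ (eq_snoc hlast)).trans ?_⟩
      exact congrArg (fun q : Weight ↦ (⟨q.1 + 1, pad q.2 1⟩ : Weight)) eq_pad

lemma inv_weylDim_pad_le {k : ℕ} {b : Fin (k + 2) → ℕ} (hb : b ∈ lastWeights k) (d : ℕ) :
    ENNReal.ofReal (weylDim (pad b (d + 1)))⁻¹ ≤ ENNReal.ofReal (weylDim b)⁻¹ *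
      (ENNReal.ofReal (k + 3) *
        ENNReal.ofReal ((k + 1 + 1 + (d + 2)).choose (k + 1 + 1) : ℝ)⁻¹) := by
  have dim_pos := weylDim_pos b
  have choose_pos : (0 : ℝ) < (k + 1 + 1 + (d + 2)).choose (k + 1 + 1) := by
    exact_mod_cast Nat.choose_pos (by omega)
  have pad_ge := le_weylDim_pad hb (d + 1)
  rw [show k + 1 + 2 + (d + 1) = k + 1 + 1 + (d + 2) by ring,
    show (k + 1 : ℕ) + (2 : ℝ) = k + 3 by push_cast; ring] at pad_ge
  rw [← ENNReal.ofReal_mul (by positivity), ← ENNReal.ofReal_mul (by positivity)]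
  refine ENNReal.ofReal_le_ofReal ((inv_anti₀ (by positivity) pad_ge).trans_eq ?_)
  rw [mul_inv, inv_div, div_eq_mul_inv]

-- Group the weights by the position of their last nonzero coordinate.
lemma totalZeta_middleWeights_le : totalZeta (⋃ k, Sigma.mk (k + 2) '' middleWeights k) ≤
    ∑' k : ℕ, ENNReal.ofReal (2 / (k + 1)) * zeta (lastWeights k) := by
  have subset_range : (⋃ k, Sigma.mk (k + 2) '' middleWeights k) ⊆
      Set.range fun p : Σ k, lastWeights k × ℕ ↦
        (⟨p.1 + 2 + (p.2.2 + 1), pad p.2.1.1 (p.2.2 + 1)⟩ : Weight) := by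
    simp only [Set.iUnion_subset_iff, Set.image_subset_iff]
    intro n l hl
    obtain ⟨k, b, hb, d, eq_pad⟩ := exists_eq_pad_of_mem_middleWeights hl
    exact ⟨⟨k, ⟨b, hb⟩, d⟩, eq_pad.symm⟩
  calc totalZeta (⋃ k, Sigma.mk (k + 2) '' middleWeights k)
      ≤ ∑' p : Σ k, lastWeights k × ℕ, ENNReal.ofReal (weylDim (pad p.2.1.1 (p.2.2 + 1)))⁻¹ :=
        tsum_subtype_le_tsum_comp subset_range fun q ↦ ENNReal.ofReal (weylDim q.2)⁻¹
    _ = ∑' (k : ℕ) (b : lastWeights k) (d : ℕ), ENNReal.ofReal (weylDim (pad b.1 (d + 1)))⁻¹ := by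
        simp only [ENNReal.tsum_sigma', ENNReal.tsum_prod']
    _ ≤ ∑' k : ℕ, zeta (lastWeights k) * (ENNReal.ofReal (k + 3) *
          ENNReal.ofReal (2 / ((k + 1) * (k + 3)))) := by
        gcongr with k
        rw [zeta, ← ENNReal.tsum_mul_right]
        gcongr with b
        grw [inv_weylDim_pad_le b.2, ENNReal.tsum_mul_left, ENNReal.tsum_mul_left,
          tsum_inv_choose_add_two_le k.succ_pos,
          show ((k + 1 : ℕ) + 2 : ℝ) = k + 3 by push_cast; ring, Nat.cast_add_one]
    _ = ∑' k : ℕ, ENNReal.ofReal (2 / (k + 1)) * zeta (lastWeights k) := by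
        refine tsum_congr fun k ↦ ?_
        rw [← ENNReal.ofReal_mul (by positivity), mul_comm]
        congr 2
        field_simp

lemma totalZeta_axis_le : totalZeta (⋃ k : ℕ, Sigma.mk (k + 2) '' Set.range fun x ↦
    Pi.single 0 (x + 2)) ≤ ENNReal.ofReal 2 := by
  calc _ ≤ _ := totalZeta_iUnion_le (r := (· + 2)) _
    _ ≤ ∑' k : ℕ, ENNReal.ofReal 2 * ENNReal.ofReal ((1 + k) * (1 + k + 1) : ℝ)⁻¹ := by
        gcongr with k
        grw [zeta_range_single_zero_le, tsum_inv_choose_add_two_le k.succ_pos,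
          ← ENNReal.ofReal_mul zero_le_two, ← div_eq_mul_inv]
        push_cast
        gcongr ENNReal.ofReal (_ / (?_ * ?_)) <;> linarith
    _ ≤ ENNReal.ofReal 2 := by
        grw [ENNReal.tsum_mul_left, tsum_inv_mul_add_one_le one_pos]
        simp

/-- The nonzero highest weights for `SL_2(ℂ)`. -/
def rankOneWeight (j : ℕ) : Weight := ⟨1, Pi.single 0 (j + 1)⟩

/-- The highest weight of the standard representation of `SL_{j+2}(ℂ)`. -/
def firstFundamental (j : ℕ) : Weight := ⟨j + 1, Pi.single 0 1⟩

/-- The highest weight of the dual of the standard representation of `SL_{j+2}(ℂ)`. -/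
def lastFundamental (j : ℕ) : Weight := ⟨j + 1, Pi.single (Fin.last j) 1⟩

/-- The nonzero weights outside the three one-parameter families `rankOneWeight`, `firstFundamental`
and `lastFundamental`. -/
def genericWeights : Set Weight :=
  (⋃ k, Sigma.mk (k + 2) '' Set.range fun x ↦ Pi.single 0 (x + 2)) ∪
    ((⋃ k, Sigma.mk (k + 2) '' middleWeights k) ∪
      ⋃ k, Sigma.mk (k + 2) '' properLastWeights k)

lemma totalZeta_genericWeights_le : totalZeta genericWeights ≤ 39 := by
  calc totalZeta genericWeights
      ≤ ENNReal.ofReal 2 + (∑' k : ℕ, ENNReal.ofReal (2 / (k + 1)) * zeta (lastWeights k) +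
          ∑' k, zeta (properLastWeights k)) := by
        grw [genericWeights, totalZeta_union_le, totalZeta_union_le, totalZeta_axis_le,
          totalZeta_middleWeights_le, totalZeta_iUnion_le]
    _ = ENNReal.ofReal 2 + zeta (properLastWeights 0) + ∑' k : ℕ,
          (ENNReal.ofReal (2 / (k + 1)) * zeta (lastWeights k) +
            zeta (properLastWeights (k + 1))) := by
        rw [ENNReal.tsum_add,
          tsum_eq_zero_add' (f := fun k ↦ zeta (properLastWeights k)) ENNReal.summable]
        ring
    _ ≤ ENNReal.ofReal 2 + ENNReal.ofReal 4 + ENNReal.ofReal 33 := by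
        grw [tsum_zeta_lastWeights_add_zeta_properLastWeights_le, ← zeta_lastWeights_zero_le]
        gcongr
        exact Set.sdiff_subset
    _ ≤ 39 := by norm_num

lemma finite_and_ncard_le_of_totalZeta_le {E : Set Weight} {c : ℕ} (hE : totalZeta E ≤ c) (N : ℕ) :
    {q ∈ E | weylDim q.2 ≤ N}.Finite ∧ {q ∈ E | weylDim q.2 ≤ N}.ncard ≤ c * N := by
  obtain ⟨hfin, hcard⟩ := ENNReal.finset_card_const_le_le_of_tsum_le (ENNReal.natCast_ne_top c) hE
    (ENNReal.inv_ne_zero.2 (ENNReal.natCast_ne_top N))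
  set T : Set E := {q | (N : ℝ≥0∞)⁻¹ ≤ ENNReal.ofReal (weylDim q.1.2)⁻¹}
  have image_eq : {q ∈ E | weylDim q.2 ≤ N} = Subtype.val '' T := by
    ext q
    rw [Set.mem_sep_iff, and_comm]
    simp [T, ENNReal.ofReal_inv_of_pos (weylDim_pos _), -Sigma.exists]
  refine ⟨image_eq ▸ hfin.image _, ?_⟩
  rw [image_eq, Set.ncard_image_of_injective _ Subtype.val_injective,
    Set.ncard_eq_toFinset_card T hfin]
  rw [div_eq_mul_inv, inv_inv] at hcard
  exact_mod_cast hcard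

lemma finite_and_ncard_range_le {f : ℕ → Weight} (hf : ∀ j : ℕ, (j + 2 : ℝ) ≤ weylDim (f j).2)
    (N : ℕ) : {q ∈ Set.range f | weylDim q.2 ≤ N}.Finite ∧
      {q ∈ Set.range f | weylDim q.2 ≤ N}.ncard ≤ N - 1 := by
  have subset_image : {q ∈ Set.range f | weylDim q.2 ≤ N} ⊆ f '' Set.Iio (N - 1) := by
    rintro _ ⟨⟨j, rfl⟩, hj⟩
    have : j + 2 ≤ N := by exact_mod_cast (hf j).trans hj
    exact ⟨j, Set.mem_Iio.2 (by omega), rfl⟩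
  have finite_image : (f '' Set.Iio (N - 1)).Finite := (Set.finite_Iio _).image f
  refine ⟨finite_image.subset subset_image, (Set.ncard_le_ncard subset_image finite_image).trans ?_⟩
  exact (Set.ncard_image_le (Set.finite_Iio _)).trans (by simp)

lemma compl_zero_subset_union : {q : Weight | q.2 ≠ 0} ⊆
    Set.range rankOneWeight ∪ (Set.range firstFundamental ∪
      (Set.range lastFundamental ∪ genericWeights)) := by
  rintro ⟨_ | _ | k, l⟩ hl
  · exact absurd (Subsingleton.elim l 0) hl
  · obtain ⟨x, hx⟩ : ∃ x, l 0 = x + 1 := Nat.exists_eq_succ_of_ne_zero fun h ↦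
      hl (funext (Fin.forall_fin_one.2 h))
    exact .inl ⟨x, congrArg _ (funext (Fin.forall_fin_one.2 (by rw [Pi.single_eq_same, hx])))⟩
  · obtain ⟨_ | x, rfl⟩ | hlast | hmiddle := compl_zero_subset k hl
    · exact .inr (.inl ⟨k + 1, rfl⟩)
    · exact .inr (.inr (.inr (.inl (Set.mem_iUnion.2 ⟨k, _, ⟨x, rfl⟩, rfl⟩))))
    · by_cases hfund : l = Pi.single (Fin.last _) 1
      · exact .inr (.inr (.inl ⟨k + 1, congrArg _ hfund.symm⟩))
      · exact .inr (.inr (.inr (.inr (.inr (Set.mem_iUnion.2 ⟨k, l, ⟨hlast, hfund⟩, rfl⟩)))))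
    · exact .inr (.inr (.inr (.inr (.inl (Set.mem_iUnion.2 ⟨k, l, hmiddle, rfl⟩)))))

lemma add_two_le_weylDim_rankOneWeight (j : ℕ) : (j + 2 : ℝ) ≤ weylDim (rankOneWeight j).2 :=
  le_of_eq_of_le (by rw [zero_add, Nat.choose_one_right]; push_cast; ring)
    (choose_le_weylDim_single_zero 0 (j + 1))

lemma add_two_le_weylDim_firstFundamental (j : ℕ) : (j + 2 : ℝ) ≤ weylDim (firstFundamental j).2 :=
  le_of_eq_of_le (by rw [Nat.choose_succ_self_right]; push_cast; ring)
    (choose_le_weylDim_single_zero j 1)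

lemma finite_and_ncard_nonzero_le (N : ℕ) : {q : Weight | q.2 ≠ 0 ∧ weylDim q.2 ≤ N}.Finite ∧
    {q : Weight | q.2 ≠ 0 ∧ weylDim q.2 ≤ N}.ncard ≤ 3 * (N - 1) + 39 * N := by
  obtain ⟨finite_one, ncard_one⟩ :=
    finite_and_ncard_range_le add_two_le_weylDim_rankOneWeight N
  obtain ⟨finite_first, ncard_first⟩ :=
    finite_and_ncard_range_le add_two_le_weylDim_firstFundamental N
  obtain ⟨finite_last, ncard_last⟩ :=
    finite_and_ncard_range_le (f := lastFundamental) add_two_le_weylDim_single_last N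
  obtain ⟨finite_generic, ncard_generic⟩ :=
    finite_and_ncard_le_of_totalZeta_le (c := 39) (mod_cast totalZeta_genericWeights_le) N
  have subset_union : {q : Weight | q.2 ≠ 0 ∧ weylDim q.2 ≤ N} ⊆
      {q ∈ Set.range rankOneWeight | weylDim q.2 ≤ N} ∪
        ({q ∈ Set.range firstFundamental | weylDim q.2 ≤ N} ∪
          ({q ∈ Set.range lastFundamental | weylDim q.2 ≤ N} ∪
            {q ∈ genericWeights | weylDim q.2 ≤ N})) := fun q ⟨hq, hdim⟩ ↦
    (compl_zero_subset_union hq).imp (⟨·, hdim⟩)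
      (Or.imp (⟨·, hdim⟩) (Or.imp (⟨·, hdim⟩) (⟨·, hdim⟩)))
  have finite_union := finite_one.union (finite_first.union (finite_last.union finite_generic))
  refine ⟨finite_union.subset subset_union, ?_⟩
  grw [Set.ncard_le_ncard subset_union finite_union, Set.ncard_union_le, Set.ncard_union_le,
    Set.ncard_union_le, ncard_one, ncard_first, ncard_last, ncard_generic]
  omega

end Weight

section SLSet

/-- The highest weight `λ` of the tuple `a` of shifted coordinates `a i = λ i + 1` in an element of
`SLSet N`. -/
def toWeight (p : Σ k : ℕ, Fin (k + 1) → ℕ) : Weight := ⟨p.1 + 1, fun i ↦ p.2 i - 1⟩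

lemma injOn_toWeight (N : ℕ) : Set.InjOn toWeight (SLSet N) := by
  rintro ⟨k, a⟩ ⟨ha, -⟩ ⟨k', a'⟩ ⟨ha', -⟩ h
  obtain rfl : k = k' := Nat.succ_injective (congrArg Sigma.fst h)
  have sub_eq : (fun i ↦ a i - 1) = fun i ↦ a' i - 1 := eq_of_heq (Sigma.mk.inj h).2
  exact congrArg _ (funext fun i ↦ Nat.sub_one_cancel (ha i) (ha' i) (congrFun sub_eq i))

lemma mapsTo_toWeight (N : ℕ) :
    Set.MapsTo toWeight (SLSet N) {q | q.2 ≠ 0 ∧ weylDim q.2 ≤ N} := by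
  rintro ⟨k, a⟩ ⟨one_le, ⟨i, hi⟩, hdim⟩
  refine ⟨fun h ↦ ?_, ?_⟩
  · exact (Nat.sub_pos_of_lt hi).ne' (congrFun h i)
  · have add_sub : (fun i ↦ a i - 1 + 1) = a := funext fun i ↦ Nat.sub_add_cancel (one_le i)
    rw [toWeight, weylDim, add_sub]
    exact_mod_cast hdim

end SLSet

/-- `R_N(SL) < 43 N`. -/
theorem sl_count_lt (N : ℕ) (hN : 0 < N) :
    (SLSet N).Finite ∧ (SLSet N).ncard < 43 * N := by
  obtain ⟨finite_weights, ncard_weights_le⟩ := finite_and_ncard_nonzero_le N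
  refine ⟨.of_injOn (mapsTo_toWeight N) (injOn_toWeight N) finite_weights, ?_⟩
  calc (SLSet N).ncard
      ≤ {q : Weight | q.2 ≠ 0 ∧ weylDim q.2 ≤ N}.ncard :=
        Set.ncard_le_ncard_of_injOn toWeight (mapsTo_toWeight N) (injOn_toWeight N) finite_weights
    _ ≤ 3 * (N - 1) + 39 * N := ncard_weights_le
    _ < 43 * N := by omega
end

section
/- For every sufficiently large positive integer N, R_N(SL) ≤ 34·N − 27·√N. -/
/-!
Each factor of the Weyl dimension formula is the mean of the `a t` over an interval, so AM-GM gives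
`∏ t, a t ^ e t ≤ dim a`, where `e t`, the sum of the reciprocal lengths of the intervals
containing `t`, is the sum of the entries of a rectangular Hilbert matrix. Sums of `1 / dim` over
boxes of tuples are therefore bounded by products of tails of zeta series. If
`r ≤ min (t + 1) (k - t)`, then `e t ≥ r * log (k + 1) + min (t + 1) (k - t) / 2 - O_r(1)`. Leave
out the trivial tuple and those of the standard representation and its dual: the remaining tuples
of rank `k ≥ 2` have an entry at least `3`, two entries at least `2`, or an interior entry at
least `2`, and the sum of their `1 / dim` is `O(k ^ (-log 3))`, as `log 3 ≤ 2 * log 2`. Since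
`log 3 > 1`, the sum over all ranks converges, so these tuples contribute `o(N)`. Rank one, the
standard representations and their duals contribute at most `N` each, hence `R_N(SL) ≤ c * N`
eventually, for every `c > 3`.
-/

open Filter Finset
open scoped ENNReal NNReal

section HilbertSum

/-- The sum of the entries `1 / (p + q + 1)` of the `P × Q` Hilbert matrix. With `P = t + 1` and
`Q = k - t` the entries are the reciprocal lengths of the intervals `[i, j) ⊆ [0, k)` containing
`t`, indexed by `p = t - i` and `q = j - t - 1`. -/
noncomputable def hilbertSum (P Q : ℕ) : ℝ :=
  ∑ p ∈ range P, ∑ q ∈ range Q, ((p : ℝ) + q + 1)⁻¹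

lemma hilbertSum_comm (P Q : ℕ) : hilbertSum P Q = hilbertSum Q P := by
  unfold hilbertSum
  rw [sum_comm]
  simp only [add_comm]

lemma hilbertSum_mono {P P' Q Q' : ℕ} (hP : P ≤ P') (hQ : Q ≤ Q') :
    hilbertSum P Q ≤ hilbertSum P' Q' :=
  calc hilbertSum P Q ≤ ∑ p ∈ range P, ∑ q ∈ range Q', ((p : ℝ) + q + 1)⁻¹ :=
        sum_le_sum fun p _ => sum_le_sum_of_subset_of_nonneg (range_mono hQ)
          fun q _ _ => by positivity
    _ ≤ hilbertSum P' Q' :=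
        sum_le_sum_of_subset_of_nonneg (range_mono hP) fun p _ _ => by positivity

lemma three_halves_le_hilbertSum {P Q : ℕ} (hP : 1 ≤ P) (hQ : 1 ≤ Q) (hPQ : 3 ≤ P + Q) :
    3 / 2 ≤ hilbertSum P Q := by
  wlog h : P ≤ Q generalizing P Q
  · rw [hilbertSum_comm]
    exact this hQ hP (by omega) (by omega)
  calc (3 / 2 : ℝ) = hilbertSum 1 2 := by norm_num [hilbertSum, sum_range_succ]
    _ ≤ hilbertSum P Q := hilbertSum_mono hP (by omega)

lemma log_sub_log_le_sum_inv (p Q : ℕ) :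
    Real.log (p + Q + 1) - Real.log (p + 1) ≤ ∑ q ∈ range Q, ((p : ℝ) + q + 1)⁻¹ := by
  induction Q with
  | zero => simp
  | succ Q ih =>
    have hstep : Real.log (p + Q + 2) - Real.log (p + Q + 1) ≤ ((p : ℝ) + Q + 1)⁻¹ := by
      rw [← Real.log_div (by positivity) (by positivity)]
      refine (Real.log_le_sub_one_of_pos (by positivity)).trans_eq ?_
      field_simp
      ring
    rw [sum_range_succ]
    push_cast
    rw [show (p : ℝ) + (Q + 1) + 1 = p + Q + 2 by ring]
    linarith

lemma log_le_sum_inv_add (p Q : ℕ) :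
    Real.log Q ≤ ∑ q ∈ range Q, ((p : ℝ) + q + 1)⁻¹ + p := by
  rcases Q.eq_zero_or_pos with rfl | hQ
  · simp
  · have hQ' : (0 : ℝ) < Q := by exact_mod_cast hQ
    have hlog : Real.log Q ≤ Real.log (p + Q + 1) := Real.log_le_log hQ' (by linarith)
    have hp : Real.log (p + 1) ≤ p := by
      linarith [Real.log_le_sub_one_of_pos (show (0 : ℝ) < p + 1 by positivity)]
    linarith [log_sub_log_le_sum_inv p Q]

lemma half_le_sum_inv {p Q : ℕ} (hpQ : p < Q) :
    1 / 2 ≤ ∑ q ∈ range Q, ((p : ℝ) + q + 1)⁻¹ := by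
  have hQ : (0 : ℝ) < Q := by exact_mod_cast (by omega : 0 < Q)
  calc (1 / 2 : ℝ) = ∑ _q ∈ range Q, (2 * (Q : ℝ))⁻¹ := by
        rw [sum_const, card_range, nsmul_eq_mul]
        field_simp
    _ ≤ ∑ q ∈ range Q, ((p : ℝ) + q + 1)⁻¹ := sum_le_sum fun q hq => by
        have hq' : q < Q := mem_range.1 hq
        have : (p : ℝ) + q + 1 ≤ 2 * Q := by exact_mod_cast (by omega : p + q + 1 ≤ 2 * Q)
        gcongr

/-- The first `r` rows contribute a logarithm each, the remaining ones at least `1 / 2` each. -/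
lemma mul_log_add_min_le_hilbertSum {r P Q : ℕ} (hr : r ≤ min P Q) :
    r * Real.log (P + Q) + (min P Q : ℕ) / 2 ≤ hilbertSum P Q + r * (r + 2) := by
  wlog hPQ : P ≤ Q generalizing P Q
  · rw [hilbertSum_comm, add_comm (P : ℝ), min_comm]
    exact this (by rwa [min_comm]) (by omega)
  rw [min_eq_left hPQ] at hr ⊢
  rcases r.eq_zero_or_pos with rfl | hr0
  · have h : ∑ _p ∈ range P, (1 / 2 : ℝ) ≤ hilbertSum P Q :=
      sum_le_sum fun p hp => half_le_sum_inv ((mem_range.1 hp).trans_le hPQ)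
    rw [sum_const, card_range, nsmul_eq_mul] at h
    simpa [div_eq_mul_inv] using h
  have hQ : (0 : ℝ) < Q := by exact_mod_cast (by omega : 0 < Q)
  have hlog : Real.log (P + Q) ≤ Real.log Q + 1 := by
    have hPQ' : (P : ℝ) ≤ Q := by exact_mod_cast hPQ
    calc Real.log (P + Q) ≤ Real.log (2 * Q) := Real.log_le_log (by positivity) (by linarith)
      _ = Real.log 2 + Real.log Q := Real.log_mul (by norm_num) hQ.ne'
      _ ≤ Real.log Q + 1 := by linarith [Real.log_two_lt_d9]
  have hfirst : ∑ _p ∈ range r, (Real.log Q - r) ≤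
      ∑ p ∈ range r, ∑ q ∈ range Q, ((p : ℝ) + q + 1)⁻¹ := sum_le_sum fun p hp => by
    have hpr : (p : ℝ) ≤ r := by exact_mod_cast (mem_range.1 hp).le
    linarith [log_le_sum_inv_add p Q]
  have hrest : ∑ _p ∈ Ico r P, (1 / 2 : ℝ) ≤
      ∑ p ∈ Ico r P, ∑ q ∈ range Q, ((p : ℝ) + q + 1)⁻¹ :=
    sum_le_sum fun p hp => half_le_sum_inv ((mem_Ico.1 hp).2.trans_le hPQ)
  have hsplit : hilbertSum P Q = ∑ p ∈ range r, ∑ q ∈ range Q, ((p : ℝ) + q + 1)⁻¹ +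
      ∑ p ∈ Ico r P, ∑ q ∈ range Q, ((p : ℝ) + q + 1)⁻¹ :=
    (sum_range_add_sum_Ico _ hr).symm
  rw [sum_const, card_range, nsmul_eq_mul] at hfirst
  rw [sum_const, Nat.card_Ico, nsmul_eq_mul, Nat.cast_sub hr] at hrest
  nlinarith [mul_le_mul_of_nonneg_left hlog (Nat.cast_nonneg (α := ℝ) r)]

end HilbertSum

section WeylDimension

variable {k : ℕ}

/-- The sequence `a` extended by zero to all of `ℕ`, so that the factors of the Weyl dimension
formula become sums over intervals of natural numbers. -/
def extendByZero (a : Fin k → ℕ) (t : ℕ) : ℝ := if h : t < k then (a ⟨t, h⟩ : ℝ) else 0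

/-- The arithmetic mean of `g` over the interval `[i, j)`, a factor of the Weyl dimension formula;
meaningful for `i < j` only. -/
noncomputable def intervalMean (g : ℕ → ℝ) (i j : ℕ) : ℝ := (∑ t ∈ Ico i j, g t) / ((j : ℝ) - i)

@[simp]
lemma extendByZero_val (a : Fin k → ℕ) (t : Fin k) : extendByZero a t = a t := by
  simp [extendByZero]

lemma extendByZero_nonneg (a : Fin k → ℕ) (t : ℕ) : 0 ≤ extendByZero a t := by
  unfold extendByZero
  split <;> positivity

lemma PA_eq_prod_intervalMean (a : Fin k → ℕ) :
    (PA k a : ℝ) =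
      ∏ i ∈ range (k + 1), ∏ j ∈ Ico (i + 1) (k + 1), intervalMean (extendByZero a) i j := by
  unfold PA
  rw [Rat.cast_prod]
  refine prod_congr rfl fun i _ => ?_
  have hIco : Ico (i + 1) (k + 1) = {j ∈ range (k + 1) | i < j} := by
    ext j
    simp only [mem_Ico, mem_filter, mem_range]
    omega
  rw [Rat.cast_prod, hIco, prod_filter]
  refine prod_congr rfl fun j _ => ?_
  split_ifs
  · simp only [intervalMean, extendByZero]
    push_cast
    congr 1
    refine sum_congr rfl fun t _ => ?_
    split_ifs <;> simp
  · exact Rat.cast_one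

lemma prod_rpow_le_intervalMean {g : ℕ → ℝ} (hg : ∀ t, 0 ≤ g t) {i j : ℕ} (hij : i < j) :
    ∏ t ∈ Ico i j, g t ^ ((j : ℝ) - i)⁻¹ ≤ intervalMean g i j := by
  have hpos : (0 : ℝ) < (j : ℝ) - i := sub_pos.2 (by exact_mod_cast hij)
  have hsum : ∑ _t ∈ Ico i j, ((j : ℝ) - i)⁻¹ = 1 := by
    rw [sum_const, Nat.card_Ico, nsmul_eq_mul, Nat.cast_sub hij.le, mul_inv_cancel₀ hpos.ne']
  refine (Real.geom_mean_le_arith_mean_weighted _ _ g (fun _ _ => by positivity) hsum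
    fun t _ => hg t).trans_eq ?_
  rw [← mul_sum, intervalMean, inv_mul_eq_div]

lemma sum_inv_length_eq_hilbertSum (k t : ℕ) :
    ∑ i ∈ range (t + 1), ∑ j ∈ Ico (t + 1) (k + 1), ((j : ℝ) - i)⁻¹ =
      hilbertSum (t + 1) (k - t) := by
  rw [hilbertSum, ← sum_range_reflect]
  refine sum_congr rfl fun p hp => ?_
  rw [sum_Ico_eq_sum_range, Nat.add_sub_add_right]
  refine sum_congr rfl fun q _ => ?_
  have hp' : p ≤ t := Nat.lt_succ_iff.1 (mem_range.1 hp)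
  rw [show t + 1 - 1 - p = t - p by omega]
  push_cast [Nat.cast_sub hp']
  ring_nf

lemma rpow_hilbertSum_eq_prod {x : ℝ} (hx : 0 ≤ x) (k t : ℕ) :
    x ^ hilbertSum (t + 1) (k - t) =
      ∏ i ∈ range (t + 1), ∏ j ∈ Ico (t + 1) (k + 1), x ^ ((j : ℝ) - i)⁻¹ := by
  have hlen : ∀ i ∈ range (t + 1), ∀ j ∈ Ico (t + 1) (k + 1), 0 ≤ ((j : ℝ) - i)⁻¹ := by
    intro i hi j hj
    have : i ≤ j := (mem_range.1 hi).le.trans (mem_Ico.1 hj).1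
    exact inv_nonneg.2 (sub_nonneg.2 (by exact_mod_cast this))
  rw [← sum_inv_length_eq_hilbertSum k t,
    Real.rpow_sum_of_nonneg hx fun i hi => sum_nonneg (hlen i hi)]
  exact prod_congr rfl fun i hi => Real.rpow_sum_of_nonneg hx (hlen i hi)

/-- AM-GM for every factor of the Weyl dimension formula. -/
theorem prod_rpow_hilbertSum_le_PA (a : Fin k → ℕ) :
    ∏ t : Fin k, (a t : ℝ) ^ hilbertSum (t + 1) (k - t) ≤ PA k a := by
  set g := extendByZero a with hg
  have hg0 : ∀ t, 0 ≤ g t := extendByZero_nonneg a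
  calc ∏ t : Fin k, (a t : ℝ) ^ hilbertSum (t + 1) (k - t)
      = ∏ t ∈ range k, g t ^ hilbertSum (t + 1) (k - t) := by
        rw [← Fin.prod_univ_eq_prod_range fun t => g t ^ hilbertSum (t + 1) (k - t)]
        simp only [hg, extendByZero_val]
    _ = ∏ t ∈ range k, ∏ i ∈ range (t + 1), ∏ j ∈ Ico (t + 1) (k + 1),
          g t ^ ((j : ℝ) - i)⁻¹ :=
        prod_congr rfl fun t _ => rpow_hilbertSum_eq_prod (hg0 t) k t
    _ = ∏ i ∈ range (k + 1), ∏ t ∈ Ico i k, ∏ j ∈ Ico (t + 1) (k + 1),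
          g t ^ ((j : ℝ) - i)⁻¹ := prod_comm' fun t i => by
        simp only [mem_range, mem_Ico]
        omega
    _ = ∏ i ∈ range (k + 1), ∏ j ∈ Ico (i + 1) (k + 1), ∏ t ∈ Ico i j,
          g t ^ ((j : ℝ) - i)⁻¹ := prod_congr rfl fun i _ => prod_comm' fun t j => by
        simp only [mem_Ico]
        omega
    _ ≤ ∏ i ∈ range (k + 1), ∏ j ∈ Ico (i + 1) (k + 1), intervalMean g i j := by
        have hnonneg : ∀ i j, 0 ≤ ∏ t ∈ Ico i j, g t ^ ((j : ℝ) - i)⁻¹ := fun i j =>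
          prod_nonneg fun t _ => Real.rpow_nonneg (hg0 t) _
        exact prod_le_prod (fun i _ => prod_nonneg fun j _ => hnonneg i j) fun i _ =>
          prod_le_prod (fun j _ => hnonneg i j) fun j hj =>
            prod_rpow_le_intervalMean hg0 (mem_Ico.1 hj).1
    _ = PA k a := (PA_eq_prod_intervalMean a).symm

lemma PA_pos {a : Fin k → ℕ} (ha : ∀ t, 1 ≤ a t) : (0 : ℝ) < PA k a :=
  lt_of_lt_of_le (prod_pos fun t _ => Real.rpow_pos_of_pos (by exact_mod_cast ha t) _)
    (prod_rpow_hilbertSum_le_PA a)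

lemma div_le_intervalMean {g : ℕ → ℝ} (hg : ∀ t < k, 1 ≤ g t) {i j m : ℕ} (hjk : j ≤ k)
    (hm : 2 ≤ g m) (him : i ≤ m) (hmj : m < j) :
    ((j : ℝ) - i + 1) / ((j : ℝ) - i) ≤ intervalMean g i j := by
  have hlen : (0 : ℝ) < (j : ℝ) - i := sub_pos.2 (by exact_mod_cast him.trans_lt hmj)
  have hexcess : g m - 1 ≤ ∑ t ∈ Ico i j, (g t - 1) :=
    single_le_sum (f := fun t => g t - 1)
      (fun t ht => sub_nonneg.2 (hg t ((mem_Ico.1 ht).2.trans_le hjk))) (mem_Ico.2 ⟨him, hmj⟩)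
  rw [sum_sub_distrib, sum_const, Nat.card_Ico, nsmul_eq_mul, mul_one,
    Nat.cast_sub (him.trans hmj.le)] at hexcess
  unfold intervalMean
  gcongr
  linarith

lemma one_le_intervalMean {g : ℕ → ℝ} (hg : ∀ t < k, 1 ≤ g t) {i j : ℕ} (hjk : j ≤ k)
    (hij : i < j) : 1 ≤ intervalMean g i j := by
  have hlen : (0 : ℝ) < (j : ℝ) - i := sub_pos.2 (by exact_mod_cast hij)
  have hsum : ∑ _t ∈ Ico i j, (1 : ℝ) ≤ ∑ t ∈ Ico i j, g t :=
    sum_le_sum fun t ht => hg t ((mem_Ico.1 ht).2.trans_le hjk)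
  rw [sum_const, Nat.card_Ico, nsmul_eq_mul, mul_one, Nat.cast_sub hij.le] at hsum
  exact (one_le_div hlen).2 hsum

lemma prod_intervalMean_le_of_subset {g : ℕ → ℝ} (hg : ∀ t < k, 1 ≤ g t) {i : ℕ} {s : Finset ℕ}
    (hs : s ⊆ Ico (i + 1) (k + 1)) :
    ∏ j ∈ s, intervalMean g i j ≤ ∏ j ∈ Ico (i + 1) (k + 1), intervalMean g i j := by
  have hone : ∀ j ∈ Ico (i + 1) (k + 1), 1 ≤ intervalMean g i j := fun j hj =>
    one_le_intervalMean hg (Nat.lt_succ_iff.1 (mem_Ico.1 hj).2) (mem_Ico.1 hj).1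
  exact prod_le_prod_of_subset_of_one_le hs (fun j hj => zero_le_one.trans (hone j (hs hj)))
    fun j hj _ => hone j hj

lemma prod_Ico_succ_div_self {m n : ℕ} (hmn : m ≤ n) :
    ∏ j ∈ Ico (m + 1) (n + 1), ((j : ℝ) + 1) / j = (n + 1) / (m + 1) := by
  induction n, hmn using Nat.le_induction with
  | base => rw [Ico_self, prod_empty, div_self (by positivity)]
  | succ n hmn ih =>
    rw [prod_Ico_succ_top (by omega), ih]
    push_cast
    field_simp

lemma prod_range_sub_div (m : ℕ) :
    ∏ i ∈ range m, ((m : ℝ) + 1 - i) / (m - i) = m + 1 := by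
  rw [← prod_range_reflect]
  calc ∏ i ∈ range m, ((m : ℝ) + 1 - (m - 1 - i : ℕ)) / (m - (m - 1 - i : ℕ))
      = ∏ i ∈ range (m + 1 - 1), (((1 + i : ℕ) : ℝ) + 1) / (1 + i : ℕ) :=
        prod_congr rfl fun i hi => by
          have hi' : i < m := mem_range.1 hi
          rw [Nat.sub_sub, Nat.cast_sub (by omega)]
          ring
    _ = ∏ j ∈ Ico (0 + 1) (m + 1), ((j : ℝ) + 1) / j :=
        (prod_Ico_eq_prod_range (fun j : ℕ => ((j : ℝ) + 1) / j) 1 (m + 1)).symm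
    _ = m + 1 := by rw [prod_Ico_succ_div_self m.zero_le, Nat.cast_zero, zero_add, div_one]

lemma div_le_prod_intervalMean_zero {g : ℕ → ℝ} (hg : ∀ t < k, 1 ≤ g t) {m : ℕ} (hmk : m < k)
    (hm : 2 ≤ g m) :
    ((k : ℝ) + 1) / (m + 1) ≤ ∏ j ∈ Ico (0 + 1) (k + 1), intervalMean g 0 j :=
  calc ((k : ℝ) + 1) / (m + 1) = ∏ j ∈ Ico (m + 1) (k + 1), ((j : ℝ) + 1) / j :=
        (prod_Ico_succ_div_self hmk.le).symm
    _ ≤ ∏ j ∈ Ico (m + 1) (k + 1), intervalMean g 0 j :=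
        prod_le_prod (fun _ _ => by positivity) fun j hj => by
          have hj' := mem_Ico.1 hj
          simpa using div_le_intervalMean hg (Nat.lt_succ_iff.1 hj'.2) hm m.zero_le hj'.1
    _ ≤ _ := prod_intervalMean_le_of_subset hg (Ico_subset_Ico_left (by omega))

lemma div_le_prod_intervalMean_succ {g : ℕ → ℝ} (hg : ∀ t < k, 1 ≤ g t) {i m : ℕ} (him : i < m)
    (hmk : m < k) (hm : 2 ≤ g m) :
    ((m : ℝ) + 1 - i) / (m - i) ≤
      ∏ j ∈ Ico (i + 1 + 1) (k + 1), intervalMean g (i + 1) j :=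
  calc ((m : ℝ) + 1 - i) / (m - i)
      = (((m + 1 : ℕ) : ℝ) - (i + 1 : ℕ) + 1) / (((m + 1 : ℕ) : ℝ) - (i + 1 : ℕ)) := by
        push_cast
        ring
    _ ≤ ∏ j ∈ {m + 1}, intervalMean g (i + 1) j := by
        rw [prod_singleton]
        exact div_le_intervalMean hg hmk hm him m.lt_succ_self
    _ ≤ _ := prod_intervalMean_le_of_subset hg
        (singleton_subset_iff.2 (mem_Ico.2 ⟨by omega, by omega⟩))

/-- It suffices to keep the intervals `[0, j)` with `m < j` and `[i, m + 1)` with `0 < i ≤ m`. -/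
theorem succ_le_PA {a : Fin k → ℕ} (ha : ∀ t, 1 ≤ a t) {m : Fin k} (hm : 2 ≤ a m) :
    (k : ℝ) + 1 ≤ PA k a := by
  set g := extendByZero a with hg
  have hg1 : ∀ t < k, 1 ≤ g t := fun t ht => by simpa [hg, extendByZero, ht] using ha ⟨t, ht⟩
  have hgm : 2 ≤ g m := by
    rw [hg, extendByZero_val]
    exact_mod_cast hm
  set row := fun i => ∏ j ∈ Ico (i + 1) (k + 1), intervalMean g i j
  have hone : ∀ i, 1 ≤ row i := fun i => by
    simpa using prod_intervalMean_le_of_subset hg1 (empty_subset (Ico (i + 1) (k + 1)))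
  calc (k : ℝ) + 1 = ((k : ℝ) + 1) / (m + 1) * ∏ i ∈ range m, ((m : ℝ) + 1 - i) / (m - i) := by
        rw [prod_range_sub_div]
        field_simp
    _ ≤ row 0 * ∏ i ∈ range m, row (i + 1) := by
        refine mul_le_mul (div_le_prod_intervalMean_zero hg1 m.2 hgm)
          (prod_le_prod (fun i hi => ?_) fun i hi =>
            div_le_prod_intervalMean_succ hg1 (mem_range.1 hi) m.2 hgm) ?_
          (zero_le_one.trans (hone 0))
        · have : (i : ℝ) ≤ m := by exact_mod_cast (mem_range.1 hi).le
          exact div_nonneg (by linarith) (by linarith)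
        · rw [prod_range_sub_div]
          positivity
    _ = ∏ i ∈ range (m + 1), row i := (prod_range_succ' row m).symm ▸ mul_comm _ _
    _ ≤ ∏ i ∈ range (k + 1), row i :=
        prod_le_prod_of_subset_of_one_le (range_mono (by omega))
          (fun i _ => zero_le_one.trans (hone i)) fun i _ _ => hone i
    _ = PA k a := (PA_eq_prod_intervalMean a).symm

end WeylDimension

section ZetaTail

/-- The tail `∑_{x ≥ m} x ^ (-s)` of the zeta series, the one-variable factor of the sums of
reciprocal dimensions. -/
noncomputable def zetaTail (m : ℕ) (s : ℝ) : ℝ≥0∞ :=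
  ∑' x : Set.Ici m, ENNReal.ofReal (((x : ℕ) : ℝ) ^ (-s))

lemma zetaTail_one_le_one_add (s : ℝ) : zetaTail 1 s ≤ 1 + zetaTail 2 s := by
  have hsub : Set.Ici 1 ⊆ ({1} : Set ℕ) ∪ Set.Ici 2 := fun x hx => by
    simp only [Set.mem_union, Set.mem_singleton_iff, Set.mem_Ici] at hx ⊢
    omega
  set f : ℕ → ℝ≥0∞ := fun x => ENNReal.ofReal ((x : ℝ) ^ (-s)) with hf
  calc zetaTail 1 s ≤ ∑' x : ↑(({1} : Set ℕ) ∪ Set.Ici 2), f x := ENNReal.tsum_mono_subtype f hsub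
    _ ≤ ∑' x : ({1} : Set ℕ), f x + zetaTail 2 s := ENNReal.tsum_union_le f _ _
    _ = 1 + zetaTail 2 s := by
      rw [tsum_singleton]
      simp only [hf, Nat.cast_one, Real.one_rpow, ENNReal.ofReal_one]

lemma one_le_zetaTail_one (s : ℝ) : 1 ≤ zetaTail 1 s :=
  le_trans (by simp) (ENNReal.le_tsum (⟨1, Set.self_mem_Ici⟩ : Set.Ici 1))

lemma zetaTail_ne_top (m : ℕ) {s : ℝ} (hs : 1 < s) : zetaTail m s ≠ ∞ := by
  have hsum : Summable fun x : ℕ => (x : ℝ) ^ (-s) := Real.summable_nat_rpow.2 (by linarith)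
  exact (hsum.subtype (Set.Ici m)).tsum_ofReal_ne_top

lemma zetaTail_le_rpow_mul {m : ℕ} (hm : 1 ≤ m) {s₀ s : ℝ} (hs : s₀ ≤ s) :
    zetaTail m s ≤ ENNReal.ofReal ((m : ℝ) ^ (s₀ - s)) * zetaTail m s₀ := by
  rw [zetaTail, zetaTail, ← ENNReal.tsum_mul_left]
  refine ENNReal.tsum_le_tsum fun ⟨x, hx⟩ => ?_
  have hm0 : (0 : ℝ) < m := by exact_mod_cast hm
  have hmx : (m : ℝ) ≤ x := by exact_mod_cast hx
  rw [← ENNReal.ofReal_mul (by positivity)]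
  refine ENNReal.ofReal_le_ofReal ?_
  calc (x : ℝ) ^ (-s) = (x : ℝ) ^ (s₀ - s) * (x : ℝ) ^ (-s₀) := by
        rw [← Real.rpow_add (hm0.trans_le hmx)]
        ring_nf
    _ ≤ (m : ℝ) ^ (s₀ - s) * (x : ℝ) ^ (-s₀) := by
        gcongr ?_ * _
        exact Real.rpow_le_rpow_of_nonpos hm0 hmx (by linarith)

lemma exists_zetaTail_hilbertSum_le (r : ℕ) {m : ℕ} (hm : 1 ≤ m) :
    ∃ C : ℝ≥0, ∀ P Q : ℕ, 1 ≤ P → 1 ≤ Q → 3 ≤ P + Q → r ≤ min P Q →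
      zetaTail m (hilbertSum P Q) ≤
        C * ENNReal.ofReal ((P + Q : ℝ) ^ (-(r * Real.log m))) *
          ENNReal.ofReal ((m : ℝ) ^ (-(1 / 2 : ℝ))) ^ min P Q := by
  have hm1 : (1 : ℝ) ≤ m := by exact_mod_cast hm
  have hm0 : (0 : ℝ) < m := by linarith
  have hfin : ENNReal.ofReal ((m : ℝ) ^ (3 / 2 + (r : ℝ) * (r + 2))) * zetaTail m (3 / 2) ≠ ∞ :=
    ENNReal.mul_ne_top ENNReal.ofReal_ne_top (zetaTail_ne_top m (by norm_num))
  lift ENNReal.ofReal ((m : ℝ) ^ (3 / 2 + (r : ℝ) * (r + 2))) * zetaTail m (3 / 2) to ℝ≥0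
    using hfin with C hC
  refine ⟨C, fun P Q hP hQ hPQ hr => ?_⟩
  rw [hC]
  have hPQ0 : (0 : ℝ) < P + Q := by positivity
  have hpow : (m : ℝ) ^ (3 / 2 - hilbertSum P Q) ≤ (m : ℝ) ^ (3 / 2 + (r : ℝ) * (r + 2)) *
      (P + Q : ℝ) ^ (-(r * Real.log m)) * ((m : ℝ) ^ (-(1 / 2 : ℝ))) ^ min P Q := by
    have hlog : (P + Q : ℝ) ^ (-(r * Real.log m)) = (m : ℝ) ^ (-(r * Real.log (P + Q))) := by
      rw [Real.rpow_def_of_pos hPQ0, Real.rpow_def_of_pos hm0]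
      ring_nf
    rw [hlog, ← Real.rpow_natCast, ← Real.rpow_mul hm0.le, ← Real.rpow_add hm0,
      ← Real.rpow_add hm0]
    exact Real.rpow_le_rpow_of_exponent_le hm1 (by linarith [mul_log_add_min_le_hilbertSum hr])
  calc zetaTail m (hilbertSum P Q)
      ≤ ENNReal.ofReal ((m : ℝ) ^ (3 / 2 - hilbertSum P Q)) * zetaTail m (3 / 2) :=
        zetaTail_le_rpow_mul hm (three_halves_le_hilbertSum hP hQ hPQ)
    _ ≤ ENNReal.ofReal ((m : ℝ) ^ (3 / 2 + (r : ℝ) * (r + 2)) * (P + Q : ℝ) ^ (-(r * Real.log m)) *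
          ((m : ℝ) ^ (-(1 / 2 : ℝ))) ^ min P Q) * zetaTail m (3 / 2) := by gcongr
    _ = _ := by
        rw [ENNReal.ofReal_mul (by positivity), ENNReal.ofReal_mul (by positivity),
          ENNReal.ofReal_pow (by positivity)]
        ring

lemma cast_succ_add_cast_sub {k : ℕ} (t : Fin k) :
    (((t : ℕ) + 1 : ℕ) : ℝ) + (k - t : ℕ) = k + 1 := by
  exact_mod_cast (by omega : (t : ℕ) + 1 + (k - t) = k + 1)

lemma exists_zetaTail_le_rpow_neg_log {m : ℕ} (hm : 1 ≤ m) :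
    ∃ C : ℝ≥0, ∀ k : ℕ, 2 ≤ k → ∀ t : Fin k,
      zetaTail m (hilbertSum (t + 1) (k - t)) ≤
        C * ENNReal.ofReal ((k + 1 : ℝ) ^ (-Real.log m)) := by
  obtain ⟨C, hC⟩ := exists_zetaTail_hilbertSum_le 1 hm
  refine ⟨C, fun k hk t => ?_⟩
  have h := hC (t + 1) (k - t) (by omega) (by omega) (by omega) (by omega)
  have hρ : ENNReal.ofReal ((m : ℝ) ^ (-(1 / 2 : ℝ))) ≤ 1 :=
    ENNReal.ofReal_le_one.2
      (Real.rpow_le_one_of_one_le_of_nonpos (by exact_mod_cast hm) (by norm_num))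
  rw [cast_succ_add_cast_sub, Nat.cast_one, one_mul] at h
  exact h.trans (mul_le_of_le_one_right' (pow_le_one' hρ _))

lemma sum_pow_min_le {ρ : ℝ≥0∞} (k : ℕ) :
    ∑ t : Fin k, ρ ^ min ((t : ℕ) + 1) (k - t) ≤ 2 * (ρ * (1 - ρ)⁻¹) := by
  have hgeom : ∑ t : Fin k, ρ ^ ((t : ℕ) + 1) ≤ ρ * (1 - ρ)⁻¹ :=
    calc ∑ t : Fin k, ρ ^ ((t : ℕ) + 1) = ∑ t ∈ range k, ρ ^ (t + 1) :=
          Fin.sum_univ_eq_sum_range (fun t => ρ ^ (t + 1)) k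
      _ ≤ ∑' t, ρ ^ (t + 1) := ENNReal.sum_le_tsum _
      _ = ρ * (1 - ρ)⁻¹ := ENNReal.tsum_geometric_add_one ρ
  calc ∑ t : Fin k, ρ ^ min ((t : ℕ) + 1) (k - t)
      ≤ ∑ t : Fin k, (ρ ^ ((t : ℕ) + 1) + ρ ^ ((Fin.rev t : ℕ) + 1)) := sum_le_sum fun t _ => by
        have hrev : (Fin.rev t : ℕ) + 1 = k - t := by
          rw [Fin.val_rev]
          omega
        rw [hrev]
        rcases min_choice ((t : ℕ) + 1) (k - t) with h | h <;> rw [h]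
        exacts [le_self_add, le_add_self]
    _ = ∑ t : Fin k, ρ ^ ((t : ℕ) + 1) + ∑ t : Fin k, ρ ^ ((t : ℕ) + 1) := by
        rw [sum_add_distrib, ← Equiv.sum_comp Fin.revPerm fun t : Fin k => ρ ^ ((t : ℕ) + 1)]
        rfl
    _ ≤ 2 * (ρ * (1 - ρ)⁻¹) := by
        rw [two_mul]
        exact add_le_add hgeom hgeom

lemma prod_one_add_le_exp {ι : Type*} (s : Finset ι) {f : ι → ℝ≥0∞} {B : ℝ≥0}
    (hB : ∑ i ∈ s, f i ≤ B) : ∏ i ∈ s, (1 + f i) ≤ ENNReal.ofReal (Real.exp B) := by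
  have hfin : ∀ i ∈ s, f i ≠ ∞ :=
    ENNReal.sum_ne_top.1 (ne_top_of_le_ne_top ENNReal.coe_ne_top hB)
  calc ∏ i ∈ s, (1 + f i) = ∏ i ∈ s, ENNReal.ofReal (1 + (f i).toReal) :=
        prod_congr rfl fun i hi => by
          rw [ENNReal.ofReal_add zero_le_one ENNReal.toReal_nonneg, ENNReal.ofReal_one,
            ENNReal.ofReal_toReal (hfin i hi)]
    _ = ENNReal.ofReal (∏ i ∈ s, (1 + (f i).toReal)) :=
        (ENNReal.ofReal_prod_of_nonneg fun i _ => by positivity).symm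
    _ ≤ ENNReal.ofReal (Real.exp (∑ i ∈ s, (f i).toReal)) :=
        ENNReal.ofReal_le_ofReal
          (Real.prod_one_add_le_exp_sum s fun _ => ENNReal.toReal_nonneg)
    _ ≤ ENNReal.ofReal (Real.exp B) := by
        rw [← ENNReal.toReal_sum hfin]
        gcongr
        exact ENNReal.toReal_mono ENNReal.coe_ne_top hB

lemma exists_sum_zetaTail_two_le (r : ℕ) :
    ∃ C : ℝ≥0, ∀ k : ℕ, 2 ≤ k → ∑ t : Fin k with r ≤ min (Fin.val t + 1) (k - t),
      zetaTail 2 (hilbertSum (t + 1) (k - t)) ≤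
        C * ENNReal.ofReal ((k + 1 : ℝ) ^ (-(r * Real.log 2))) := by
  obtain ⟨C, hC⟩ := exists_zetaTail_hilbertSum_le r one_le_two
  set ρ : ℝ≥0∞ := ENNReal.ofReal (((2 : ℕ) : ℝ) ^ (-(1 / 2 : ℝ))) with hρ
  have hρ1 : ρ < 1 := by
    rw [hρ, ENNReal.ofReal_lt_one]
    exact Real.rpow_lt_one_of_one_lt_of_neg (by norm_num) (by norm_num)
  have hfin : 2 * (ρ * (1 - ρ)⁻¹) ≠ ∞ := ENNReal.mul_ne_top ENNReal.ofNat_ne_top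
    (ENNReal.mul_ne_top hρ1.ne_top (ENNReal.inv_ne_top.2 (tsub_pos_of_lt hρ1).ne'))
  lift 2 * (ρ * (1 - ρ)⁻¹) to ℝ≥0 using hfin with G hG
  refine ⟨C * G, fun k hk => ?_⟩
  set D := ENNReal.ofReal ((k + 1 : ℝ) ^ (-(r * Real.log 2)))
  calc ∑ t : Fin k with r ≤ min (Fin.val t + 1) (k - t), zetaTail 2 (hilbertSum (t + 1) (k - t))
      ≤ ∑ t : Fin k with r ≤ min (Fin.val t + 1) (k - t),
          C * D * ρ ^ min ((t : ℕ) + 1) (k - t) := sum_le_sum fun t ht => by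
        have h := hC (t + 1) (k - t) (by omega) (by omega) (by omega) (mem_filter.1 ht).2
        rwa [cast_succ_add_cast_sub] at h
    _ ≤ ∑ t : Fin k, C * D * ρ ^ min ((t : ℕ) + 1) (k - t) :=
        sum_le_sum_of_subset (filter_subset _ _)
    _ ≤ C * D * G := by
        rw [← mul_sum, hG]
        gcongr
        exact sum_pow_min_le k
    _ = (C * G : ℝ≥0) * D := by
        rw [ENNReal.coe_mul]
        ring

lemma exists_prod_zetaTail_one_le :
    ∃ C : ℝ≥0, ∀ k : ℕ, 2 ≤ k → ∏ t : Fin k, zetaTail 1 (hilbertSum (t + 1) (k - t)) ≤ C := by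
  obtain ⟨B, hB⟩ := exists_sum_zetaTail_two_le 0
  refine ⟨(Real.exp B).toNNReal, fun k hk => ?_⟩
  have hsum := hB k hk
  simp only [Nat.zero_le, filter_true, Nat.cast_zero, zero_mul, neg_zero, Real.rpow_zero,
    ENNReal.ofReal_one, mul_one] at hsum
  exact (prod_le_prod' fun t _ => zetaTail_one_le_one_add _).trans (prod_one_add_le_exp _ hsum)

end ZetaTail

section InverseDimSum

variable {k : ℕ}

lemma tsum_pi_prod_eq_prod_tsum : ∀ {k : ℕ} {α : Fin k → Type*} (f : ∀ i, α i → ℝ≥0∞),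
    ∑' a : ∀ i, α i, ∏ i, f i (a i) = ∏ i, ∑' x, f i x
  | 0, α, f => by simp
  | k + 1, α, f => by
    rw [← (Fin.consEquiv α).tsum_eq, ENNReal.tsum_prod', Fin.prod_univ_succ,
      ← tsum_pi_prod_eq_prod_tsum, ← ENNReal.tsum_mul_right]
    refine tsum_congr fun x => ?_
    rw [← ENNReal.tsum_mul_left]
    refine tsum_congr fun a => ?_
    simp [Fin.consEquiv, Fin.prod_univ_succ]

lemma tsum_Ici_prod_eq_prod_tsum (n : Fin k → ℕ) (f : Fin k → ℕ → ℝ≥0∞) :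
    ∑' a : Set.Ici n, ∏ i, f i (a.1 i) = ∏ i, ∑' x : Set.Ici (n i), f i x := by
  rw [← tsum_pi_prod_eq_prod_tsum fun i (x : Set.Ici (n i)) => f i x, ← Set.pi_univ_Ici,
    ← (Equiv.Set.univPi fun i => Set.Ici (n i)).tsum_eq]
  rfl

/-- The set of tuples of positive integers that are at least `m` on `S`; sums of products over such
a set factor. -/
def tupleBox (S : Finset (Fin k)) (m : ℕ) : Set (Fin k → ℕ) :=
  {a | (∀ t, 1 ≤ a t) ∧ ∀ t ∈ S, m ≤ a t}

lemma tupleBox_eq_Ici (S : Finset (Fin k)) {m : ℕ} (hm : 1 ≤ m) :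
    tupleBox S m = Set.Ici (S.piecewise (fun _ => m) 1) := by
  ext a
  simp only [tupleBox, Set.mem_ofPred_eq, Set.mem_Ici, Pi.le_def]
  refine ⟨fun h t => ?_, fun h => ⟨fun t => ?_, fun t ht => ?_⟩⟩
  · by_cases ht : t ∈ S
    · simpa [ht] using h.2 t ht
    · simpa [ht] using h.1 t
  · by_cases ht : t ∈ S
    · exact hm.trans (by simpa [ht] using h t)
    · simpa [ht] using h t
  · simpa [ht] using h t

lemma ofReal_inv_PA_le {a : Fin k → ℕ} (ha : ∀ t, 1 ≤ a t) :
    ENNReal.ofReal (PA k a : ℝ)⁻¹ ≤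
      ∏ t, ENNReal.ofReal ((a t : ℝ) ^ (-hilbertSum (t + 1) (k - t))) := by
  have hpos : ∀ t, (0 : ℝ) < (a t : ℝ) ^ hilbertSum (t + 1) (k - t) := fun t =>
    Real.rpow_pos_of_pos (by exact_mod_cast ha t) _
  rw [← ENNReal.ofReal_prod_of_nonneg fun t _ => by positivity]
  refine ENNReal.ofReal_le_ofReal ?_
  calc (PA k a : ℝ)⁻¹ ≤ (∏ t, (a t : ℝ) ^ hilbertSum (t + 1) (k - t))⁻¹ :=
        inv_anti₀ (prod_pos fun t _ => hpos t) (prod_rpow_hilbertSum_le_PA a)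
    _ = ∏ t, (a t : ℝ) ^ (-hilbertSum (t + 1) (k - t)) := by
        rw [← prod_inv_distrib]
        exact prod_congr rfl fun t _ => (Real.rpow_neg (Nat.cast_nonneg _) _).symm

/-- The sum of the reciprocal dimensions of the representations indexed by `A`, possibly `∞`. -/
noncomputable def inverseDimSum (A : Set (Fin k → ℕ)) : ℝ≥0∞ :=
  ∑' a : A, ENNReal.ofReal (PA k a : ℝ)⁻¹

lemma inverseDimSum_tupleBox_le (S : Finset (Fin k)) {m : ℕ} (hm : 1 ≤ m) :
    inverseDimSum (tupleBox S m) ≤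
      (∏ t ∈ S, zetaTail m (hilbertSum (t + 1) (k - t))) *
        ∏ t : Fin k, zetaTail 1 (hilbertSum (t + 1) (k - t)) := by
  set e : Fin k → ℝ := fun t => hilbertSum (t + 1) (k - t)
  calc inverseDimSum (tupleBox S m)
      ≤ ∑' a : tupleBox S m, ∏ t, ENNReal.ofReal ((a.1 t : ℝ) ^ (-e t)) :=
        ENNReal.tsum_le_tsum fun a => ofReal_inv_PA_le a.2.1
    _ = ∏ t, zetaTail (S.piecewise (fun _ => m) 1 t) (e t) := by
        rw [tupleBox_eq_Ici S hm]
        exact tsum_Ici_prod_eq_prod_tsum _ fun t x => ENNReal.ofReal ((x : ℝ) ^ (-e t))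
    _ = (∏ t ∈ S, zetaTail m (e t)) * ∏ t ∈ Sᶜ, zetaTail 1 (e t) := by
        rw [← prod_mul_prod_compl S]
        congr 1
        · exact prod_congr rfl fun t ht => by rw [piecewise_eq_of_mem _ _ _ ht]
        · exact prod_congr rfl fun t ht => by
            rw [piecewise_eq_of_notMem _ _ _ (mem_compl.1 ht), Pi.one_apply]
    _ ≤ (∏ t ∈ S, zetaTail m (e t)) * ∏ t, zetaTail 1 (e t) := by
        gcongr
        · exact fun t _ _ => one_le_zetaTail_one _
        · exact subset_univ _

lemma exists_inverseDimSum_tupleBox_le :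
    ∃ C : ℝ≥0, ∀ k : ℕ, 2 ≤ k → ∀ (S : Finset (Fin k)) (m : ℕ), 1 ≤ m →
      inverseDimSum (tupleBox S m) ≤
        C * ∏ t ∈ S, zetaTail m (hilbertSum (t + 1) (k - t)) := by
  obtain ⟨C, hC⟩ := exists_prod_zetaTail_one_le
  refine ⟨C, fun k hk S m hm => (inverseDimSum_tupleBox_le S hm).trans ?_⟩
  rw [mul_comm]
  gcongr
  exact hC k hk

lemma rpow_neg_two_mul_log_two_le (k : ℕ) :
    (k + 1 : ℝ) ^ (-(2 * Real.log 2)) ≤ (k + 1 : ℝ) ^ (-Real.log 3) := by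
  refine Real.rpow_le_rpow_of_exponent_le (by linarith [k.cast_nonneg (α := ℝ)]) (neg_le_neg ?_)
  calc Real.log 3 ≤ Real.log (2 ^ 2) := Real.log_le_log (by norm_num) (by norm_num)
    _ = 2 * Real.log 2 := by rw [Real.log_pow, Nat.cast_ofNat]

lemma exists_inverseDimSum_three_le :
    ∃ C : ℝ≥0, ∀ k : ℕ, 2 ≤ k → ∀ t : Fin k,
      inverseDimSum (tupleBox {t} 3) ≤ C * ENNReal.ofReal ((k + 1 : ℝ) ^ (-Real.log 3)) := by
  obtain ⟨C₁, hC₁⟩ := exists_inverseDimSum_tupleBox_le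
  obtain ⟨C₂, hC₂⟩ := exists_zetaTail_le_rpow_neg_log (show 1 ≤ 3 by norm_num)
  refine ⟨C₁ * C₂, fun k hk t => ?_⟩
  calc inverseDimSum (tupleBox {t} 3) ≤ C₁ * zetaTail 3 (hilbertSum (t + 1) (k - t)) := by
        simpa only [prod_singleton] using hC₁ k hk {t} 3 (by norm_num)
    _ ≤ C₁ * (C₂ * ENNReal.ofReal ((k + 1 : ℝ) ^ (-Real.log 3))) := by
        gcongr
        exact hC₂ k hk t
    _ = _ := by rw [ENNReal.coe_mul, mul_assoc]

lemma exists_inverseDimSum_two_two_le :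
    ∃ C : ℝ≥0, ∀ k : ℕ, 2 ≤ k → ∀ s t : Fin k, s ≠ t →
      inverseDimSum (tupleBox {s, t} 2) ≤
        C * ENNReal.ofReal ((k + 1 : ℝ) ^ (-Real.log 3)) := by
  obtain ⟨C₁, hC₁⟩ := exists_inverseDimSum_tupleBox_le
  obtain ⟨C₂, hC₂⟩ := exists_zetaTail_le_rpow_neg_log one_le_two
  refine ⟨C₁ * (C₂ * C₂), fun k hk s t hst => ?_⟩
  set x : ℝ := (k + 1 : ℝ) ^ (-Real.log 2) with hx
  have hxx : x * x = (k + 1 : ℝ) ^ (-(2 * Real.log 2)) := by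
    rw [hx, ← Real.rpow_add (by positivity)]
    ring_nf
  calc inverseDimSum (tupleBox {s, t} 2)
      ≤ C₁ * (zetaTail 2 (hilbertSum (s + 1) (k - s)) *
          zetaTail 2 (hilbertSum (t + 1) (k - t))) := by
        simpa only [prod_pair hst] using hC₁ k hk {s, t} 2 one_le_two
    _ ≤ C₁ * (C₂ * ENNReal.ofReal x * (C₂ * ENNReal.ofReal x)) := by
        gcongr
        exacts [hC₂ k hk s, hC₂ k hk t]
    _ = (C₁ * (C₂ * C₂) : ℝ≥0) * ENNReal.ofReal (x * x) := by
        rw [ENNReal.ofReal_mul (by positivity), ENNReal.coe_mul, ENNReal.coe_mul]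
        ring
    _ ≤ _ := by
        rw [hxx]
        gcongr _ * ENNReal.ofReal ?_
        exact rpow_neg_two_mul_log_two_le k

lemma exists_sum_inverseDimSum_interior_le :
    ∃ C : ℝ≥0, ∀ k : ℕ, 2 ≤ k →
      ∑ t : Fin k with 2 ≤ min (Fin.val t + 1) (k - t), inverseDimSum (tupleBox {t} 2) ≤
        C * ENNReal.ofReal ((k + 1 : ℝ) ^ (-Real.log 3)) := by
  obtain ⟨C₁, hC₁⟩ := exists_inverseDimSum_tupleBox_le
  obtain ⟨C₂, hC₂⟩ := exists_sum_zetaTail_two_le 2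
  refine ⟨C₁ * C₂, fun k hk => ?_⟩
  calc ∑ t : Fin k with 2 ≤ min (Fin.val t + 1) (k - t), inverseDimSum (tupleBox {t} 2)
      ≤ C₁ * ∑ t : Fin k with 2 ≤ min (Fin.val t + 1) (k - t),
          zetaTail 2 (hilbertSum (t + 1) (k - t)) := by
        rw [mul_sum]
        exact sum_le_sum fun t _ => by
          simpa only [prod_singleton] using hC₁ k hk {t} 2 one_le_two
    _ ≤ C₁ * (C₂ * ENNReal.ofReal ((k + 1 : ℝ) ^ (-(2 * Real.log 2)))) := by
        gcongr
        exact hC₂ k hk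
    _ ≤ C₁ * (C₂ * ENNReal.ofReal ((k + 1 : ℝ) ^ (-Real.log 3))) := by
        gcongr _ * (_ * ENNReal.ofReal ?_)
        exact rpow_neg_two_mul_log_two_le k
    _ = _ := by rw [ENNReal.coe_mul, mul_assoc]

end InverseDimSum

section Sporadic

/-- The tuples of rank `k + 2` other than the trivial one and the two that are `2` at one end
and `1` elsewhere, which belong to the standard representation and its dual. Only `o(N)` of them,
over all ranks, have dimension at most `N`. -/
def sporadic (k : ℕ) : Set (Fin (k + 2) → ℕ) :=
  {a | (∀ t, 1 ≤ a t) ∧ a ≠ 1 ∧ a ≠ Function.update (1 : Fin (k + 2) → ℕ) 0 2 ∧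
    a ≠ Function.update (1 : Fin (k + 2) → ℕ) (Fin.last (k + 1)) 2}

lemma sporadic_subset (k : ℕ) :
    sporadic k ⊆ tupleBox {0} 3 ∪ tupleBox {Fin.last (k + 1)} 3 ∪ tupleBox {0, Fin.last (k + 1)} 2 ∪
      ⋃ t ∈ ({t | 2 ≤ min (Fin.val t + 1) (k + 2 - t)} : Finset (Fin (k + 2))),
        tupleBox {t} 2 := by
  rintro a ⟨ha, h1, hfirst, hlast⟩
  by_contra hnot
  simp only [tupleBox, Set.mem_union, Set.mem_iUnion, Set.mem_ofPred_eq, mem_filter_univ,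
    mem_insert, mem_singleton, forall_eq_or_imp, forall_eq, ha, implies_true, true_and, not_or,
    not_exists, not_and, not_le, exists_prop] at hnot
  obtain ⟨⟨⟨h0, hl⟩, h0l⟩, hint⟩ := hnot
  have hinner : ∀ t, t ≠ 0 → t ≠ Fin.last (k + 1) → a t = 1 := fun t ht0 htl => by
    have ht0' : t.val ≠ 0 := fun h => ht0 (Fin.ext h)
    have htl' : t.val ≠ k + 1 := fun h => htl (Fin.ext h)
    have := hint t (by omega)
    have := ha t
    omega
  have hends : Fin.last (k + 1) ≠ 0 := by simp [Fin.ext_iff]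
  have ha_eq {b : Fin (k + 2) → ℕ} (hb : ∀ t, t ≠ 0 → t ≠ Fin.last (k + 1) → b t = 1)
      (hb0 : a 0 = b 0) (hbl : a (Fin.last (k + 1)) = b (Fin.last (k + 1))) : a = b := by
    funext t
    by_cases ht0 : t = 0
    · rwa [ht0]
    by_cases htl : t = Fin.last (k + 1)
    · rwa [htl]
    rw [hinner t ht0 htl, hb t ht0 htl]
  obtain ⟨h, h'⟩ | ⟨h, h'⟩ | ⟨h, h'⟩ : a 0 = 1 ∧ a (Fin.last (k + 1)) = 1 ∨
      a 0 = 2 ∧ a (Fin.last (k + 1)) = 1 ∨ a 0 = 1 ∧ a (Fin.last (k + 1)) = 2 := by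
    have := ha 0
    have := ha (Fin.last (k + 1))
    omega
  · exact h1 (ha_eq (fun _ _ _ => rfl) h h')
  · exact hfirst (ha_eq (fun t ht0 _ => by simp [ht0]) (by simp [h]) (by simp [h', hends]))
  · exact hlast (ha_eq (fun t _ htl => by simp [htl]) (by simp [h, hends.symm]) (by simp [h']))

lemma exists_inverseDimSum_sporadic_le :
    ∃ C : ℝ≥0, ∀ k : ℕ, inverseDimSum (sporadic k) ≤
      C * ENNReal.ofReal (((k + 2 : ℕ) + 1 : ℝ) ^ (-Real.log 3)) := by
  obtain ⟨C₁, hC₁⟩ := exists_inverseDimSum_three_le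
  obtain ⟨C₂, hC₂⟩ := exists_inverseDimSum_two_two_le
  obtain ⟨C₃, hC₃⟩ := exists_sum_inverseDimSum_interior_le
  refine ⟨C₁ + C₁ + C₂ + C₃, fun k => ?_⟩
  have hk : 2 ≤ k + 2 := by omega
  set D := ENNReal.ofReal (((k + 2 : ℕ) + 1 : ℝ) ^ (-Real.log 3))
  set f : (Fin (k + 2) → ℕ) → ℝ≥0∞ := fun a => ENNReal.ofReal (PA (k + 2) a : ℝ)⁻¹
  have hunion (A B : Set (Fin (k + 2) → ℕ)) :
      inverseDimSum (A ∪ B) ≤ inverseDimSum A + inverseDimSum B := ENNReal.tsum_union_le f A B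
  calc inverseDimSum (sporadic k) ≤ _ := ENNReal.tsum_mono_subtype f (sporadic_subset k)
    _ ≤ inverseDimSum (tupleBox {0} 3) + inverseDimSum (tupleBox {Fin.last (k + 1)} 3) +
          inverseDimSum (tupleBox {0, Fin.last (k + 1)} 2) +
          ∑ t : Fin (k + 2) with 2 ≤ min (Fin.val t + 1) (k + 2 - t),
            inverseDimSum (tupleBox {t} 2) := by
        refine (hunion _ _).trans (add_le_add ?_ (ENNReal.tsum_biUnion_le f _ _))
        exact (hunion _ _).trans (add_le_add_left (hunion _ _) _)
    _ ≤ C₁ * D + C₁ * D + C₂ * D + C₃ * D := by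
        gcongr
        exacts [hC₁ _ hk _, hC₁ _ hk _, hC₂ _ hk _ _ (by simp [Fin.ext_iff]), hC₃ _ hk]
    _ = _ := by
        push_cast
        ring

theorem summable_inv_PA_sporadic :
    Summable fun p : Σ k, sporadic k => (PA (p.1 + 2) p.2 : ℝ)⁻¹ := by
  obtain ⟨C, hC⟩ := exists_inverseDimSum_sporadic_le
  have hweight : Summable fun k : ℕ => ((k + 2 : ℕ) + 1 : ℝ) ^ (-Real.log 3) := by
    have hlog : 1 < Real.log 3 :=
      (Real.lt_log_iff_exp_lt (by norm_num)).2 (by linarith [Real.exp_one_lt_d9])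
    exact_mod_cast (summable_nat_add_iff 3).2 (Real.summable_nat_rpow.2 (neg_lt_neg hlog))
  have hfin : ∑' p : Σ k, sporadic k, ENNReal.ofReal (PA (p.1 + 2) p.2 : ℝ)⁻¹ ≠ ∞ := by
    rw [ENNReal.tsum_sigma']
    refine ne_top_of_le_ne_top ?_ (ENNReal.tsum_le_tsum hC)
    rw [ENNReal.tsum_mul_left]
    exact ENNReal.mul_ne_top ENNReal.coe_ne_top hweight.tsum_ofReal_ne_top
  refine (ENNReal.summable_toReal hfin).congr fun p => ?_
  exact ENNReal.toReal_ofReal (inv_nonneg.2 (PA_pos p.2.2.1).le)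

end Sporadic

section Counting

lemma eventually_ncard_le_mul_of_summable_inv {α : Type*} {f : α → ℝ} (hf : ∀ x, 0 < f x)
    (hsum : Summable fun x => (f x)⁻¹) {ε : ℝ} (hε : 0 < ε) :
    ∀ᶠ y in atTop, {x | f x ≤ y}.Finite ∧ ({x | f x ≤ y}.ncard : ℝ) ≤ ε * y := by
  classical
  obtain ⟨s, hs⟩ := summable_iff_vanishing_norm.1 hsum (ε / 2) (half_pos hε)
  filter_upwards [eventually_gt_atTop 0, eventually_ge_atTop (2 * #s / ε)] with y hy0 hys
  have hfin : {x | f x ≤ y}.Finite := by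
    refine (hsum.tendsto_cofinite_zero.eventually_lt_const (inv_pos.2 hy0)).subset fun x hx => ?_
    exact not_lt.2 (inv_anti₀ (hf x) hx)
  refine ⟨hfin, ?_⟩
  rw [Set.ncard_eq_toFinset_card _ hfin]
  set t := hfin.toFinset
  have htail : (#(t \ s) : ℝ) * y⁻¹ ≤ ε / 2 :=
    calc (#(t \ s) : ℝ) * y⁻¹ = ∑ _x ∈ t \ s, y⁻¹ := by rw [sum_const, nsmul_eq_mul]
      _ ≤ ∑ x ∈ t \ s, (f x)⁻¹ := sum_le_sum fun x hx =>
          inv_anti₀ (hf x) (hfin.mem_toFinset.1 (mem_sdiff.1 hx).1)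
      _ ≤ ε / 2 := (le_abs_self _).trans (hs _ disjoint_sdiff_self_left).le
  have htail' : (#(t \ s) : ℝ) ≤ ε / 2 * y := (mul_inv_le_iff₀ hy0).1 htail
  have hhead : (#s : ℝ) ≤ ε / 2 * y := by
    rw [div_le_iff₀ hε] at hys
    linarith
  have hcard : (#t : ℝ) ≤ #(t \ s) + #s := by exact_mod_cast card_le_card_sdiff_add_card
  linarith

lemma PA_one (a : Fin 1 → ℕ) : PA 1 a = a 0 := by
  simp [PA, prod_range_succ]

lemma SLSet_subset (N : ℕ) :
    SLSet N ⊆ (fun x => ⟨0, fun _ => x + 1⟩) '' Set.Iio N ∪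
      (fun k => ⟨k, Function.update 1 0 2⟩) '' Set.Iio N ∪
      (fun k => ⟨k, Function.update 1 (Fin.last k) 2⟩) '' Set.Iio N ∪
      (fun p : Σ k, sporadic k => ⟨p.1 + 1, p.2⟩) '' {p | (PA (p.1 + 2) p.2 : ℝ) ≤ N} := by
  rintro ⟨k, a⟩ ⟨ha, ⟨i, hi⟩, hN⟩
  dsimp only at a ha i hi hN
  have hkN : k < N := by
    have h : ((k + 1 : ℕ) : ℝ) + 1 ≤ N := (succ_le_PA ha hi).trans (by exact_mod_cast hN)
    have : k + 1 + 1 ≤ N := by exact_mod_cast h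
    omega
  by_cases hfirst : a = Function.update (1 : Fin (k + 1) → ℕ) 0 2
  · exact .inl (.inl (.inr ⟨k, hkN, by rw [hfirst]⟩))
  by_cases hlast : a = Function.update (1 : Fin (k + 1) → ℕ) (Fin.last k) 2
  · exact .inl (.inr ⟨k, hkN, by rw [hlast]⟩)
  rcases k with _ | k
  · have h0 := ha 0
    rw [PA_one, Nat.cast_le] at hN
    refine .inl (.inl (.inl ⟨a 0 - 1, Set.mem_Iio.2 (by omega), ?_⟩))
    have : a = fun _ => a 0 - 1 + 1 := funext fun t => by
      rw [Fin.fin_one_eq_zero t]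
      omega
    exact congrArg (Sigma.mk 0) this.symm
  · have hne : a ≠ 1 := fun h => by simp [h] at hi
    exact .inr ⟨⟨k, a, ha, hne, hfirst, hlast⟩, by exact_mod_cast hN, rfl⟩

lemma finite_and_ncard_le_of_subset {α β : Type*} {A : Set α} {T : Set β} {F₁ F₂ F₃ : ℕ → α}
    {G : β → α} {N : ℕ} (hT : T.Finite)
    (hA : A ⊆ F₁ '' Set.Iio N ∪ F₂ '' Set.Iio N ∪ F₃ '' Set.Iio N ∪ G '' T) :
    A.Finite ∧ A.ncard ≤ 3 * N + T.ncard := by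
  have hfin (F : ℕ → α) : (F '' Set.Iio N).Finite := (Set.finite_Iio N).image F
  have hcard (F : ℕ → α) : (F '' Set.Iio N).ncard ≤ N := by
    simpa using Set.ncard_image_le (f := F) (Set.finite_Iio N)
  have hcover := (((hfin F₁).union (hfin F₂)).union (hfin F₃)).union (hT.image G)
  refine ⟨hcover.subset hA, ?_⟩
  calc A.ncard ≤ _ := Set.ncard_le_ncard hA hcover
    _ ≤ (F₁ '' Set.Iio N).ncard + (F₂ '' Set.Iio N).ncard + (F₃ '' Set.Iio N).ncard +
          (G '' T).ncard := by
        grw [Set.ncard_union_le, Set.ncard_union_le, Set.ncard_union_le]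
    _ ≤ 3 * N + T.ncard := by
        linarith [hcard F₁, hcard F₂, hcard F₃, Set.ncard_image_le (f := G) hT]

theorem sl_count_le_asymptotic_general {c : ℝ} (hc : 3 < c) :
    ∀ᶠ N : ℕ in atTop, (SLSet N).Finite ∧ ((SLSet N).ncard : ℝ) ≤ c * N := by
  have hsporadic := eventually_ncard_le_mul_of_summable_inv
    (fun p : Σ k, sporadic k => PA_pos p.2.2.1) summable_inv_PA_sporadic (sub_pos.2 hc)
  filter_upwards [tendsto_natCast_atTop_atTop.eventually hsporadic] with N ⟨hT, hTcard⟩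
  obtain ⟨hfin, hcard⟩ := finite_and_ncard_le_of_subset hT (SLSet_subset N)
  have hcard' : ((SLSet N).ncard : ℝ) ≤
      3 * N + {p : Σ k, sporadic k | (PA (p.1 + 2) p.2 : ℝ) ≤ N}.ncard := by
    exact_mod_cast hcard
  exact ⟨hfin, by linarith⟩

end Counting

/-- For all sufficiently large `N`, `R_N(SL) ≤ 34 N − 27 √N`. -/
theorem sl_count_le_asymptotic :
    ∃ M : ℕ, ∀ N : ℕ, M ≤ N →
      (SLSet N).Finite ∧
      ((SLSet N).ncard : ℝ) ≤ 34 * N - 27 * Real.sqrt N := by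
  refine eventually_atTop.1 ?_
  filter_upwards [sl_count_le_asymptotic_general (show (3 : ℝ) < 7 by norm_num),
    eventually_ge_atTop 1] with N ⟨hfin, hcard⟩ hN
  have hsqrt : Real.sqrt N ≤ N := Real.sqrt_le_self_iff.2 (.inr (by exact_mod_cast hN))
  exact ⟨hfin, by linarith⟩
end

section
/- Let N ≥ 49 be an integer and let k be an integer with k² ≥ N. Then every tuple a = (a_1, …, a_k) of positive integers with P_A(a) ≤ N satisfies a_1 ≤ 3, a_2 ≤ 2, a_{k−1} ≤ 2, a_k ≤ 3, and a_i = 1 for all i with 3 ≤ i ≤ k − 2. -/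
/-- MacMahon's product for the number of plane partitions in a `p × q × c` box, which is also the
dimension of the irreducible representation of `SL_{p+q}(ℂ)` of highest weight `c • ω_p`
(see `PA_one_add_single`). -/
def macMahonBox (p q c : ℕ) : ℚ :=
  ∏ i ∈ Finset.range p, ∏ j ∈ Finset.range q, ((i : ℚ) + j + 1 + c) / (i + j + 1)

theorem macMahonBox_swap_left (p q c : ℕ) : macMahonBox p q c = macMahonBox q p c := by
  unfold macMahonBox
  rw [Finset.prod_comm]
  simp only [add_comm]

theorem prod_range_add_div_swap {K : Type*} [Field K] {x : K} (hx : ∀ n : ℕ, x + n ≠ 0)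
    (m n : ℕ) :
    ∏ j ∈ Finset.range m, (x + j + n) / (x + j) = ∏ j ∈ Finset.range n, (x + j + m) / (x + j) := by
  have split (m n : ℕ) : ∏ j ∈ Finset.range (n + m), (x + j) =
      (∏ j ∈ Finset.range n, (x + j)) * ∏ j ∈ Finset.range m, (x + j + n) := by
    simp only [Finset.prod_range_add, Nat.cast_add, add_assoc, add_comm (n : K)]
  simp only [Finset.prod_div_distrib]
  rw [div_eq_div_iff (Finset.prod_ne_zero_iff.mpr fun j _ => hx j)
    (Finset.prod_ne_zero_iff.mpr fun j _ => hx j), mul_comm, ← split, add_comm n m, split, mul_comm]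

theorem macMahonBox_swap_right (p q c : ℕ) : macMahonBox p q c = macMahonBox p c q := by
  refine Finset.prod_congr rfl fun i _ => ?_
  have hne (n : ℕ) : (i : ℚ) + 1 + n ≠ 0 := by positivity
  simpa only [add_right_comm] using prod_range_add_div_swap hne q c

theorem macMahonBox_one_three (q : ℕ) :
    macMahonBox 1 q 3 = ((q : ℚ) + 1) * (q + 2) * (q + 3) / 6 := by
  rw [macMahonBox_swap_right]
  simp only [macMahonBox, Finset.prod_range_succ, Finset.prod_range_zero]
  push_cast
  ring

theorem macMahonBox_two_two (q : ℕ) :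
    macMahonBox 2 q 2 = ((q : ℚ) + 1) * (q + 2) ^ 2 * (q + 3) / 12 := by
  rw [macMahonBox_swap_right]
  simp only [macMahonBox, Finset.prod_range_succ, Finset.prod_range_zero]
  push_cast
  ring

theorem macMahonBox_one_right (p q : ℕ) : macMahonBox p q 1 = (p + q).choose p := by
  have numerator : ∏ i ∈ Finset.range p, (q + 1 + i) = p.factorial * (p + q).choose p := by
    rw [← Nat.ascFactorial_eq_prod_range, Nat.ascFactorial_eq_factorial_mul_choose, add_comm q]
  have denominator : ∏ i ∈ Finset.range p, (i + 1) = p.factorial :=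
    Finset.prod_range_add_one_eq_factorial p
  rw [macMahonBox_swap_right]
  simp only [macMahonBox, Finset.prod_range_one, Finset.prod_div_distrib]
  rw [div_eq_iff (Finset.prod_ne_zero_iff.mpr fun i _ => by positivity)]
  have := congrArg (Nat.cast (R := ℚ)) numerator
  rw [← denominator] at this
  push_cast at this ⊢
  simpa only [add_zero, add_comm, add_left_comm, mul_comm] using this

theorem sq_lt_macMahonBox_one_three (q : ℕ) : (q : ℚ) ^ 2 < macMahonBox 1 q 3 := by
  rw [macMahonBox_one_three, lt_div_iff₀ (by norm_num)]
  have : (0 : ℚ) ≤ (q : ℚ) ^ 3 := by positivity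
  linarith

theorem add_one_sq_lt_macMahonBox_two_two {q : ℕ} (hq : 1 ≤ q) :
    ((q : ℚ) + 1) ^ 2 < macMahonBox 2 q 2 := by
  have : (0 : ℚ) < q := by exact_mod_cast hq
  have : 12 * ((q : ℚ) + 1) < (q + 2) ^ 2 * (q + 3) := by
    have : (0 : ℚ) < q ^ 3 + 7 * q ^ 2 + 4 * q := by positivity
    linarith
  rw [macMahonBox_two_two, lt_div_iff₀ (by norm_num)]
  nlinarith

theorem choose_le_choose_of_le_of_add_le {n r s : ℕ} (hrs : r ≤ s) (hsn : r + s ≤ n) :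
    n.choose r ≤ n.choose s := by
  have of_le_half {s : ℕ} (hrs : r ≤ s) (hs : s ≤ n / 2) : n.choose r ≤ n.choose s := by
    induction s, hrs using Nat.le_induction with
    | base => exact le_rfl
    | succ s _ ih => exact (ih (by omega)).trans (Nat.choose_le_succ_of_lt_half_left hs)
  by_cases hs : s ≤ n / 2
  · exact of_le_half hrs hs
  · rw [← Nat.choose_symm (show s ≤ n by omega)]
    exact of_le_half (by omega) (by omega)

theorem sq_lt_choose_three {n : ℕ} (hn : 7 ≤ n) : n ^ 2 < (n + 1).choose 3 := by
  obtain ⟨m, rfl⟩ := Nat.exists_eq_add_of_le' hn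
  have six_mul_choose : (m + 6) * ((m + 7) * (m + 8)) = 6 * (m + 8).choose 3 := by
    simpa [Nat.descFactorial, Nat.factorial] using
      Nat.descFactorial_eq_factorial_mul_choose (m + 8) 3
  nlinarith

theorem sq_lt_macMahonBox_one_right {p q n : ℕ} (hp : 3 ≤ p) (hq : 3 ≤ q) (hn : 7 ≤ n)
    (hpq : p + q = n + 1) : (n : ℚ) ^ 2 < macMahonBox p q 1 := by
  rw [macMahonBox_one_right, hpq]
  exact_mod_cast (sq_lt_choose_three hn).trans_le
    (choose_le_choose_of_le_of_add_le hp (by omega))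

theorem prod_range_prod_range_ite {M : Type*} [CommMonoid M] (f : ℕ → ℕ → M) (p q : ℕ) :
    (∏ i ∈ Finset.range (p + q), ∏ j ∈ Finset.range (p + q), if i < p ∧ p ≤ j then f i j else 1) =
      ∏ i ∈ Finset.range p, ∏ j ∈ Finset.range q, f i (p + j) := by
  have outer : (∏ i ∈ Finset.range q, ∏ j ∈ Finset.range (p + q),
      if p + i < p ∧ p ≤ j then f (p + i) j else 1) = 1 :=
    Finset.prod_eq_one fun i _ => Finset.prod_eq_one fun j _ => if_neg (by omega)
  rw [Finset.prod_range_add, outer, mul_one]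
  refine Finset.prod_congr rfl fun i hi => ?_
  rw [Finset.mem_range] at hi
  have inner : (∏ j ∈ Finset.range p, if i < p ∧ p ≤ j then f i j else 1) = 1 :=
    Finset.prod_eq_one fun j hj => if_neg (by rw [Finset.mem_range] at hj; omega)
  rw [Finset.prod_range_add, inner, one_mul]
  exact Finset.prod_congr rfl fun j _ => if_pos (by omega)

section WeylDimension

variable {k : ℕ}

theorem PA_mono : Monotone (PA k) := by
  have factor_nonneg (a : Fin k → ℕ) (i j : ℕ) : (0 : ℚ) ≤ if i < j then
      (∑ t ∈ Finset.Ico i j, if h : t < k then (a ⟨t, h⟩ : ℚ) else 0) / ((j : ℚ) - i) else 1 := by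
    split_ifs with hij
    · have : (i : ℚ) ≤ j := by exact_mod_cast hij.le
      refine div_nonneg (Finset.sum_nonneg fun t _ => ?_) (sub_nonneg.mpr this)
      split_ifs <;> positivity
    · exact zero_le_one
  intro a b hab
  refine Finset.prod_le_prod (fun i _ => Finset.prod_nonneg fun j _ => factor_nonneg a i j)
    fun i _ => Finset.prod_le_prod (fun j _ => factor_nonneg a i j) fun j _ => ?_
  split_ifs with hij
  · have : (i : ℚ) ≤ j := by exact_mod_cast hij.le
    refine div_le_div_of_nonneg_right (Finset.sum_le_sum fun t _ => ?_) (sub_nonneg.mpr this)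
    split_ifs with ht
    · exact_mod_cast hab ⟨t, ht⟩
    · exact le_rfl
  · exact le_rfl

theorem sum_Ico_one_add_single (m : Fin k) (c : ℕ) {i j : ℕ} (hij : i ≤ j) (hj : j ≤ k) :
    (∑ t ∈ Finset.Ico i j,
      if h : t < k then (((1 + Pi.single m c : Fin k → ℕ) ⟨t, h⟩ : ℕ) : ℚ) else 0) =
      j - i + if i ≤ m ∧ m < j then (c : ℚ) else 0 := by
  calc
    _ = ∑ t ∈ Finset.Ico i j, ((1 : ℚ) + if t = m then (c : ℚ) else 0) := by
      refine Finset.sum_congr rfl fun t ht => ?_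
      rw [dif_pos ((Finset.mem_Ico.mp ht).2.trans_le hj)]
      simp [Pi.single_apply, Fin.ext_iff]
    _ = _ := by simp [Finset.sum_add_distrib, Nat.cast_sub hij]

theorem PA_one_add_single (m : Fin k) (c : ℕ) :
    PA k (1 + Pi.single m c) = macMahonBox (m + 1) (k - m) c := by
  have hm : m + 1 + (k - m) = k + 1 := by omega
  calc
    _ = ∏ i ∈ Finset.range (k + 1), ∏ j ∈ Finset.range (k + 1),
        if i < m + 1 ∧ m + 1 ≤ j then ((j : ℚ) - i + c) / (j - i) else 1 := by
      refine Finset.prod_congr rfl fun i _ => Finset.prod_congr rfl fun j hj => ?_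
      rw [Finset.mem_range, Nat.lt_succ_iff] at hj
      by_cases hij : i < j
      · have hne : (j : ℚ) - i ≠ 0 := sub_ne_zero.mpr (by exact_mod_cast hij.ne')
        rw [if_pos hij, sum_Ico_one_add_single m c hij.le hj]
        simp only [Nat.lt_succ_iff, Nat.succ_le_iff]
        split_ifs
        · rfl
        · rw [add_zero, div_self hne]
      · rw [if_neg hij, if_neg (by omega)]
    _ = ∏ i ∈ Finset.range (m + 1), ∏ j ∈ Finset.range (k - m),
        (((m + 1 + j : ℕ) : ℚ) - i + c) / ((m + 1 + j : ℕ) - i) := by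
      rw [← prod_range_prod_range_ite (fun i j => ((j : ℚ) - i + c) / (j - i)), hm]
    _ = macMahonBox (m + 1) (k - m) c := by
      rw [← Finset.prod_range_reflect]
      refine Finset.prod_congr rfl fun i hi => Finset.prod_congr rfl fun j _ => ?_
      rw [Nat.add_sub_cancel, Nat.cast_sub (Nat.lt_succ_iff.mp (Finset.mem_range.mp hi))]
      push_cast
      congr 1 <;> ring

theorem macMahonBox_le_PA {a : Fin k → ℕ} (hpos : ∀ i, 1 ≤ a i) {m : Fin k} {c : ℕ}
    (hc : c + 1 ≤ a m) : macMahonBox (m + 1) (k - m) c ≤ PA k a := by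
  rw [← PA_one_add_single]
  refine PA_mono fun i => ?_
  obtain rfl | hi := eq_or_ne i m
  · simpa [add_comm] using hc
  · simpa [hi] using hpos i

theorem le_of_PA_lt_macMahonBox {a : Fin k → ℕ} (hpos : ∀ i, 1 ≤ a i) {m : Fin k} {c p q : ℕ}
    (hp : m + 1 = p) (hq : k - m = q) (h : PA k a < macMahonBox p q c) : a m ≤ c := by
  subst hp hq
  by_contra! hc
  exact h.not_ge (macMahonBox_le_PA hpos hc)

end WeylDimension

/-- For `N ≥ 49` and `k² ≥ N`: any tuple of `k` positive integers with `PA ≤ N` has first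
entry `≤ 3`, second entry `≤ 2`, second-to-last entry `≤ 2`, last entry `≤ 3`, and all other
entries equal to `1` (entries are 0-indexed below, so `a_1 = a 0`, …, `a_k = a (k-1)`). -/
theorem pa_small_entries (N k : ℕ) (hN : 49 ≤ N) (hk : N ≤ k ^ 2)
    (a : Fin k → ℕ) (hpos : ∀ i, 1 ≤ a i) (hdim : PA k a ≤ (N : ℚ)) :
    ∀ i : Fin k,
      ((i : ℕ) = 0 → a i ≤ 3) ∧
      ((i : ℕ) = 1 → a i ≤ 2) ∧
      ((i : ℕ) = k - 2 → a i ≤ 2) ∧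
      ((i : ℕ) = k - 1 → a i ≤ 3) ∧
      (2 ≤ (i : ℕ) → (i : ℕ) ≤ k - 3 → a i = 1) := by
  have hk7 : 7 ≤ k := by nlinarith
  have hdim_sq : PA k a ≤ (k : ℚ) ^ 2 := hdim.trans (by exact_mod_cast hk)
  have hbox13 : PA k a < macMahonBox 1 k 3 := hdim_sq.trans_lt (sq_lt_macMahonBox_one_three k)
  have hbox22 : PA k a < macMahonBox 2 (k - 1) 2 := by
    have := add_one_sq_lt_macMahonBox_two_two (q := k - 1) (by omega)
    rw [Nat.cast_pred (by omega), sub_add_cancel] at this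
    exact hdim_sq.trans_lt this
  intro i
  refine ⟨fun h => ?first, fun h => ?second, fun h => ?penultimate, fun h => ?last,
    fun h2 h3 => ?middle⟩
  case first => exact le_of_PA_lt_macMahonBox hpos (by omega) (by omega) hbox13
  case second => exact le_of_PA_lt_macMahonBox hpos (by omega) (by omega) hbox22
  case penultimate =>
    exact le_of_PA_lt_macMahonBox hpos (by omega) (by omega) (macMahonBox_swap_left 2 _ 2 ▸ hbox22)
  case last =>
    exact le_of_PA_lt_macMahonBox hpos (by omega) (by omega) (macMahonBox_swap_left 1 _ 3 ▸ hbox13)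
  case middle =>
    have hbox : PA k a < macMahonBox (i + 1) (k - i) 1 :=
      hdim_sq.trans_lt (sq_lt_macMahonBox_one_right (by omega) (by omega) hk7 (by omega))
    exact (le_of_PA_lt_macMahonBox hpos rfl rfl hbox).antisymm (hpos i)
end
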